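/- arXiv:math/0605154 — 5 statements merged into one kernel-verified Lean document; each statement's English description precedes it below -/
import Mathlib

section
/- Let G be a finite simple graph, let n be even, and let A = {a_1,…,a_n} be distinct vertices such that G is noncrossing with respect to the cyclic sequence (a_1,…,a_n). For 1 ≤ i < j ≤ n let H_{ij} = G−{a_i,a_j}. If G has exactly one perfect matching, then M(G−A) = Σ_F (−1)^{χ(F)} Π_{{i,j}∈F, i<j} M(H_{ij}), the sum over all partitions F of {1,…,n} into pairs (i.e., M(G−A) equals the Pfaffian Pf(M(H_{ij}))_{1≤i<j≤n}). -/
/-- A perfect matching of the induced subgraph of `G` on the vertex set `s`,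
represented as a set `m` of edges of `G`: every edge of `m` is an edge of `G`
with both endpoints in `s`, and every vertex of `s` lies in exactly one edge of `m`. -/
def IsPMOn {α : Type*} (G : SimpleGraph α) (s : Finset α) (m : Finset (Sym2 α)) : Prop :=
  (∀ e ∈ m, e ∈ G.edgeSet ∧ ∀ v ∈ e, v ∈ s) ∧ ∀ v ∈ s, ∃! e, e ∈ m ∧ v ∈ e

/-- The number of perfect matchings of the induced subgraph of `G` on `s`. -/
noncomputable def pmCount {α : Type*} (G : SimpleGraph α) (s : Finset α) : ℕ :=
  Nat.card {m : Finset (Sym2 α) // IsPMOn G s m}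

open Classical in
/-- The sum, over all perfect matchings of the induced subgraph of `G` on `s`,
of the product of the weights of the edges of the matching. -/
noncomputable def pmSum {α R : Type*} [Fintype α] [DecidableEq α] [CommRing R]
    (G : SimpleGraph α) (w : Sym2 α → R) (s : Finset α) : R :=
  ∑ m ∈ Finset.univ.filter (fun m : Finset (Sym2 α) => IsPMOn G s m), ∏ e ∈ m, w e

/-- There are two vertex-disjoint paths in `G`, one joining `x₁` to `y₁` and one joining
`x₂` to `y₂`, whose internal vertices avoid `S`. -/
def DisjointPaths {α : Type*} (G : SimpleGraph α) (S : Set α) (x₁ y₁ x₂ y₂ : α) : Prop :=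
  ∃ (p : G.Walk x₁ y₁) (q : G.Walk x₂ y₂), p.IsPath ∧ q.IsPath ∧
    (∀ u ∈ p.support, u ∉ q.support) ∧
    (∀ u ∈ p.support, u ≠ x₁ → u ≠ y₁ → u ∉ S) ∧
    (∀ u ∈ q.support, u ≠ x₂ → u ≠ y₂ → u ∉ S)

/-- `G` is noncrossing with respect to the cyclic sequence given by the list `L`:
there are no indices `i < j < k < l` such that `G` contains two vertex-disjoint paths,
one joining `L[i]` to `L[k]` and one joining `L[j]` to `L[l]`, whose internal vertices
avoid the vertices of `L`. -/
def NoncrossingList {α : Type*} (G : SimpleGraph α) (L : List α) : Prop :=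
  ∀ i j k l : Fin L.length, i < j → j < k → k < l →
    ¬ DisjointPaths G {x | x ∈ L} (L.get i) (L.get k) (L.get j) (L.get l)

/-- `U, W` form a bipartition of the vertices of `G`. -/
def IsBipartition {α : Type*} [Fintype α] [DecidableEq α]
    (G : SimpleGraph α) (U W : Finset α) : Prop :=
  Disjoint U W ∧ U ∪ W = Finset.univ ∧
    ∀ ⦃x y⦄, G.Adj x y → ((x ∈ U ∧ y ∈ W) ∨ (x ∈ W ∧ y ∈ U))

/-- `P` is an `MH`-alternating path, where `MH` is the unique perfect matching of the
induced subgraph of `G` on the vertex set `sH`: `P` is a (nontrivial) path, among any two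
consecutive edges of `P` exactly one lies in `MH`, and for each endpoint the incident edge
of `P` lies in `MH` iff the endpoint belongs to `sH`. -/
def IsAltPath {α : Type*} (G : SimpleGraph α) (sH : Finset α) (MH : Finset (Sym2 α))
    {x y : α} (P : G.Walk x y) : Prop :=
  P.IsPath ∧ P.edges ≠ [] ∧
  P.edges.Chain' (fun e f => e ∈ MH ↔ f ∉ MH) ∧
  (∀ e ∈ P.edges.head?, (e ∈ MH ↔ x ∈ sH)) ∧
  (∀ e ∈ P.edges.getLast?, (e ∈ MH ↔ y ∈ sH))

/-- A family of pairwise vertex-disjoint `MH`-alternating paths in `G` whose set of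
path-endpoints is exactly `A`, each vertex of `A` being an endpoint of exactly one
path of the family. -/
def IsAltPathNest {α : Type*} (G : SimpleGraph α) (sH : Finset α) (MH : Finset (Sym2 α))
    (A : Finset α) (F : Finset (Σ x : α, Σ y : α, G.Walk x y)) : Prop :=
  (∀ p ∈ F, IsAltPath G sH MH p.2.2) ∧
  (∀ p ∈ F, ∀ q ∈ F, p ≠ q → ∀ u ∈ p.2.2.support, u ∉ q.2.2.support) ∧
  (∀ p ∈ F, p.1 ∈ A ∧ p.2.1 ∈ A) ∧
  (∀ v ∈ A, ∃! p, p ∈ F ∧ (v = p.1 ∨ v = p.2.1))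

/-- A 1-factor on `{1, …, n}`: a partition of `Fin n` into pairs, each pair recorded
as an ordered pair `(i, j)` with `i < j`. -/
def IsOneFactor (n : ℕ) (F : Finset (Fin n × Fin n)) : Prop :=
  (∀ p ∈ F, p.1 < p.2) ∧ ∀ v : Fin n, ∃! p, p ∈ F ∧ (v = p.1 ∨ v = p.2)

/-- The crossing number of a 1-factor: the number of pairs of pairs
`(i,j), (k,l)` in `F` with `i < k < j < l`. -/
def crossingNumber (n : ℕ) (F : Finset (Fin n × Fin n)) : ℕ :=
  ((F ×ˢ F).filter (fun q => q.1.1 < q.2.1 ∧ q.2.1 < q.1.2 ∧ q.1.2 < q.2.2)).card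


namespace PfC

/-- Matchings as involutions. -/
def Inv {α : Type*} (G : SimpleGraph α) (s : Finset α) (σ : α → α) : Prop :=
  (∀ x, σ (σ x) = x) ∧ (∀ x, x ∈ s → G.Adj x (σ x)) ∧ (∀ x, x ∉ s → σ x = x)

theorem Inv.mem {α : Type*} {G : SimpleGraph α} {s : Finset α} {σ : α → α} (h : Inv G s σ)
    {x : α} (hx : x ∈ s) : σ x ∈ s := by
  by_contra hc
  have h1 := h.2.2 _ hc
  rw [h.1] at h1
  have h2 := h.2.1 x hx
  rw [← h1] at h2
  exact G.irrefl h2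

theorem Inv.fix {α : Type*} {G : SimpleGraph α} {s : Finset α} {σ : α → α} (h : Inv G s σ)
    {x : α} : σ x = x ↔ x ∉ s := by
  refine ⟨fun h1 hx => ?_, h.2.2 x⟩
  have h2 := h.2.1 x hx
  rw [h1] at h2
  exact G.irrefl h2

open Classical in
theorem pmCount_eq {α : Type*} [Fintype α] [DecidableEq α] (G : SimpleGraph α) (s : Finset α) :
    pmCount G s = (Finset.univ.filter (fun σ : α → α => Inv G s σ)).card := by
  unfold pmCount
  rw [← Fintype.card_subtype, ← Nat.card_eq_fintype_card]
  symm
  have hPM : ∀ σ : α → α, Inv G s σ → IsPMOn G s (s.image (fun v => s(v, σ v))) := by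
    intro σ h
    refine ⟨?_, ?_⟩
    · intro e he
      obtain ⟨v, hv, rfl⟩ := Finset.mem_image.1 he
      refine ⟨h.2.1 v hv, ?_⟩
      intro u hu
      rcases Sym2.mem_iff.1 hu with rfl | rfl
      · exact hv
      · exact h.mem hv
    · intro v hv
      refine ⟨s(v, σ v), ⟨Finset.mem_image_of_mem _ hv, Sym2.mem_mk_left _ _⟩, ?_⟩
      rintro e ⟨he, hve⟩
      obtain ⟨u, hu, rfl⟩ := Finset.mem_image.1 he
      rcases Sym2.mem_iff.1 hve with rfl | rfl
      · rfl
      · rw [h.1, Sym2.eq_swap]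
  refine Nat.card_eq_of_bijective
    (fun σ : {σ : α → α // Inv G s σ} =>
      (⟨s.image (fun v => s(v, σ.1 v)), hPM σ.1 σ.2⟩ : {m : Finset (Sym2 α) // IsPMOn G s m})) ⟨?_, ?_⟩
  · rintro ⟨σ, hσ⟩ ⟨τ, hτ⟩ h
    simp only [Subtype.mk.injEq] at h
    ext x
    simp only
    by_cases hx : x ∈ s
    · have h1 : s(x, σ x) ∈ s.image (fun v => s(v, τ v)) := by
        rw [← h]; exact Finset.mem_image_of_mem (fun v => s(v, σ v)) hx
      obtain ⟨u, hu, hue⟩ := Finset.mem_image.1 h1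
      simp only [Sym2.eq_iff] at hue
      rcases hue with ⟨rfl, h2⟩ | ⟨h2, h3⟩
      · exact h2.symm
      · rw [← h2, ← h3, hτ.1]
    · rw [hσ.2.2 x hx, hτ.2.2 x hx]
  · rintro ⟨m, hm⟩
    have hex : ∀ v : α, ∃ u : α, (v ∈ s → s(v, u) ∈ m) ∧ (v ∉ s → u = v) := by
      intro v
      by_cases hv : v ∈ s
      · obtain ⟨e, ⟨he, hve⟩, -⟩ := hm.2 v hv
        obtain ⟨u, rfl⟩ := hve
        exact ⟨u, fun _ => he, fun h => absurd hv h⟩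
      · exact ⟨v, fun h => absurd h hv, fun _ => rfl⟩
    choose σ hσ1 hσ2 using hex
    have huni : ∀ v e, v ∈ s → e ∈ m → v ∈ e → e = s(v, σ v) := fun v e hv he hve =>
      (hm.2 v hv).unique ⟨he, hve⟩ ⟨hσ1 v hv, Sym2.mem_mk_left _ _⟩
    have hadj : ∀ v ∈ s, G.Adj v (σ v) := fun v hv => (hm.1 _ (hσ1 v hv)).1
    have hms : ∀ v ∈ s, σ v ∈ s := fun v hv => (hm.1 _ (hσ1 v hv)).2 _ (Sym2.mem_mk_right _ _)
    refine ⟨⟨σ, ?_, hadj, hσ2⟩, ?_⟩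
    · intro x
      by_cases hx : x ∈ s
      · have := huni (σ x) s(x, σ x) (hms x hx) (hσ1 x hx) (Sym2.mem_mk_right _ _)
        rw [Sym2.eq_iff] at this
        rcases this with ⟨h1, h2⟩ | ⟨h1, h2⟩
        · exact absurd h1 (hadj x hx).ne
        · exact h1.symm
      · rw [hσ2 x hx, hσ2 x hx]
    · simp only [Subtype.mk.injEq]
      ext e
      simp only [Finset.mem_image]
      constructor
      · rintro ⟨v, hv, rfl⟩; exact hσ1 v hv
      · intro he
        induction e with
        | h u w =>
          have hu := (hm.1 _ he).2 u (Sym2.mem_mk_left _ _)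
          exact ⟨u, hu, (huni u _ hu he (Sym2.mem_mk_left _ _)).symm⟩

/-- Two pairs of indices separate each other. -/
def Cr (i k j l : ℕ) : Prop := i ≠ j ∧ i ≠ l ∧ k ≠ j ∧ k ≠ l ∧
  ((min i k < j ∧ j < max i k) ↔ ¬ (min i k < l ∧ l < max i k))

theorem dp_rev {α : Type*} {G : SimpleGraph α} {S : Set α} {x y z w : α}
    (h : DisjointPaths G S x y z w) : DisjointPaths G S y x z w := by
  obtain ⟨p, q, hp, hq, h1, h2, h3⟩ := h
  refine ⟨p.reverse, q, hp.reverse, hq, ?_, ?_, h3⟩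
  · intro u hu; exact h1 u (by simpa using hu)
  · intro u hu a b; exact h2 u (by simpa using hu) b a

theorem dp_swap {α : Type*} {G : SimpleGraph α} {S : Set α} {x y z w : α}
    (h : DisjointPaths G S x y z w) : DisjointPaths G S z w x y := by
  obtain ⟨p, q, hp, hq, h1, h2, h3⟩ := h
  exact ⟨q, p, hq, hp, fun u hu hv => h1 u hv hu, h3, h2⟩

theorem nc_base {α : Type*} (G : SimpleGraph α) (n : ℕ) (a : Fin n → α)
    (hnc : NoncrossingList G (List.ofFn a)) (i k j l : Fin n) (h : Cr i k j l) :
    ¬ DisjointPaths G (Set.range a) (a i) (a k) (a j) (a l) := by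
  have key : ∀ i j k l : Fin n, i < j → j < k → k < l →
      ¬ DisjointPaths G (Set.range a) (a i) (a k) (a j) (a l) := by
    intro i j k l h1 h2 h3 hd
    refine hnc (Fin.cast (by simp) i) (Fin.cast (by simp) j) (Fin.cast (by simp) k)
      (Fin.cast (by simp) l) (by simpa using h1) (by simpa using h2) (by simpa using h3) ?_
    have hS : {x | x ∈ List.ofFn a} = Set.range a := by
      ext x; simp [List.mem_ofFn]
    rw [hS]
    simpa using hd
  intro hd
  have key2 : ∀ i k j l : Fin n, i ≤ k → j ≤ l → Cr i k j l →
      ¬ DisjointPaths G (Set.range a) (a i) (a k) (a j) (a l) := by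
    intro i k j l h1 h2 hc hd
    unfold Cr at hc
    rw [Fin.le_def] at h1 h2
    rw [min_eq_left h1, max_eq_right h1] at hc
    rcases lt_or_ge (i : ℕ) j with h3 | h3
    · exact key i j k l (by rw [Fin.lt_def]; omega) (by rw [Fin.lt_def]; omega)
        (by rw [Fin.lt_def]; omega) hd
    · exact key j i l k (by rw [Fin.lt_def]; omega) (by rw [Fin.lt_def]; omega)
        (by rw [Fin.lt_def]; omega) (dp_swap hd)
  have c1 : Cr k i j l := by unfold Cr at h ⊢; rw [min_comm, max_comm]; tauto
  have c2 : ∀ i k j l : ℕ, Cr i k j l → Cr i k l j := by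
    intro i k j l h; unfold Cr at h ⊢; tauto
  rcases le_total i k with h1 | h1 <;> rcases le_total j l with h2 | h2
  · exact key2 _ _ _ _ h1 h2 h hd
  · exact key2 _ _ _ _ h1 h2 (c2 _ _ _ _ h) (dp_swap (dp_rev (dp_swap hd)))
  · exact key2 _ _ _ _ h1 h2 c1 (dp_rev hd)
  · exact key2 _ _ _ _ h1 h2 (c2 _ _ _ _ c1) (dp_rev (dp_swap (dp_rev (dp_swap hd))))

open Classical in
theorem nc_strong {α : Type*} (G : SimpleGraph α) (n : ℕ) (a : Fin n → α)
    (hnc : NoncrossingList G (List.ofFn a)) :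
    ∀ (N : ℕ) (i k j l : Fin n) (p : G.Walk (a i) (a k)) (q : G.Walk (a j) (a l)),
      Cr i k j l → p.length + q.length ≤ N → (∀ u ∈ p.support, u ∉ q.support) → False := by
  intro N
  induction N using Nat.strong_induction_on with
  | _ N ih =>
  intro i k j l p q hc hN hd
  by_cases hp : ∃ m : Fin n, a m ∈ p.support ∧ a m ≠ a i ∧ a m ≠ a k
  · obtain ⟨m, hm, h1, h2⟩ := hp
    have hmj : m ≠ j := by rintro rfl; exact hd _ hm q.start_mem_support
    have hml : m ≠ l := by rintro rfl; exact hd _ hm q.end_mem_support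
    have hlen := congrArg SimpleGraph.Walk.length (p.take_spec hm)
    rw [SimpleGraph.Walk.length_append] at hlen
    have ht : (p.takeUntil _ hm).length ≠ 0 := fun h =>
      h1 (SimpleGraph.Walk.eq_of_length_eq_zero h).symm
    have hdr : (p.dropUntil _ hm).length ≠ 0 := fun h =>
      h2 (SimpleGraph.Walk.eq_of_length_eq_zero h)
    have hc' : Cr i m j l ∨ Cr m k j l := by
      rw [Ne, Fin.ext_iff] at hmj hml
      unfold Cr at hc ⊢
      omega
    rcases hc' with hc' | hc'
    · exact ih ((p.takeUntil _ hm).length + q.length) (by omega) i m j l (p.takeUntil _ hm) q hc'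
        le_rfl (fun u hu => hd u (p.support_takeUntil_subset_support hm hu))
    · exact ih ((p.dropUntil _ hm).length + q.length) (by omega) m k j l (p.dropUntil _ hm) q hc'
        le_rfl (fun u hu => hd u (p.support_dropUntil_subset_support hm hu))
  by_cases hq : ∃ m : Fin n, a m ∈ q.support ∧ a m ≠ a j ∧ a m ≠ a l
  · obtain ⟨m, hm, h1, h2⟩ := hq
    have hmj : m ≠ i := by rintro rfl; exact hd _ p.start_mem_support hm
    have hml : m ≠ k := by rintro rfl; exact hd _ p.end_mem_support hm
    have hlen := congrArg SimpleGraph.Walk.length (q.take_spec hm)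
    rw [SimpleGraph.Walk.length_append] at hlen
    have ht : (q.takeUntil _ hm).length ≠ 0 := fun h =>
      h1 (SimpleGraph.Walk.eq_of_length_eq_zero h).symm
    have hdr : (q.dropUntil _ hm).length ≠ 0 := fun h =>
      h2 (SimpleGraph.Walk.eq_of_length_eq_zero h)
    have hc' : Cr i k j m ∨ Cr i k m l := by
      rw [Ne, Fin.ext_iff] at hmj hml
      unfold Cr at hc ⊢
      omega
    rcases hc' with hc' | hc'
    · exact ih (p.length + (q.takeUntil _ hm).length) (by omega) i k j m p (q.takeUntil _ hm) hc'
        le_rfl (fun u hu hv => hd u hu (q.support_takeUntil_subset_support hm hv))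
    · exact ih (p.length + (q.dropUntil _ hm).length) (by omega) i k m l p (q.dropUntil _ hm) hc'
        le_rfl (fun u hu hv => hd u hu (q.support_dropUntil_subset_support hm hv))
  refine nc_base G n a hnc i k j l hc ⟨p.bypass, q.bypass, p.bypass_isPath, q.bypass_isPath,
    ?_, ?_, ?_⟩
  · intro u hu hv
    exact hd u (p.support_bypass_subset_support hu) (q.support_bypass_subset_support hv)
  · rintro u hu h1 h2 ⟨m, rfl⟩
    exact hp ⟨m, p.support_bypass_subset_support hu, h1, h2⟩
  · rintro u hu h1 h2 ⟨m, rfl⟩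
    exact hq ⟨m, q.support_bypass_subset_support hu, h1, h2⟩

/-- The superposition of two matchings. -/
def HG {α : Type*} (σ τ : α → α) : SimpleGraph α :=
  SimpleGraph.fromRel (fun x y => y = σ x ∨ y = τ x)

theorem HG_comm {α : Type*} (σ τ : α → α) : HG τ σ = HG σ τ := by
  ext x y
  simp only [HG, SimpleGraph.fromRel_adj]
  tauto

theorem HG_reach_l {α : Type*} (σ τ : α → α) (x : α) : (HG σ τ).Reachable x (σ x) := by
  by_cases h : x = σ x
  · rw [← h]
  · exact SimpleGraph.Adj.reachable (by simp [HG, h])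

theorem HG_reach_r {α : Type*} (σ τ : α → α) (x : α) : (HG σ τ).Reachable x (τ x) := by
  rw [← HG_comm]; exact HG_reach_l τ σ x

theorem partner_aux {α : Type*} [Finite α] (σ τ : α → α) (hσ : ∀ x, σ (σ x) = x)
    (hτ : ∀ x, τ (τ x) = x) (x0 : α) (h0 : σ x0 = x0) (h1 : τ x0 ≠ x0) :
    ∃! y, y ≠ x0 ∧ (HG σ τ).Reachable x0 y ∧ (σ y = y ∨ τ y = y) := by
  let s : Equiv.Perm α := ⟨σ, σ, hσ, hσ⟩
  let t : Equiv.Perm α := ⟨τ, τ, hτ, hτ⟩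
  have hss : s * s = 1 := by ext x; exact hσ x
  have htt : t * t = 1 := by ext x; exact hτ x
  have hsi : s⁻¹ = s := inv_eq_of_mul_eq_one_left hss
  have hti : t⁻¹ = t := inv_eq_of_mul_eq_one_left htt
  let r : Equiv.Perm α := s * t
  have hri : r⁻¹ = t * s := by simp only [r, mul_inv_rev, hsi, hti]
  have hsr : ∀ m : ℤ, s * r ^ m * s = r ^ (-m) := by
    intro m
    have : s * r * s⁻¹ = r⁻¹ := by
      rw [hri, hsi]; simp only [r]; rw [← mul_assoc, hss, one_mul]
    calc s * r ^ m * s = s * r ^ m * s⁻¹ := by rw [hsi]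
      _ = (s * r * s⁻¹) ^ m := by rw [conj_zpow]
      _ = r ^ (-m) := by rw [this, inv_zpow, zpow_neg]
  have hs : ∀ m : ℤ, σ ((r ^ m) x0) = (r ^ (-m)) x0 := by
    intro m
    rw [← hsr m]
    change _ = σ ((r ^ m) (σ x0))
    rw [h0]
  have ht : ∀ m : ℤ, τ ((r ^ m) x0) = (r ^ (-(m + 1))) x0 := by
    intro m
    rw [← hs, add_comm, zpow_add, zpow_one]
    change _ = σ (σ (τ ((r ^ m) x0)))
    rw [hσ]
  have hreach : ∀ y, (HG σ τ).Reachable x0 y → ∃ m : ℤ, y = (r ^ m) x0 := by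
    rintro y ⟨w⟩
    have : ∀ (u v : α) (w : (HG σ τ).Walk u v), (∃ m : ℤ, u = (r ^ m) x0) →
        ∃ m : ℤ, v = (r ^ m) x0 := by
      intro u v w
      induction w with
      | nil => exact id
      | cons h _ ih =>
        rintro ⟨m, rfl⟩
        apply ih
        simp only [HG, SimpleGraph.fromRel_adj] at h
        obtain ⟨-, (h | h) | (h | h)⟩ := h
        · exact ⟨-m, by rw [h, hs]⟩
        · exact ⟨-(m + 1), by rw [h, ht]⟩
        · exact ⟨-m, by rw [← hs, h, hσ]⟩
        · exact ⟨-(m + 1), by rw [← ht, h, hτ]⟩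
    exact this _ _ w ⟨0, rfl⟩
  have hreach2 : ∀ c : ℕ, (HG σ τ).Reachable x0 ((r ^ c) x0) := by
    intro c
    induction c with
    | zero => exact SimpleGraph.Reachable.refl _
    | succ c ih =>
      rw [pow_succ']
      exact ih.trans ((HG_reach_r σ τ _).trans (HG_reach_l σ τ _))
  let N := Function.minimalPeriod (r • · : α → α) x0
  have hN : ∀ m : ℤ, (r ^ m) x0 = x0 ↔ (N : ℤ) ∣ m := fun m =>
    MulAction.zpow_smul_eq_iff_minimalPeriod_dvd (a := r) (b := x0)
  have hNeq : ∀ m m' : ℤ, (r ^ m) x0 = (r ^ m') x0 ↔ (N : ℤ) ∣ m - m' := by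
    intro m m'
    rw [← hN, sub_eq_neg_add, zpow_add, Equiv.Perm.mul_apply, zpow_neg, Equiv.Perm.inv_eq_iff_eq]
  have hNpos : 0 < N := by
    have h1 := (isOfFinOrder_of_finite r)
    obtain ⟨k, hk, hk1⟩ := h1.exists_pow_eq_one
    have h2 := (hN k).1 (by rw [zpow_natCast, hk1]; rfl)
    rcases Nat.eq_zero_or_pos N with h | h
    · rw [h] at h2; simp at h2; omega
    · exact h
  have hN1 : N ≠ 1 := by
    intro h
    have h2 := (hN (-(0+1))).2 (by rw [h]; simp)
    rw [← ht] at h2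
    exact h1 h2
  have hfs : ∀ m : ℤ, σ ((r ^ m) x0) = (r ^ m) x0 ↔ (N : ℤ) ∣ 2 * m := by
    intro m
    rw [hs, hNeq, show -m - m = -(2 * m) by ring, dvd_neg]
  have hft : ∀ m : ℤ, τ ((r ^ m) x0) = (r ^ m) x0 ↔ (N : ℤ) ∣ 2 * m + 1 := by
    intro m
    rw [ht, hNeq, show -(m + 1) - m = -(2 * m + 1) by ring, dvd_neg]
  rcases Nat.even_or_odd' N with ⟨c, hc | hc⟩
  · refine ⟨(r ^ c) x0, ⟨?_, hreach2 c, ?_⟩, ?_⟩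
    · intro h
      rw [← zpow_natCast, hN] at h
      have := Int.le_of_dvd (by omega) h
      omega
    · left
      rw [← zpow_natCast, hfs, hc]; simp
    · rintro y ⟨hy1, hy2, hy3⟩
      obtain ⟨m, rfl⟩ := hreach y hy2
      rw [Ne, hN] at hy1
      rw [hfs, hft] at hy3
      rw [← zpow_natCast, hNeq]
      rw [hc] at hy1 hy3 ⊢
      push_cast at *
      rcases hy3 with ⟨d, hd⟩ | ⟨d, hd⟩
      · have hd' : m = c * d := by linarith
        rcases Int.even_or_odd' d with ⟨e, he | he⟩
        · exact absurd ⟨e, by rw [hd', he]; ring⟩ hy1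
        · exact ⟨e, by rw [hd', he]; ring⟩
      · exfalso
        have : (2 : ℤ) ∣ 2 * m + 1 := ⟨c * d, by rw [hd]; ring⟩
        omega
  · have hcop : IsCoprime (N : ℤ) 2 := ⟨1, -c, by rw [hc]; push_cast; ring⟩
    refine ⟨(r ^ c) x0, ⟨?_, hreach2 c, ?_⟩, ?_⟩
    · intro h
      rw [← zpow_natCast, hN] at h
      have := Int.le_of_dvd (by omega) h
      omega
    · right
      rw [← zpow_natCast, hft, hc]; simp
    · rintro y ⟨hy1, hy2, hy3⟩
      obtain ⟨m, rfl⟩ := hreach y hy2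
      rw [Ne, hN] at hy1
      rw [hfs, hft] at hy3
      rw [← zpow_natCast, hNeq]
      rcases hy3 with hd | hd
      · exact absurd (hcop.dvd_of_dvd_mul_left hd) hy1
      · apply hcop.dvd_of_dvd_mul_left
        have := dvd_sub hd (dvd_refl (N : ℤ))
        convert this using 1
        rw [hc]; push_cast; ring

/-- Matchings with the vertices `a T` removed. -/
def PI {α : Type*} {n : ℕ} (G : SimpleGraph α) (a : Fin n → α) (T : Finset (Fin n))
    (σ : α → α) : Prop :=
  (∀ x, σ (σ x) = x) ∧ (∀ x, (∀ m ∈ T, x ≠ a m) → G.Adj x (σ x)) ∧ (∀ m ∈ T, σ (a m) = a m)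

theorem PI_iff {α : Type*} [Fintype α] [DecidableEq α] {n : ℕ} (G : SimpleGraph α) (a : Fin n → α)
    (T : Finset (Fin n)) (σ : α → α) :
    Inv G (Finset.univ \ T.image a) σ ↔ PI G a T σ := by
  unfold Inv PI
  simp only [Finset.mem_sdiff, Finset.mem_univ, true_and, Finset.mem_image, not_exists, not_and,
    not_forall, not_not]
  refine and_congr_right fun _ => and_congr ?_ ?_
  · refine forall_congr' fun x => ?_
    simp only [ne_eq, eq_comm]
  · constructor
    · intro h m hm; exact h _ ⟨m, hm, rfl⟩
    · rintro h _ ⟨m, hm, rfl⟩; exact h m hm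

theorem PI.fix {α : Type*} {n : ℕ} {G : SimpleGraph α} {a : Fin n → α} {T : Finset (Fin n)}
    {σ : α → α} (h : PI G a T σ) {x : α} (hx : σ x = x) : ∃ m ∈ T, x = a m := by
  by_contra hc
  push Not at hc
  have := h.2.1 x hc
  rw [hx] at this
  exact G.irrefl this

theorem partner {α : Type*} [Finite α] {n : ℕ} (G : SimpleGraph α) (a : Fin n → α)
    (ha : Function.Injective a)
    (S T : Finset (Fin n)) (hT : T ⊆ S) (σ τ : α → α) (hσ : PI G a T σ) (hτ : PI G a (S \ T) τ)
    (j : Fin n) (hj : j ∈ S) :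
    ∃! k, k ∈ S ∧ k ≠ j ∧ (HG σ τ).Reachable (a j) (a k) := by
  have key : ∀ T ⊆ S, ∀ σ τ : α → α, PI G a T σ → PI G a (S \ T) τ → j ∈ T →
    ∃! k, k ∈ S ∧ k ≠ j ∧ (HG σ τ).Reachable (a j) (a k) := by
    intro T hT σ τ hσ hτ hj
    have hn : τ (a j) ≠ a j := by
      intro h
      obtain ⟨m, hm, h2⟩ := hτ.fix h
      rw [ha h2] at hj
      exact (Finset.mem_sdiff.1 hm).2 hj
    obtain ⟨y, ⟨h1, h2, h3⟩, hu⟩ := partner_aux σ τ hσ.1 hτ.1 (a j) (hσ.2.2 j hj) hn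
    have hy : ∃ k ∈ S, y = a k := by
      rcases h3 with h3 | h3
      · obtain ⟨m, hm, h⟩ := hσ.fix h3
        exact ⟨m, hT hm, h⟩
      · obtain ⟨m, hm, h⟩ := hτ.fix h3
        exact ⟨m, (Finset.mem_sdiff.1 hm).1, h⟩
    obtain ⟨k, hk, rfl⟩ := hy
    refine ⟨k, ⟨hk, fun h => h1 (by rw [h]), h2⟩, ?_⟩
    rintro l ⟨hl1, hl2, hl3⟩
    apply ha
    refine hu _ ⟨fun h => hl2 (ha h), hl3, ?_⟩
    by_cases hlT : l ∈ T
    · exact Or.inl (hσ.2.2 l hlT)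
    · exact Or.inr (hτ.2.2 l (Finset.mem_sdiff.2 ⟨hl1, hlT⟩))
  by_cases hjT : j ∈ T
  · exact key T hT σ τ hσ hτ hjT
  · have := key (S \ T) Finset.sdiff_subset τ σ hτ (by rwa [Finset.sdiff_sdiff_eq_self hT])
      (Finset.mem_sdiff.2 ⟨hj, hjT⟩)
    rwa [HG_comm] at this

open Classical in
/-- Use `τ` inside `O` and `σ` outside. -/
noncomputable def sw {α : Type*} (O : Set α) (σ τ : α → α) : α → α :=
  fun x => if x ∈ O then τ x else σ x

theorem HG_sw {α : Type*} (O : Set α) (σ τ : α → α) : HG (sw O σ τ) (sw O τ σ) = HG σ τ := by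
  ext x y
  simp only [HG, SimpleGraph.fromRel_adj, sw]
  split_ifs <;> tauto

theorem sw_sw {α : Type*} (O : Set α) (σ τ : α → α) : sw O (sw O σ τ) (sw O τ σ) = σ := by
  ext x
  simp only [sw]
  split_ifs <;> rfl

theorem PI_sw {α : Type*} {n : ℕ} (G : SimpleGraph α) (a : Fin n → α)
    (S T : Finset (Fin n)) (hT : T ⊆ S) (σ τ : α → α) (hσ : PI G a T σ) (hτ : PI G a (S \ T) τ)
    (O : Set α) (hOσ : ∀ x, x ∈ O ↔ σ x ∈ O) (hOτ : ∀ x, x ∈ O ↔ τ x ∈ O)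
    (D : Finset (Fin n)) (hD : ∀ m ∈ S, a m ∈ O ↔ m ∈ D) (hDS : D ⊆ S) :
    PI G a (symmDiff T D) (sw O σ τ) := by
  refine ⟨?_, ?_, ?_⟩
  · intro x
    by_cases hx : x ∈ O
    · have := (hOτ x).1 hx
      simp only [sw, hx, this, if_true]
      exact hτ.1 x
    · have : σ x ∉ O := fun h => hx ((hOσ x).2 h)
      simp only [sw, hx, this, if_false]
      exact hσ.1 x
  · intro x hx
    by_cases hxO : x ∈ O
    · simp only [sw, hxO, if_true]
      apply hτ.2.1
      rintro m hm rfl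
      rw [Finset.mem_sdiff] at hm
      exact hx m (by rw [Finset.mem_symmDiff]; exact Or.inr ⟨(hD m hm.1).1 hxO, hm.2⟩) rfl
    · simp only [sw, hxO, if_false]
      apply hσ.2.1
      rintro m hm rfl
      exact hx m (by
        rw [Finset.mem_symmDiff]
        exact Or.inl ⟨hm, fun h => hxO ((hD m (hT hm)).2 h)⟩) rfl
  · intro m hm
    rw [Finset.mem_symmDiff] at hm
    rcases hm with ⟨h1, h2⟩ | ⟨h1, h2⟩
    · have : a m ∉ O := fun h => h2 ((hD m (hT h1)).1 h)
      simp only [sw, this, if_false]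
      exact hσ.2.2 m h1
    · have : a m ∈ O := (hD m (hDS h1)).2 h1
      simp only [sw, this, if_true]
      exact hτ.2.2 m (Finset.mem_sdiff.2 ⟨hDS h1, h2⟩)

/-- Sign of the position of `j` in `S`. -/
def sg {n : ℕ} (S : Finset (Fin n)) (j : Fin n) : ℤ := ∏ v ∈ S, if v < j then (-1 : ℤ) else 1

theorem sg_sq {n : ℕ} (S : Finset (Fin n)) (j : Fin n) : sg S j * sg S j = 1 := by
  unfold sg
  rw [← Finset.prod_mul_distrib]
  apply Finset.prod_eq_one
  intro v _
  split_ifs <;> norm_num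

theorem HG_le {α : Type*} {n : ℕ} (G : SimpleGraph α) (a : Fin n → α)
    (T U : Finset (Fin n)) (σ τ : α → α) (hσ : PI G a T σ) (hτ : PI G a U τ) : HG σ τ ≤ G := by
  have key : ∀ (T : Finset (Fin n)) (σ : α → α), PI G a T σ → ∀ x, x ≠ σ x → G.Adj x (σ x) := by
    intro T σ h x hx
    apply h.2.1
    rintro m hm rfl
    exact hx (h.2.2 m hm).symm
  intro x y h
  simp only [HG, SimpleGraph.fromRel_adj] at h
  obtain ⟨h0, (rfl | rfl) | (rfl | rfl)⟩ := h
  · exact key T σ hσ x h0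
  · exact key U τ hτ x h0
  · exact (key T σ hσ y h0.symm).symm
  · exact (key U τ hτ y h0.symm).symm

theorem sg_neg {α : Type*} {n : ℕ} (G H : SimpleGraph α) (a : Fin n → α) (hH : H ≤ G)
    (hnc : NoncrossingList G (List.ofFn a)) (S : Finset (Fin n))
    (hpar : ∀ j ∈ S, ∃! k, k ∈ S ∧ k ≠ j ∧ H.Reachable (a j) (a k))
    (j k : Fin n) (hj : j ∈ S) (hk : k ∈ S) (hjk : j < k) (hr : H.Reachable (a j) (a k)) :
    sg S j + sg S k = 0 := by
  classical
  have h1 : sg S j * sg S k = -1 := by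
    unfold sg
    rw [← Finset.prod_mul_distrib, ← Finset.mul_prod_erase S _ hj]
    rw [if_neg (lt_irrefl j), if_pos hjk]
    have : ∏ v ∈ S.erase j, ((if v < j then (-1 : ℤ) else 1) * if v < k then (-1 : ℤ) else 1)
        = ∏ v ∈ S.filter (fun v => j < v ∧ v < k), (-1 : ℤ) := by
      rw [Finset.prod_filter]
      rw [← Finset.mul_prod_erase S (fun v => if j < v ∧ v < k then (-1 : ℤ) else 1) hj]
      rw [if_neg (by simp), one_mul]
      refine Finset.prod_congr rfl fun v hv => ?_
      have hvj := (Finset.mem_erase.1 hv).1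
      rcases lt_trichotomy v j with h | h | h
      · rw [if_pos h, if_pos (h.trans hjk), if_neg (by intro h'; exact absurd h'.1 h.le.not_gt)]
        norm_num
      · exact absurd h hvj
      · rw [if_neg h.le.not_gt]
        simp [h]
    rw [this]
    have hpar' : ∀ j, ∃ k, j ∈ S → k ∈ S ∧ k ≠ j ∧ H.Reachable (a j) (a k) := by
      intro j
      by_cases hj : j ∈ S
      · obtain ⟨k, hk, -⟩ := hpar j hj
        exact ⟨k, fun _ => hk⟩
      · exact ⟨j, fun h => absurd h hj⟩
    choose g hg using hpar'
    rw [Finset.prod_involution (fun v _ => g v)]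
    · norm_num
    · intros; norm_num
    · intro v hv _
      exact (hg v (Finset.mem_filter.1 hv).1).2.1
    · intro v hv
      obtain ⟨hvS, hv1, hv2⟩ := Finset.mem_filter.1 hv
      obtain ⟨g1, g2, g3⟩ := hg v hvS
      rw [Finset.mem_filter]
      refine ⟨g1, ?_⟩
      have hnr : ¬ H.Reachable (a j) (a v) := fun h =>
        hv2.ne ((hpar j hj).unique ⟨hvS, hv1.ne', h⟩ ⟨hk, hjk.ne', hr⟩)
      have e1 : g v ≠ j := by
        intro h
        rw [h] at g3
        exact hnr g3.symm
      have e2 : g v ≠ k := by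
        intro h
        rw [h] at g3
        exact hnr (hr.trans g3.symm)
      by_contra hc
      obtain ⟨p⟩ := hr
      obtain ⟨q⟩ := g3
      refine nc_strong G n a hnc _ j k v (g v) (p.mapLe hH) (q.mapLe hH) ?_ le_rfl ?_
      · rw [Ne, Fin.ext_iff] at e1 e2
        simp only [Fin.lt_def] at hc hv1 hv2 hjk
        unfold Cr
        rw [min_eq_left hjk.le, max_eq_right hjk.le]
        omega
      · intro u hu hv
        rw [SimpleGraph.Walk.support_mapLe_eq_support] at hu hv
        exact hnr ((p.takeUntil u hu).reachable.trans (q.takeUntil u hv).reachable.symm)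
    · intro v hv
      have hvS := (Finset.mem_filter.1 hv).1
      obtain ⟨g1, g2, g3⟩ := hg v hvS
      exact (hpar _ g1).unique (hg _ g1) ⟨hvS, g2.symm, g3.symm⟩
  have h2 := sg_sq S j
  have : sg S k = -sg S j := by
    calc sg S k = sg S j * sg S j * sg S k := by rw [h2, one_mul]
      _ = sg S j * (sg S j * sg S k) := by ring
      _ = _ := by rw [h1]; ring
  rw [this]; ring

open Classical in
/-- Partner index. -/
noncomputable def pt {α : Type*} {n : ℕ} (a : Fin n → α) (S : Finset (Fin n)) (H : SimpleGraph α)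
    (j : Fin n) : Fin n :=
  if h : ∃ k, k ∈ S ∧ k ≠ j ∧ H.Reachable (a j) (a k) then h.choose else j

theorem pt_spec {α : Type*} {n : ℕ} (a : Fin n → α) (S : Finset (Fin n)) (H : SimpleGraph α)
    (j : Fin n) (h : ∃! k, k ∈ S ∧ k ≠ j ∧ H.Reachable (a j) (a k)) :
    pt a S H j ∈ S ∧ pt a S H j ≠ j ∧ H.Reachable (a j) (a (pt a S H j)) := by
  have h' := h.exists
  unfold pt
  rw [dif_pos h']
  exact h'.choose_spec

open Classical in
/-- Number of matchings. -/
noncomputable def ff {α : Type*} [Fintype α] {n : ℕ} (G : SimpleGraph α) (a : Fin n → α)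
    (T : Finset (Fin n)) : Finset (α → α) := Finset.univ.filter (PI G a T)

theorem condensation {α : Type*} [Fintype α] {n : ℕ} (G : SimpleGraph α) (a : Fin n → α)
    (ha : Function.Injective a) (hnc : NoncrossingList G (List.ofFn a))
    (S : Finset (Fin n)) (i : Fin n) (hi : i ∈ S) :
    ∑ j ∈ S, sg S j * (((ff G a (symmDiff {i} {j})).card : ℤ) *
      ((ff G a (S \ symmDiff {i} {j})).card : ℤ)) = 0 := by
  classical
  have e : ∑ j ∈ S, sg S j * (((ff G a (symmDiff {i} {j})).card : ℤ) *
      ((ff G a (S \ symmDiff {i} {j})).card : ℤ)) =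
      ∑ x ∈ S.sigma (fun j => (ff G a (symmDiff {i} {j})) ×ˢ (ff G a (S \ symmDiff {i} {j}))),
        sg S x.1 := by
    rw [Finset.sum_sigma]
    refine Finset.sum_congr rfl fun j _ => ?_
    simp only [Finset.sum_const, Finset.card_product, nsmul_eq_mul]
    push_cast; ring
  rw [e]
  have hTS : ∀ j ∈ S, symmDiff {i} {j} ⊆ S := by
    intro j hj x hx
    simp only [Finset.mem_symmDiff, Finset.mem_singleton] at hx
    grind
  have hmem : ∀ x : (Σ _ : Fin n, (α → α) × (α → α)),
      x ∈ S.sigma (fun j => (ff G a (symmDiff {i} {j})) ×ˢ (ff G a (S \ symmDiff {i} {j}))) ↔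
      x.1 ∈ S ∧ PI G a (symmDiff {i} {x.1}) x.2.1 ∧ PI G a (S \ symmDiff {i} {x.1}) x.2.2 := by
    intro x
    simp [ff]
  have hp : ∀ x : (Σ _ : Fin n, (α → α) × (α → α)),
      x ∈ S.sigma (fun j => (ff G a (symmDiff {i} {j})) ×ˢ (ff G a (S \ symmDiff {i} {j}))) →
      ∀ j ∈ S, ∃! k, k ∈ S ∧ k ≠ j ∧ (HG x.2.1 x.2.2).Reachable (a j) (a k) := by
    intro x hx j hj
    obtain ⟨h1, h2, h3⟩ := (hmem x).1 hx
    exact partner G a ha S _ (hTS _ h1) _ _ h2 h3 j hj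
  let g : (Σ _ : Fin n, (α → α) × (α → α)) → (Σ _ : Fin n, (α → α) × (α → α)) := fun x =>
    ⟨pt a S (HG x.2.1 x.2.2) x.1,
      (sw {y | (HG x.2.1 x.2.2).Reachable (a x.1) y} x.2.1 x.2.2,
       sw {y | (HG x.2.1 x.2.2).Reachable (a x.1) y} x.2.2 x.2.1)⟩
  refine Finset.sum_involution (fun x _ => g x) ?_ ?_ ?_ ?_
  · intro x hx
    have hpx := hp x hx
    obtain ⟨h1, h2, h3⟩ := (hmem x).1 hx
    obtain ⟨k1, k2, k3⟩ := pt_spec a S _ _ (hpx _ h1)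
    have hle := HG_le G a _ _ _ _ h2 h3
    simp only [g]
    rcases lt_or_gt_of_ne k2 with h | h
    · rw [add_comm]
      exact sg_neg G _ a hle hnc S hpx _ _ k1 h1 h k3.symm
    · exact sg_neg G _ a hle hnc S hpx _ _ h1 k1 h k3
  · intro x hx _ hgx
    have hpx := hp x hx
    obtain ⟨h1, h2, h3⟩ := (hmem x).1 hx
    obtain ⟨k1, k2, k3⟩ := pt_spec a S _ _ (hpx _ h1)
    exact k2 (congrArg Sigma.fst hgx)
  · intro x hx
    have hpx := hp x hx
    obtain ⟨h1, h2, h3⟩ := (hmem x).1 hx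
    obtain ⟨k1, k2, k3⟩ := pt_spec a S _ _ (hpx _ h1)
    obtain ⟨j, σ, τ⟩ := x
    simp only at h1 h2 h3 k1 k2 k3 hpx
    rw [hmem]
    simp only [g]
    generalize pt a S (HG σ τ) j = k at *
    have hs1 : symmDiff {i} {k} = symmDiff (symmDiff {i} {j}) ({j, k} : Finset (Fin n)) := by
      ext x
      simp only [Finset.mem_symmDiff, Finset.mem_singleton, Finset.mem_insert]
      grind
    have hs2 : S \ symmDiff {i} {k} =
        symmDiff (S \ symmDiff {i} {j}) ({j, k} : Finset (Fin n)) := by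
      ext x
      simp only [Finset.mem_symmDiff, Finset.mem_singleton, Finset.mem_insert, Finset.mem_sdiff]
      grind
    have hDS : ({j, k} : Finset (Fin n)) ⊆ S := by
      intro x hx
      simp only [Finset.mem_singleton, Finset.mem_insert] at hx
      grind
    have hD : ∀ m ∈ S, a m ∈ {y | (HG σ τ).Reachable (a j) y} ↔
        m ∈ ({j, k} : Finset (Fin n)) := by
      intro m hm
      simp only [Set.mem_ofPred_eq, Finset.mem_singleton, Finset.mem_insert]
      constructor
      · intro h
        by_cases hmj : m = j
        · exact Or.inl hmj
        · exact Or.inr ((hpx j h1).unique ⟨hm, hmj, h⟩ ⟨k1, k2, k3⟩)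
      · rintro (rfl | rfl)
        · exact SimpleGraph.Reachable.refl _
        · exact k3
    have hO1 : ∀ x, x ∈ {y | (HG σ τ).Reachable (a j) y} ↔
        σ x ∈ {y | (HG σ τ).Reachable (a j) y} := fun x =>
      ⟨fun h => SimpleGraph.Reachable.trans h (HG_reach_l σ τ x),
       fun h => SimpleGraph.Reachable.trans h (HG_reach_l σ τ x).symm⟩
    have hO2 : ∀ x, x ∈ {y | (HG σ τ).Reachable (a j) y} ↔
        τ x ∈ {y | (HG σ τ).Reachable (a j) y} := fun x =>
      ⟨fun h => SimpleGraph.Reachable.trans h (HG_reach_r σ τ x),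
       fun h => SimpleGraph.Reachable.trans h (HG_reach_r σ τ x).symm⟩
    refine ⟨k1, ?_, ?_⟩
    · rw [hs1]
      exact PI_sw G a S _ (hTS _ h1) σ τ h2 h3 _ hO1 hO2 _ hD hDS
    · rw [hs2]
      exact PI_sw G a S _ Finset.sdiff_subset τ σ h3
        (by rwa [Finset.sdiff_sdiff_eq_self (hTS _ h1)]) _ hO2 hO1 _ hD hDS
  · intro x hx
    have hpx := hp x hx
    obtain ⟨h1, h2, h3⟩ := (hmem x).1 hx
    obtain ⟨k1, k2, k3⟩ := pt_spec a S _ _ (hpx _ h1)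
    obtain ⟨j, σ, τ⟩ := x
    simp only at h1 h2 h3 k1 k2 k3 hpx
    simp only [g, HG_sw]
    have hpp : pt a S (HG σ τ) (pt a S (HG σ τ) j) = j :=
      (hpx _ k1).unique (pt_spec a S _ _ (hpx _ k1)) ⟨h1, k2.symm, k3.symm⟩
    have hO : {y | (HG σ τ).Reachable (a (pt a S (HG σ τ) j)) y} =
        {y | (HG σ τ).Reachable (a j) y} := by
      ext y
      exact ⟨fun h => k3.trans h, fun h => k3.symm.trans h⟩
    rw [hpp, hO, sw_sw, sw_sw]

/-- One-factors of a subset. -/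
def Fac {n : ℕ} (S : Finset (Fin n)) (F : Finset (Fin n × Fin n)) : Prop :=
  (∀ p ∈ F, p.1 < p.2 ∧ p.1 ∈ S ∧ p.2 ∈ S) ∧ ∀ v ∈ S, ∃! p, p ∈ F ∧ (v = p.1 ∨ v = p.2)

theorem Fac.prod {n : ℕ} {S : Finset (Fin n)} {F : Finset (Fin n × Fin n)} (h : Fac S F)
    (f : Fin n → ℤ) : ∏ v ∈ S, f v = ∏ q ∈ F, (f q.1 * f q.2) := by
  have hS : S = F.biUnion (fun q => {q.1, q.2}) := by
    ext v
    simp only [Finset.mem_biUnion, Finset.mem_insert, Finset.mem_singleton]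
    constructor
    · intro hv
      obtain ⟨p, hp, -⟩ := h.2 v hv
      exact ⟨p, hp⟩
    · rintro ⟨p, hp, rfl | rfl⟩
      · exact (h.1 p hp).2.1
      · exact (h.1 p hp).2.2
  conv_lhs => rw [hS]
  rw [Finset.prod_biUnion]
  · refine Finset.prod_congr rfl fun q hq => ?_
    rw [Finset.prod_pair (h.1 q hq).1.ne]
  · intro p hp q hq hpq
    simp only [Function.onFun]
    rw [Finset.disjoint_left]
    intro v hv hv'
    simp only [Finset.mem_insert, Finset.mem_singleton] at hv hv'
    have hvS : v ∈ S := by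
      rcases hv with rfl | rfl
      · exact (h.1 p hp).2.1
      · exact (h.1 p hp).2.2
    exact hpq ((h.2 v hvS).unique ⟨hp, hv⟩ ⟨hq, hv'⟩)

open Classical in
theorem cross_insert {n : ℕ} (i j : Fin n) (F : Finset (Fin n × Fin n))
    (hF : ∀ p ∈ F, i < p.1 ∧ p.1 < p.2) (hij : i < j) :
    (-1 : ℤ) ^ crossingNumber n (insert (i, j) F) = (-1) ^ crossingNumber n F *
      ∏ q ∈ F, if q.1 < j ∧ j < q.2 then (-1 : ℤ) else 1 := by
  have hnot : (i, j) ∉ F := fun h => lt_irrefl _ (hF _ h).1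
  have hpow : ∀ F : Finset (Fin n × Fin n), (-1 : ℤ) ^ crossingNumber n F =
      ∏ p ∈ F, ∏ q ∈ F, if p.1 < q.1 ∧ q.1 < p.2 ∧ p.2 < q.2 then (-1 : ℤ) else 1 := by
    intro F
    rw [← Finset.prod_product', ← Finset.prod_filter, Finset.prod_const]
    unfold crossingNumber
    congr!
  rw [hpow, hpow, Finset.prod_insert hnot]
  rw [Finset.prod_insert hnot, mul_comm]
  congr 1
  · refine Finset.prod_congr rfl fun p hp => ?_
    rw [Finset.prod_insert hnot, if_neg, one_mul]
    intro h
    exact absurd (hF p hp).1 h.1.le.not_gt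
  · rw [if_neg (by simp), one_mul]
    refine Finset.prod_congr rfl fun p hp => ?_
    simp [(hF p hp).1]

open Classical in
/-- The Pfaffian of a subset. -/
noncomputable def Pf {n : ℕ} (g : Fin n → Fin n → ℤ) (S : Finset (Fin n)) : ℤ :=
  ∑ F ∈ Finset.univ.filter (fun F : Finset (Fin n × Fin n) => Fac S F),
    (-1 : ℤ) ^ crossingNumber n F * ∏ p ∈ F, g p.1 p.2

theorem Fac.insert {n : ℕ} {S : Finset (Fin n)} {i j : Fin n} (hi : i ∈ S) (hj : j ∈ S)
    (hij : i < j) {F : Finset (Fin n × Fin n)} (h : Fac (S \ {i, j}) F) :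
    Fac S (insert (i, j) F) := by
  have hm : ∀ v, v ∈ S \ {i, j} ↔ v ∈ S ∧ v ≠ i ∧ v ≠ j := by
    intro v; simp
  constructor
  · intro p hp
    rcases Finset.mem_insert.1 hp with rfl | hp
    · exact ⟨hij, hi, hj⟩
    · have := h.1 p hp
      rw [hm, hm] at this
      exact ⟨this.1, this.2.1.1, this.2.2.1⟩
  · intro v hv
    by_cases hv' : v = i ∨ v = j
    · refine ⟨(i, j), ⟨Finset.mem_insert_self _ _, hv'⟩, ?_⟩
      rintro q ⟨hq, hvq⟩
      rcases Finset.mem_insert.1 hq with hq | hq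
      · exact hq
      · exfalso
        have := h.1 q hq
        rw [hm, hm] at this
        grind
    · push Not at hv'
      obtain ⟨p, ⟨hp1, hp2⟩, hu⟩ := h.2 v ((hm v).2 ⟨hv, hv'⟩)
      refine ⟨p, ⟨Finset.mem_insert_of_mem hp1, hp2⟩, ?_⟩
      rintro q ⟨hq, hvq⟩
      rcases Finset.mem_insert.1 hq with rfl | hq
      · simp only at hvq; grind
      · exact hu q ⟨hq, hvq⟩

theorem Fac.erase {n : ℕ} {S : Finset (Fin n)} {i j : Fin n} 
    {F : Finset (Fin n × Fin n)} (h : Fac S F) (hF : (i, j) ∈ F) :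
    Fac (S \ {i, j}) (F.erase (i, j)) := by
  have hm : ∀ v, v ∈ S \ {i, j} ↔ v ∈ S ∧ v ≠ i ∧ v ≠ j := by
    intro v; simp
  have hij := h.1 _ hF
  simp only at hij
  constructor
  · intro p hp
    obtain ⟨hp1, hp2⟩ := Finset.mem_erase.1 hp
    have h3 := h.1 p hp2
    have key : ∀ v ∈ S, (v = p.1 ∨ v = p.2) → v ≠ i ∧ v ≠ j := by
      intro v hv hvp
      by_contra hc
      have hc' : v = i ∨ v = j := by tauto
      exact hp1 ((h.2 v hv).unique ⟨hp2, hvp⟩ ⟨hF, hc'⟩)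
    rw [hm, hm]
    exact ⟨h3.1, ⟨h3.2.1, key _ h3.2.1 (Or.inl rfl)⟩, ⟨h3.2.2, key _ h3.2.2 (Or.inr rfl)⟩⟩
  · intro v hv
    rw [hm] at hv
    obtain ⟨p, ⟨hp1, hp2⟩, hu⟩ := h.2 v hv.1
    refine ⟨p, ⟨Finset.mem_erase.2 ⟨?_, hp1⟩, hp2⟩, ?_⟩
    · rintro rfl
      simp only at hp2; tauto
    · rintro q ⟨hq, hvq⟩
      exact hu q ⟨Finset.mem_of_mem_erase hq, hvq⟩

theorem Pf_rec {n : ℕ} (g : Fin n → Fin n → ℤ) (S : Finset (Fin n)) (i : Fin n) (hi : i ∈ S)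
    (hmin : ∀ j ∈ S, i ≤ j) :
    Pf g S = - ∑ j ∈ S.erase i, sg S j * (g i j * Pf g (S \ {i, j})) := by
  classical
  have e : - ∑ j ∈ S.erase i, sg S j * (g i j * Pf g (S \ {i, j})) =
      ∑ x ∈ (S.erase i).sigma (fun j => Finset.univ.filter
        (fun F : Finset (Fin n × Fin n) => Fac (S \ {i, j}) F)),
        (- sg S x.1 * (g i x.1 * ((-1 : ℤ) ^ crossingNumber n x.2 * ∏ p ∈ x.2, g p.1 p.2))) := by
    rw [Finset.sum_sigma, ← Finset.sum_neg_distrib]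
    refine Finset.sum_congr rfl fun j _ => ?_
    simp only
    rw [← Finset.mul_sum, ← Finset.mul_sum, neg_mul]
    rfl
  rw [e]
  symm
  unfold Pf
  have hlt : ∀ j ∈ S.erase i, i < j := by
    intro j hj
    obtain ⟨h1, h2⟩ := Finset.mem_erase.1 hj
    exact lt_of_le_of_ne (hmin j h2) h1.symm
  have hltF : ∀ j F, Fac (S \ {i, j}) F → ∀ p ∈ F, i < p.1 ∧ p.1 < p.2 := by
    intro j F hF p hp
    have := hF.1 p hp
    refine ⟨hlt _ ?_, this.1⟩
    have h2 := this.2.1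
    simp only [Finset.mem_sdiff, Finset.mem_insert, Finset.mem_singleton] at h2
    rw [Finset.mem_erase]; tauto
  have hnot : ∀ j F, Fac (S \ {i, j}) F → ∀ k, (i, k) ∉ F := by
    intro j F hF k h
    exact lt_irrefl _ (hltF j F hF _ h).1
  refine Finset.sum_bij (fun x _ => insert (i, x.1) x.2) ?_ ?_ ?_ ?_
  · rintro ⟨j, F⟩ hx
    simp only [Finset.mem_sigma, Finset.mem_filter, Finset.mem_univ, true_and] at hx ⊢
    exact Fac.insert hi (Finset.mem_of_mem_erase hx.1) (hlt j hx.1) hx.2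
  · rintro ⟨j, F⟩ hx ⟨j', F'⟩ hx' heq
    simp only [Finset.mem_sigma, Finset.mem_filter, Finset.mem_univ, true_and] at hx hx' heq
    have h1 : (i, j) ∈ insert (i, j') F' := by rw [← heq]; exact Finset.mem_insert_self _ _
    have h2 : j = j' := by
      rcases Finset.mem_insert.1 h1 with h | h
      · exact congrArg Prod.snd h
      · exact absurd h (hnot _ _ hx'.2 _)
    subst h2
    have h3 : F = F' := by
      rw [← Finset.erase_insert (hnot _ _ hx.2 j), heq, Finset.erase_insert (hnot _ _ hx'.2 j)]
    rw [h3]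
  · intro F hF
    simp only [Finset.mem_filter, Finset.mem_univ, true_and] at hF
    obtain ⟨p, ⟨hp1, hp2⟩, -⟩ := hF.2 i hi
    have hpp := hF.1 p hp1
    have hpi : i = p.1 := by
      rcases hp2 with h | h
      · exact h
      · have := hmin _ hpp.2.1
        rw [h] at this
        exact absurd hpp.1 this.not_gt
    obtain ⟨q, j⟩ := p
    simp only at hpi hpp
    subst hpi
    refine ⟨⟨j, F.erase (i, j)⟩, ?_, ?_⟩
    · simp only [Finset.mem_sigma, Finset.mem_filter, Finset.mem_univ, true_and]
      exact ⟨Finset.mem_erase.2 ⟨hpp.1.ne', hpp.2.2⟩, hF.erase hp1⟩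
    · exact Finset.insert_erase hp1
  · rintro ⟨j, F⟩ hx
    simp only [Finset.mem_sigma, Finset.mem_filter, Finset.mem_univ, true_and] at hx ⊢
    have hij := hlt j hx.1
    have hjS := Finset.mem_of_mem_erase hx.1
    rw [cross_insert i j F (hltF _ _ hx.2) hij, Finset.prod_insert (hnot _ _ hx.2 j)]
    have hsg : sg S j = - ∏ q ∈ F, if q.1 < j ∧ j < q.2 then (-1 : ℤ) else 1 := by
      have hsub : ({i, j} : Finset (Fin n)) ⊆ S := by
        intro x hx
        simp only [Finset.mem_singleton, Finset.mem_insert] at hx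
        grind
      unfold sg
      rw [← Finset.prod_sdiff hsub, Finset.prod_pair hij.ne, if_pos hij, if_neg (lt_irrefl j),
        hx.2.prod]
      rw [mul_one, mul_neg_one]
      congr 1
      refine Finset.prod_congr rfl fun q hq => ?_
      have h1 := hx.2.1 q hq
      simp only [Finset.mem_sdiff, Finset.mem_insert, Finset.mem_singleton] at h1
      obtain ⟨h1, ⟨-, h2⟩, ⟨-, h3⟩⟩ := h1
      push Not at h2 h3
      rcases lt_or_gt_of_ne h2.2 with h4 | h4 <;> rcases lt_or_gt_of_ne h3.2 with h5 | h5
      · simp [h4, h5, h5.le.not_gt]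
      · simp [h4, h5, h5.le.not_gt]
      · exact absurd (h4.trans (h1.trans h5)) (lt_irrefl _)
      · simp [h4.le.not_gt, h5.le.not_gt]
    rw [hsg]
    ring

theorem main_aux {α : Type*} [Fintype α] {n : ℕ} (G : SimpleGraph α) (a : Fin n → α)
    (ha : Function.Injective a) (hnc : NoncrossingList G (List.ofFn a))
    (h1 : (ff G a ∅).card = 1) (N : ℕ) : ∀ (S : Finset (Fin n)), S.card = N →
    ((ff G a S).card : ℤ) = Pf (fun i j => ((ff G a {i, j}).card : ℤ)) S := by
  classical
  induction N using Nat.strong_induction_on with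
  | _ N ih =>
  intro S hS
  rcases S.eq_empty_or_nonempty with rfl | hne
  · rw [h1]
    unfold Pf
    have : Finset.univ.filter (fun F : Finset (Fin n × Fin n) => Fac ∅ F) = {∅} := by
      ext F
      simp only [Finset.mem_filter, Finset.mem_univ, true_and, Finset.mem_singleton]
      constructor
      · intro h
        apply Finset.eq_empty_of_forall_notMem
        intro p hp
        exact absurd (h.1 p hp).2.1 (Finset.notMem_empty _)
      · rintro rfl
        exact ⟨by simp, by simp⟩
    rw [this]
    simp [crossingNumber]
  · have hi := S.min'_mem hne
    have hmin : ∀ j ∈ S, S.min' hne ≤ j := fun j hj => S.min'_le j hj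
    generalize S.min' hne = i at hi hmin
    rw [Pf_rec _ S i hi hmin]
    have hc := condensation G a ha hnc S i hi
    rw [← Finset.add_sum_erase S _ hi] at hc
    have hsi : sg S i = 1 := by
      unfold sg
      apply Finset.prod_eq_one
      intro v hv
      rw [if_neg (hmin v hv).not_gt]
    simp only [symmDiff_self, Finset.bot_eq_empty, Finset.sdiff_empty, h1, hsi, one_mul,
      Nat.cast_one] at hc
    rw [eq_neg_iff_add_eq_zero, ← hc]
    congr 1
    refine Finset.sum_congr rfl fun j hj => ?_
    obtain ⟨hji, hjS⟩ := Finset.mem_erase.1 hj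
    have hsd : symmDiff {i} {j} = ({i, j} : Finset (Fin n)) := by
      ext x
      simp only [Finset.mem_symmDiff, Finset.mem_singleton, Finset.mem_insert]
      grind
    rw [hsd, ih (S \ {i, j}).card ?_ _ rfl]
    rw [← hS]
    apply Finset.card_lt_card
    refine ⟨Finset.sdiff_subset, fun h => ?_⟩
    have := h hi
    simp at this

end PfC

open Classical in
/-- (Corollary 3.9.) Pfaffian condensation with `H = G`. -/
theorem pfaffian_condensation_M_G_sub_A {α : Type*} [Fintype α] [DecidableEq α]
    (G : SimpleGraph α) (n : ℕ) (hn : Even n)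
    (a : Fin n → α) (hdist : (List.ofFn a).Nodup)
    (hnc : NoncrossingList G (List.ofFn a))
    (huniq : ∃! m : Finset (Sym2 α), IsPMOn G Finset.univ m) :
    (pmCount G (Finset.univ \ Finset.univ.image a) : ℤ) =
      ∑ F ∈ Finset.univ.filter (fun F : Finset (Fin n × Fin n) => IsOneFactor n F),
        (-1 : ℤ) ^ crossingNumber n F *
          ∏ p ∈ F, (pmCount G (Finset.univ \ {a p.1, a p.2}) : ℤ) := by
  have ha : Function.Injective a := List.nodup_ofFn.1 hdist
  have hff : ∀ T : Finset (Fin n), pmCount G (Finset.univ \ T.image a) =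
      (PfC.ff G a T).card := by
    intro T
    rw [PfC.pmCount_eq]
    unfold PfC.ff
    congr 1
    ext σ
    simp only [Finset.mem_filter, Finset.mem_univ, true_and]
    exact PfC.PI_iff G a T σ
  have h1 : (PfC.ff G a ∅).card = 1 := by
    rw [← hff]
    simp only [Finset.image_empty, Finset.sdiff_empty]
    unfold pmCount
    rw [Nat.card_eq_one_iff_exists]
    obtain ⟨m, hm, hu⟩ := huniq
    exact ⟨⟨m, hm⟩, fun y => Subtype.ext (hu _ y.2)⟩
  rw [hff, PfC.main_aux G a ha hnc h1 _ Finset.univ rfl]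
  unfold PfC.Pf
  refine Finset.sum_congr ?_ ?_
  · ext F
    simp only [Finset.mem_filter, Finset.mem_univ, true_and]
    simp [PfC.Fac, IsOneFactor]
  · intro F _
    congr 1
    refine Finset.prod_congr rfl fun p _ => ?_
    simp only
    rw [← hff]
    simp [Finset.image_insert]
end

section
/- Let G be a finite simple bipartite graph with bipartition classes U and V, and let a_1,…,a_n, b_n,…,b_1 be distinct vertices such that G is noncrossing with respect to the cyclic sequence (a_1,…,a_n, b_n,…,b_1). Set A = {a_1,…,a_n} and B = {b_1,…,b_n}, let L = G−(A∩U)−(B∩V), and for 1 ≤ i,j ≤ n let L_{ij} be the induced subgraph of G on the symmetric difference of V(L) and {a_i, b_j}. If L has exactly one perfect matching, then M(G−(A∩V)−(B∩U)) = det[M(L_{ij})]_{1≤i,j≤n}. -/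
namespace DC

/-- Perfect matchings as partner involutions. -/
def Inv {α : Type*} (G : SimpleGraph α) (s : Finset α) (p : α → α) : Prop :=
  ∀ x, p (p x) = x ∧ (x ∈ s → G.Adj x (p x)) ∧ (x ∉ s → p x = x)

lemma Inv.mem {α : Type*} {G : SimpleGraph α} {s : Finset α} {p : α → α} (h : Inv G s p)
    {x : α} (hx : x ∈ s) : p x ∈ s := by
  by_contra hc
  have h1 := (h (p x)).2.2 hc
  rw [(h x).1] at h1
  have h2 := (h x).2.1 hx
  rw [← h1] at h2
  exact G.loopless.irrefl _ h2

lemma isPM_of_inv {α : Type*} [DecidableEq α] {G : SimpleGraph α} {s : Finset α} {p : α → α}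
    (h : Inv G s p) : IsPMOn G s (s.image fun x => s(x, p x)) := by
  refine ⟨?_, ?_⟩
  · intro e he
    obtain ⟨x, hx, rfl⟩ := Finset.mem_image.1 he
    refine ⟨(h x).2.1 hx, ?_⟩
    intro v hv
    rcases Sym2.mem_iff.1 hv with rfl | rfl
    · exact hx
    · exact h.mem hx
  · intro v hv
    refine ⟨s(v, p v), ⟨Finset.mem_image.2 ⟨v, hv, rfl⟩, Sym2.mem_mk_left _ _⟩, ?_⟩
    rintro e ⟨he, hve⟩
    obtain ⟨x, hx, rfl⟩ := Finset.mem_image.1 he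
    rcases Sym2.mem_iff.1 hve with rfl | rfl
    · rfl
    · rw [(h x).1, Sym2.eq_swap]

lemma exists_inv_of_isPM {α : Type*} [DecidableEq α] {G : SimpleGraph α} {s : Finset α}
    {m : Finset (Sym2 α)} (h : IsPMOn G s m) :
    ∃ p, Inv G s p ∧ (s.image fun x => s(x, p x)) = m := by
  have key : ∀ x, ∃ y, (x ∈ s → s(x, y) ∈ m) ∧ (x ∉ s → y = x) := by
    intro x
    by_cases hx : x ∈ s
    · obtain ⟨e, ⟨he, hxe⟩, -⟩ := h.2 x hx
      obtain ⟨y, rfl⟩ := Sym2.mem_iff_exists.1 hxe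
      exact ⟨y, fun _ => he, fun h => absurd hx h⟩
    · exact ⟨x, fun h => absurd h hx, fun _ => rfl⟩
  choose p hp1 hp2 using key
  have hadj : ∀ x, x ∈ s → G.Adj x (p x) := fun x hx => (h.1 _ (hp1 x hx)).1
  have hmem : ∀ x, x ∈ s → p x ∈ s := fun x hx => (h.1 _ (hp1 x hx)).2 _ (Sym2.mem_mk_right _ _)
  have huni : ∀ x y, x ∈ s → s(x, y) ∈ m → y = p x := by
    intro x y hx hy
    have := (h.2 x hx).unique ⟨hy, Sym2.mem_mk_left _ _⟩ ⟨hp1 x hx, Sym2.mem_mk_left _ _⟩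
    exact Sym2.congr_right.1 this
  refine ⟨p, fun x => ⟨?_, hadj x, hp2 x⟩, ?_⟩
  · by_cases hx : x ∈ s
    · have h1 := hp1 x hx
      rw [Sym2.eq_swap] at h1
      exact (huni _ _ (hmem x hx) h1).symm
    · rw [hp2 x hx, hp2 x hx]
  · ext e
    rw [Finset.mem_image]
    constructor
    · rintro ⟨x, hx, rfl⟩
      exact hp1 x hx
    · intro he
      induction e with
      | _ x y =>
        have hx := (h.1 _ he).2 x (Sym2.mem_mk_left _ _)
        exact ⟨x, hx, by rw [huni x y hx he]⟩

lemma inv_image_inj {α : Type*} [DecidableEq α] {G : SimpleGraph α} {s : Finset α}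
    {p q : α → α} (hp : Inv G s p) (hq : Inv G s q)
    (h : (s.image fun x => s(x, p x)) = (s.image fun x => s(x, q x))) : p = q := by
  funext x
  by_cases hx : x ∈ s
  · have h1 : s(x, p x) ∈ s.image fun x => s(x, q x) := by
      rw [← h]; exact Finset.mem_image.2 ⟨x, hx, rfl⟩
    obtain ⟨y, hy, he⟩ := Finset.mem_image.1 h1
    rcases Sym2.eq_iff.1 he with ⟨rfl, h3⟩ | ⟨h2, h3⟩
    · exact h3.symm
    · rw [← h3, (hq y).1, h3, h2]
  · rw [(hp x).2.2 hx, (hq x).2.2 hx]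

lemma pmCount_eq {α : Type*} [DecidableEq α] (G : SimpleGraph α) (s : Finset α) :
    pmCount G s = Nat.card {p : α → α // Inv G s p} := by
  symm
  unfold pmCount
  refine Nat.card_eq_of_bijective
    (fun p : {p : α → α // Inv G s p} =>
      (⟨s.image fun x => s(x, p.1 x), isPM_of_inv p.2⟩ : {m // IsPMOn G s m})) ⟨?_, ?_⟩
  · rintro ⟨p, hp⟩ ⟨q, hq⟩ h
    exact Subtype.ext (inv_image_inj hp hq (congrArg Subtype.val h))
  · rintro ⟨m, hm⟩
    obtain ⟨p, hp, rfl⟩ := exists_inv_of_isPM hm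
    exact ⟨⟨p, hp⟩, rfl⟩

/-- The digraph. -/
def E {α : Type*} (G : SimpleGraph α) (Q : α → Prop) (p0 : α → α) (x y : α) : Prop :=
  (Q x ∧ ¬ Q y ∧ G.Adj x y ∧ p0 x ≠ y) ∨ (¬ Q x ∧ Q y ∧ p0 x = y)

def Valid {α : Type*} (R : α → α → Prop) (PB : α → Prop) (β : α → α) (σ : Equiv.Perm α) : Prop :=
  (∀ x, PB x → σ x = β x) ∧ ∀ x, ¬ PB x → σ x = x ∨ R x (σ x)

end DC
namespace DC

open Classical in
noncomputable def fwd {α : Type*} (PB : α → Prop) (β : α → α) (Q : α → Prop) (p0 p : α → α)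
    (x : α) : α :=
  if PB x then β x else if p x = p0 x then x else if Q x then p x else p0 x

open Classical in
noncomputable def pOf {α : Type*} (Q : α → Prop) (t : Finset α) (p0 : α → α) (σ : Equiv.Perm α)
    (x : α) : α :=
  if x ∈ t then if σ x = x then p0 x else if Q x then σ x else σ.symm x else x

structure Core {α : Type*} (G : SimpleGraph α) (PA PB : α → Prop) (β β' : α → α) (Q : α → Prop)
    (s t : Finset α) (p0 : α → α) : Prop where
  hU : ∀ x y, G.Adj x y → (Q x ↔ ¬ Q y)
  h0 : Inv G s p0
  hβ : ∀ x, PB x → PA (β x) ∧ β' (β x) = x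
  hβ' : ∀ x, PA x → PB (β' x) ∧ β (β' x) = x
  hab : ∀ x, PA x → ¬ PB x
  haU : ∀ x, PA x → (Q x ↔ x ∉ s)
  hbU : ∀ x, PB x → (Q x ↔ x ∈ s)
  ht : ∀ x, x ∈ t ↔ (x ∈ s ↔ ¬ (PA x ∨ PB x))

namespace Core
variable {α : Type*} {G : SimpleGraph α} {PA PB : α → Prop} {β β' : α → α} {Q : α → Prop}
    {s t : Finset α} {p0 : α → α}

lemma swap (C : Core G PA PB β β' Q s t p0) : Core G PB PA β' β (fun x => ¬ Q x) s t p0 where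
  hU x y h := by have := C.hU x y h; tauto
  h0 := C.h0
  hβ := C.hβ'
  hβ' := C.hβ
  hab x h h' := C.hab x h' h
  haU x h := by have := C.hbU x h; tauto
  hbU x h := by have := C.haU x h; tauto
  ht x := by have := C.ht x; tauto

lemma valid_swap (C : Core G PA PB β β' Q s t p0) {σ : Equiv.Perm α}
    (V : Valid (E G Q p0) PB β σ) : Valid (E G (fun x => ¬ Q x) p0) PA β' σ.symm := by
  refine ⟨fun x hx => ?_, fun x hx => ?_⟩
  · rw [Equiv.symm_apply_eq, V.1 _ (C.hβ' x hx).1, (C.hβ' x hx).2]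
  · have h1 : ¬ PB (σ.symm x) := by
      intro h
      have h2 := V.1 _ h
      rw [Equiv.apply_symm_apply] at h2
      apply hx
      rw [h2]
      exact (C.hβ _ h).1
    have h2 := V.2 _ h1
    rw [Equiv.apply_symm_apply] at h2
    rcases h2 with h2 | ⟨h2, h3, h4, h5⟩ | ⟨h2, h3, h4⟩
    · exact Or.inl h2.symm
    · refine Or.inr (Or.inl ⟨h3, not_not.2 h2, h4.symm, ?_⟩)
      intro h; apply h5; rw [← h, (C.h0 x).1]
    · refine Or.inr (Or.inr ⟨not_not.2 h3, h2, ?_⟩)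
      rw [← h4, (C.h0 _).1, h4]

lemma fix_not_B (C : Core G PA PB β β' Q s t p0) {σ : Equiv.Perm α}
    (V : Valid (E G Q p0) PB β σ) {x : α} (h : σ x = x) : ¬ PB x := by
  intro hx
  have h1 := (C.hβ x hx).1
  rw [← V.1 x hx, h] at h1
  exact C.hab x h1 hx

lemma fix_not_A (C : Core G PA PB β β' Q s t p0) {σ : Equiv.Perm α}
    (V : Valid (E G Q p0) PB β σ) {x : α} (h : σ x = x) : ¬ PA x :=
  C.swap.fix_not_B (C.valid_swap V) (by rw [Equiv.symm_apply_eq, h])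

lemma p0Q (C : Core G PA PB β β' Q s t p0) {x : α} (hs : x ∈ s) : Q x ↔ ¬ Q (p0 x) :=
  C.hU _ _ ((C.h0 x).2.1 hs)

lemma fix_p0_aux (C : Core G PA PB β β' Q s t p0) {σ : Equiv.Perm α}
    (V : Valid (E G Q p0) PB β σ) {x : α} (h : σ x = x) (hs : x ∈ s) (hQ : Q x) :
    σ (p0 x) = p0 x := by
  have h1 := (C.p0Q hs).1 hQ
  have h2 := C.h0.mem hs
  have h3 : ¬ PB (p0 x) := fun h => h1 ((C.hbU _ h).2 h2)
  rcases V.2 _ h3 with h4 | ⟨h4, -⟩ | ⟨-, -, h4⟩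
  · exact h4
  · exact absurd h4 h1
  · rw [(C.h0 x).1] at h4
    have h5 : σ x = σ (p0 x) := by rw [← h4, h]
    have h6 := σ.injective h5
    rw [← h6] at h1
    exact absurd hQ h1

lemma fix_p0 (C : Core G PA PB β β' Q s t p0) {σ : Equiv.Perm α}
    (V : Valid (E G Q p0) PB β σ) {x : α} (h : σ x = x) (hs : x ∈ s) :
    σ (p0 x) = p0 x := by
  by_cases hQ : Q x
  · exact C.fix_p0_aux V h hs hQ
  · have := C.swap.fix_p0_aux (C.valid_swap V) (by rw [Equiv.symm_apply_eq, h]) hs hQ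
    rw [Equiv.symm_apply_eq] at this
    exact this.symm

lemma move (C : Core G PA PB β β' Q s t p0) {σ : Equiv.Perm α}
    (V : Valid (E G Q p0) PB β σ) {x : α} (h : σ x ≠ x) (hx : x ∈ t) (hQ : Q x) :
    σ x ∈ t ∧ ¬ Q (σ x) ∧ G.Adj x (σ x) ∧ p0 x ≠ σ x := by
  have hB : ¬ PB x := by
    intro hB
    have h1 := C.hbU x hB
    have h2 := C.ht x
    tauto
  rcases V.2 x hB with h4 | ⟨h4, h5, h6, h7⟩ | ⟨h4, -, -⟩
  · exact absurd h4 h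
  · refine ⟨?_, h5, h6, h7⟩
    have h8 : ¬ PA (σ x) := by
      intro h8
      have h9 := (C.valid_swap V).1 _ h8
      rw [Equiv.symm_apply_apply] at h9
      rw [h9] at hB
      exact hB (C.hβ' _ h8).1
    have h10 := C.ht (σ x)
    by_cases h9 : PB (σ x)
    · have h11 := C.hbU _ h9
      tauto
    · have h12 : σ x ∈ s := by
        by_contra hc
        rcases V.2 _ h9 with h13 | ⟨h13, -⟩ | ⟨-, h13, h14⟩
        · exact h (σ.injective h13)
        · exact h5 h13
        · rw [(C.h0 _).2.2 hc] at h14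
          rw [← h14] at h13
          exact h5 h13
      tauto
  · exact absurd hQ h4

lemma move' (C : Core G PA PB β β' Q s t p0) {σ : Equiv.Perm α}
    (V : Valid (E G Q p0) PB β σ) {x : α} (h : σ x ≠ x) (hx : x ∈ t) (hQ : ¬ Q x) :
    σ.symm x ∈ t ∧ Q (σ.symm x) ∧ G.Adj x (σ.symm x) ∧ p0 x ≠ σ.symm x := by
  have := C.swap.move (C.valid_swap V) (x := x)
    (by intro h'; rw [Equiv.symm_apply_eq] at h'; exact h h'.symm) hx hQ
  simpa using this

lemma mid (C : Core G PA PB β β' Q s t p0) {σ : Equiv.Perm α}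
    (V : Valid (E G Q p0) PB β σ) {x : α} (h : σ x = x) (hx : x ∈ t) : x ∈ s := by
  have h1 := C.fix_not_A V h
  have h2 := C.fix_not_B V h
  have h3 := C.ht x
  tauto

lemma mid' (C : Core G PA PB β β' Q s t p0) {σ : Equiv.Perm α}
    (V : Valid (E G Q p0) PB β σ) {x : α} (h : σ x = x) (hx : x ∈ s) : x ∈ t := by
  have h1 := C.fix_not_A V h
  have h2 := C.fix_not_B V h
  have h3 := C.ht x
  tauto

lemma inv_pOf (C : Core G PA PB β β' Q s t p0) {σ : Equiv.Perm α}
    (V : Valid (E G Q p0) PB β σ) : Inv G t (pOf Q t p0 σ) := by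
  intro x
  by_cases hx : x ∈ t
  · by_cases h : σ x = x
    · have hs := C.mid V h hx
      have h1 := C.fix_p0 V h hs
      have h2 := C.mid' V h1 (C.h0.mem hs)
      have h3 := C.h0 x
      simp only [pOf, hx, h, h1, h2, if_true]
      tauto
    · by_cases hQ : Q x
      · have h1 := C.move V h hx hQ
        have h2 : σ (σ x) ≠ σ x := fun h' => h (σ.injective h')
        simp only [pOf, hx, h, h1, h2, hQ, if_true, if_false, Equiv.symm_apply_apply]
        tauto
      · have h1 := C.move' V h hx hQ
        have h2 : x ≠ σ.symm x := by
          intro h'; rw [Equiv.eq_symm_apply] at h'; exact h h'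
        simp only [pOf, hx, h, h1, h2, hQ, if_true, if_false, Equiv.apply_symm_apply]
        tauto
  · simp [pOf, hx]

lemma fwd_pOf (C : Core G PA PB β β' Q s t p0) {σ : Equiv.Perm α}
    (V : Valid (E G Q p0) PB β σ) (x : α) : fwd PB β Q p0 (pOf Q t p0 σ) x = σ x := by
  unfold fwd
  split_ifs with h1 h2 h3
  · exact (V.1 x h1).symm
  · by_contra h
    have h : σ x ≠ x := fun h' => h h'.symm
    by_cases hx : x ∈ t
    · by_cases hQ : Q x
      · have := C.move V h hx hQ
        simp only [pOf, hx, h, hQ, if_true, if_false] at h2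
        exact this.2.2.2 h2.symm
      · have := C.move' V h hx hQ
        simp only [pOf, hx, h, hQ, if_true, if_false] at h2
        exact this.2.2.2 h2.symm
    · simp only [pOf, hx, if_false] at h2
      have hs : x ∉ s := by
        intro hs
        have := (C.h0 x).2.1 hs
        rw [← h2] at this
        exact G.loopless.irrefl _ this
      have hA : ¬ PA x := by have := C.ht x; tauto
      rcases V.2 x h1 with h4 | ⟨h4, -⟩ | ⟨-, -, h4⟩
      · exact h h4
      · rcases (C.valid_swap V).2 x hA with h5 | ⟨h5, -⟩ | ⟨-, -, h5⟩
        · rw [Equiv.symm_apply_eq] at h5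
          exact h h5.symm
        · exact h5 h4
        · rw [← h2, Equiv.eq_symm_apply] at h5
          exact h h5
      · rw [← h2] at h4
        exact h h4.symm
  · by_cases hx : x ∈ t
    · by_cases h : σ x = x
      · simp [pOf, hx, h] at h2
      · simp [pOf, hx, h, h3]
    · have hs : x ∉ s := by
        have := C.ht x
        have := C.haU x
        tauto
      exfalso; apply h2
      simp [pOf, hx, (C.h0 x).2.2 hs]
  · rcases V.2 x h1 with h4 | ⟨h4, -⟩ | ⟨-, -, h4⟩
    · exfalso; apply h2
      by_cases hx : x ∈ t
      · simp [pOf, hx, h4]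
      · have hs : x ∉ s := fun hs => hx (C.mid' V h4 hs)
        simp [pOf, hx, (C.h0 x).2.2 hs]
    · exact absurd h4 h3
    · exact h4

lemma fwd_left_inv (C : Core G PA PB β β' Q s t p0) {p : α → α} (hp : Inv G t p) (x : α) :
    fwd PA β' (fun x => ¬ Q x) p0 p (fwd PB β Q p0 p x) = x := by
  have ht := C.ht x
  by_cases hB : PB x
  · simp [fwd, hB, C.hβ x hB]
  by_cases h : p x = p0 x
  · have hA : ¬ PA x := by
      intro hA
      have h1 : x ∈ t ↔ x ∉ s := by tauto
      by_cases hs : x ∈ s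
      · have h2 := (C.h0 x).2.1 hs
        rw [← h, (hp x).2.2 (by tauto)] at h2
        exact G.loopless.irrefl _ h2
      · have h2 := (hp x).2.1 (by tauto)
        rw [h, (C.h0 x).2.2 hs] at h2
        exact G.loopless.irrefl _ h2
    simp [fwd, hB, hA, h]
  by_cases hQ : Q x
  · have hx : x ∈ t := by
      by_contra hx
      have hs : x ∉ s := by have := C.haU x; tauto
      rw [(hp x).2.2 hx, (C.h0 x).2.2 hs] at h
      exact h rfl
    have h1 : ¬ Q (p x) := (C.hU _ _ ((hp x).2.1 hx)).1 hQ
    have h2 := hp.mem hx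
    have h3 : ¬ PA (p x) := by have := C.ht (p x); have := C.haU (p x); tauto
    have h4 : x ≠ p0 (p x) := by
      intro h'; apply h; rw [h', (C.h0 _).1, ← h']
    simp [fwd, hB, h, hQ, h1, h3, h4, (hp x).1]
  · have hx : x ∈ s := by
      by_contra hs
      have hx : x ∉ t := by have := C.haU x; tauto
      rw [(hp x).2.2 hx, (C.h0 x).2.2 hs] at h
      exact h rfl
    have h1 : Q (p0 x) := by have := C.p0Q hx; tauto
    have h2 := C.h0.mem hx
    have h3 : ¬ PA (p0 x) := by have := C.haU (p0 x); tauto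
    have h4 : p (p0 x) ≠ x := by
      intro h'; apply h; rw [← h', (hp _).1, h']
    simp [fwd, hB, h, hQ, h1, h3, h4, (C.h0 x).1]

noncomputable def perm (C : Core G PA PB β β' Q s t p0) {p : α → α} (hp : Inv G t p) :
    Equiv.Perm α where
  toFun := fwd PB β Q p0 p
  invFun := fwd PA β' (fun x => ¬ Q x) p0 p
  left_inv := C.fwd_left_inv hp
  right_inv x := by
    have := C.swap.fwd_left_inv hp x
    simpa only [not_not] using this

lemma valid_perm (C : Core G PA PB β β' Q s t p0) {p : α → α} (hp : Inv G t p) :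
    Valid (E G Q p0) PB β (C.perm hp) := by
  refine ⟨fun x hx => by simp [perm, fwd, hx], fun x hB => ?_⟩
  show fwd PB β Q p0 p x = x ∨ E G Q p0 x (fwd PB β Q p0 p x)
  have ht := C.ht x
  by_cases h : p x = p0 x
  · simp [fwd, hB, h]
  right
  by_cases hQ : Q x
  · have hx : x ∈ t := by
      by_contra hx
      have hs : x ∉ s := by have := C.haU x; tauto
      rw [(hp x).2.2 hx, (C.h0 x).2.2 hs] at h
      exact h rfl
    have h1 : ¬ Q (p x) := (C.hU _ _ ((hp x).2.1 hx)).1 hQ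
    left
    simp only [fwd, hB, h, hQ, if_true, if_false]
    exact ⟨trivial, h1, (hp x).2.1 hx, fun h' => h h'.symm⟩
  · have hx : x ∈ s := by
      by_contra hs
      have hx : x ∉ t := by have := C.haU x; tauto
      rw [(hp x).2.2 hx, (C.h0 x).2.2 hs] at h
      exact h rfl
    have h1 : Q (p0 x) := by have := C.p0Q hx; tauto
    right
    simp only [fwd, hB, h, hQ, if_false]
    exact ⟨not_false, h1, trivial⟩

lemma pOf_perm (C : Core G PA PB β β' Q s t p0) {p : α → α} (hp : Inv G t p) :
    pOf Q t p0 (C.perm hp) = p := by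
  funext x
  have ht := C.ht x
  by_cases hx : x ∈ t
  · have hne : p x ≠ x := (G.ne_of_adj ((hp x).2.1 hx)).symm
    have happ : C.perm hp x = fwd PB β Q p0 p x := rfl
    have hsymm : (C.perm hp).symm x = fwd PA β' (fun x => ¬ Q x) p0 p x := rfl
    by_cases h : C.perm hp x = x
    · simp only [pOf, hx, h, if_true]
      have hB := C.fix_not_B (C.valid_perm hp) h
      have hs := C.mid (C.valid_perm hp) h hx
      by_contra hc
      have hc : p x ≠ p0 x := fun h' => hc h'.symm
      rw [happ] at h
      simp only [fwd, hB, hc, if_false] at h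
      split_ifs at h with hQ
      · exact hne h
      · exact (G.ne_of_adj ((C.h0 x).2.1 hs)).symm h
    · by_cases hQ : Q x
      · simp only [pOf, hx, h, hQ, if_true, if_false]
        rw [happ] at h ⊢
        have hB : ¬ PB x := by have := C.hbU x; tauto
        have hc : p x ≠ p0 x := by
          intro hc; apply h; simp [fwd, hB, hc]
        simp [fwd, hB, hc, hQ]
      · simp only [pOf, hx, h, hQ, if_true, if_false]
        rw [hsymm]
        have hA : ¬ PA x := by have := C.haU x; tauto
        have hc : p x ≠ p0 x := by
          intro hc; apply h
          rw [← Equiv.eq_symm_apply, hsymm]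
          simp [fwd, hA, hc]
        simp [fwd, hA, hc, hQ]
  · simp [pOf, hx, (hp x).2.2 hx]

lemma card_valid (C : Core G PA PB β β' Q s t p0) :
    Nat.card {p : α → α // Inv G t p} =
      Nat.card {σ : Equiv.Perm α // Valid (E G Q p0) PB β σ} := by
  refine Nat.card_congr
    { toFun := fun p => ⟨C.perm p.2, C.valid_perm p.2⟩
      invFun := fun σ => ⟨pOf Q t p0 σ.1, C.inv_pOf σ.2⟩
      left_inv := fun p => Subtype.ext (C.pOf_perm p.2)
      right_inv := fun σ => Subtype.ext (Equiv.ext fun x => C.fwd_pOf σ.2 x) }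

end Core

end DC
namespace DC
open Matrix

section det
variable {α : Type*} [Fintype α] [DecidableEq α] {k : ℕ}

open Classical in
noncomputable def MM (R : α → α → Prop) : Matrix α α ℤ :=
  fun x y => if x = y then 1 else if R x y then -1 else 0

open Classical in
noncomputable def MR (R : α → α → Prop) (PB : α → Prop) (β : α → α) : Matrix α α ℤ :=
  fun x => if PB x then Pi.single (β x) 1 else MM R x

lemma det_MR (R : α → α → Prop) (PB : α → Prop) (β : α → α)
    (hne : ∀ x, PB x → β x ≠ x)
    (hsep : ∀ σ, Valid R PB β σ → ∀ x y, PB x → PB y → σ.SameCycle x y → x = y)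
    (hac : ∀ σ, Valid R (fun _ => False) (fun x => x) σ → σ = 1) :
    (MR R PB β).det = Nat.card {σ : Equiv.Perm α // Valid R PB β σ} := by
  classical
  rw [Nat.card_eq_fintype_card, Fintype.card_subtype, ← Matrix.det_transpose, Matrix.det_apply',
    Finset.card_filter, Nat.cast_sum]
  refine Finset.sum_congr rfl fun σ _ => ?_
  simp only [Matrix.transpose_apply]
  split_ifs with hV
  · have h1 : ∀ x, MR R PB β x (σ x) = if (x ∈ σ.support ∧ ¬ PB x) then -1 else 1 := by
      intro x
      by_cases hB : PB x
      · simp [MR, hB, hV.1 x hB]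
      · by_cases hx : σ x = x
        · simp [MR, hB, hx, MM]
        · have h2 := (hV.2 x hB).resolve_left hx
          simp [MR, hB, hx, MM, h2, Ne.symm hx]
    rw [Finset.prod_congr rfl fun x _ => h1 x, Finset.prod_ite, Finset.prod_const, Finset.prod_const_one,
      mul_one, Equiv.Perm.sign_of_cycleType, Equiv.Perm.sum_cycleType]
    have hcard : σ.cycleType.card = (Finset.univ.filter PB).card := by
      rw [Equiv.Perm.cycleType_def, Multiset.card_map]
      symm
      refine Finset.card_bij (fun x _ => σ.cycleOf x) ?_ ?_ ?_
      · intro x hx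
        rw [Finset.mem_filter] at hx
        rw [Equiv.Perm.cycleOf_mem_cycleFactorsFinset_iff, Equiv.Perm.mem_support, hV.1 x hx.2]
        exact hne x hx.2
      · intro x hx y hy hxy
        rw [Finset.mem_filter] at hx hy
        have hxs : x ∈ σ.support := by
          rw [Equiv.Perm.mem_support, hV.1 x hx.2]; exact hne x hx.2
        have : x ∈ (σ.cycleOf x).support := by
          rw [Equiv.Perm.mem_support_cycleOf_iff]; exact ⟨Equiv.Perm.SameCycle.refl _ _, hxs⟩
        rw [hxy, Equiv.Perm.mem_support_cycleOf_iff] at this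
        exact (hsep σ hV y x hy.2 hx.2 this.1).symm
      · intro c hc
        by_contra hcon
        push Not at hcon
        have hc' := Equiv.Perm.mem_cycleFactorsFinset_iff.1 hc
        have hVc : Valid R (fun _ => False) (fun x => x) c := by
          refine ⟨fun _ h => h.elim, fun x _ => ?_⟩
          by_cases hx : c x = x
          · exact Or.inl hx
          · have hxc : x ∈ c.support := Equiv.Perm.mem_support.2 hx
            have h2 := hc'.2 x hxc
            have hB : ¬ PB x := by
              intro hB
              exact hcon x (by simp [hB]) (Equiv.Perm.cycle_is_cycleOf hxc hc).symm
            rw [h2] at hx ⊢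
            exact hV.2 x hB
        have := hac c hVc
        exact hc'.1.ne_one this
    have hsup : σ.support.card = (Finset.univ.filter (fun x => x ∈ σ.support ∧ ¬ PB x)).card
        + (Finset.univ.filter PB).card := by
      rw [← Finset.card_union_of_disjoint]
      · congr 1
        ext x
        simp only [Finset.mem_union, Finset.mem_filter, Finset.mem_univ, true_and]
        by_cases hB : PB x
        · have : x ∈ σ.support := by
            rw [Equiv.Perm.mem_support, hV.1 x hB]; exact hne x hB
          tauto
        · tauto
      · rw [Finset.disjoint_left]
        intro x hx hx'
        simp only [Finset.mem_filter] at hx hx'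
        exact hx.2.2 hx'.2
    rw [hcard, hsup]
    push_cast
    rw [← pow_add]
    exact Even.neg_one_pow ⟨(Finset.univ.filter (fun x => x ∈ σ.support ∧ ¬ PB x)).card
        + (Finset.univ.filter PB).card, by ring⟩
  · have : ∃ x, MR R PB β x (σ x) = 0 := by
      by_contra hcon
      push Not at hcon
      apply hV
      refine ⟨fun x hx => ?_, fun x hx => ?_⟩
      · by_contra hc
        apply hcon x
        simp [MR, hx, hc]
      · by_contra hc
        push Not at hc
        apply hcon x
        simp [MR, hx, MM, hc, Ne.symm hc.1]
    obtain ⟨x, hx⟩ := this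
    rw [Finset.prod_eq_zero (Finset.mem_univ x) hx]
    simp

lemma det_paths (M : Matrix α α ℤ) (hM : M.det = 1) (a b : Fin k → α)
    (hb : Function.Injective b) (N : Matrix α α ℤ)
    (hN1 : ∀ j, N (b j) = Pi.single (a j) 1) (hN2 : ∀ x, (∀ j, x ≠ b j) → N x = M x) :
    N.det = Matrix.det (Matrix.of fun i j : Fin k => M.adjugate (a i) (b j)) := by
  classical
  set X : Matrix α α ℤ := N * M.adjugate with hX
  have h1 : X.det = N.det := by
    rw [hX, det_mul, det_adjugate, hM, one_pow, mul_one]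
  have hX1 : ∀ j y, X (b j) y = M.adjugate (a j) y := by
    intro j y
    rw [hX, Matrix.mul_apply]
    simp only [hN1]
    simp [Pi.single_apply]
  have hX2 : ∀ x y, (∀ j, x ≠ b j) → X x y = (1 : Matrix α α ℤ) x y := by
    intro x y hx
    have := congrFun (congrFun (Matrix.mul_adjugate M) x) y
    rw [hM, one_smul] at this
    rw [hX, ← this, Matrix.mul_apply, Matrix.mul_apply, hN2 x hx]
  rw [← h1, Matrix.twoBlockTriangular_det X (fun x => x ∈ Set.range b)]
  · have h2 : X.toSquareBlockProp (fun x => ¬ x ∈ Set.range b) = 1 := by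
      ext x y
      have hx : ∀ j, x.1 ≠ b j := fun j h => x.2 ⟨j, h.symm⟩
      simp [Matrix.toSquareBlockProp_def, hX2 _ _ hx, Matrix.one_apply, Subtype.ext_iff]
    rw [h2, det_one, mul_one]
    have h3 : (Matrix.of fun i j : Fin k => M.adjugate (a i) (b j)) =
        (X.toSquareBlockProp (fun x => x ∈ Set.range b)).submatrix
          (Equiv.ofInjective b hb) (Equiv.ofInjective b hb) := by
      ext i j
      simp [Matrix.toSquareBlockProp_def, hX1]
    rw [h3]
    symm
    convert Matrix.det_submatrix_equiv_self (Equiv.ofInjective b hb)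
      (X.toSquareBlockProp (fun x => x ∈ Set.range b))
  · intro x hx y hy
    have hx' : ∀ j, x ≠ b j := fun j h => hx ⟨j, h.symm⟩
    rw [hX2 _ _ hx', Matrix.one_apply_ne]
    rintro rfl
    exact hx hy

end det
end DC
namespace DC

lemma strictMono_fin_id {n : ℕ} (f : Fin n → Fin n) (hf : StrictMono f) : ∀ i, f i = i := by
  intro i
  exact le_antisymm hf.apply_le hf.le_apply

lemma orbit_sep {α : Type*} [Finite α] {n : ℕ} (G : SimpleGraph α) (σ : Equiv.Perm α)
    (a b : Fin n → α) (ha : Function.Injective a) (hb : Function.Injective b)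
    (hab : ∀ i j, a i ≠ b j) (hσ : ∀ j, σ (b j) = a j)
    (hadj : ∀ x, (∀ j, x ≠ b j) → σ x = x ∨ G.Adj x (σ x))
    (S : Set α) (hS : ∀ x, x ∈ S → (∃ j, x = a j) ∨ ∃ j, x = b j)
    (hnc : ∀ i k l m, i < k → l < m → ¬ DisjointPaths G S (a i) (b m) (a k) (b l))
    (i j : Fin n) (hij : σ.SameCycle (b i) (b j)) : i = j := by
  classical
  have hex : ∀ j, ∃ K, ∃ l, (σ ^ K) (a j) = b l := by
    intro j
    obtain ⟨N, hN, hN'⟩ := (isOfFinOrder_of_finite σ).exists_pow_eq_one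
    refine ⟨N - 1, j, ?_⟩
    apply σ.injective
    rw [hσ, ← Equiv.Perm.mul_apply, ← pow_succ', Nat.sub_add_cancel hN, hN']
    rfl
  let K : Fin n → ℕ := fun j => Nat.find (hex j)
  have hK : ∀ j, ∃ l, (σ ^ (K j)) (a j) = b l := fun j => Nat.find_spec (hex j)
  have hnb : ∀ j m, m < K j → ∀ l, (σ ^ m) (a j) ≠ b l := by
    intro j m hm l h
    exact Nat.find_min (hex j) hm ⟨l, h⟩
  choose π hπ using hK
  have hna : ∀ j m, 0 < m → m ≤ K j → ∀ l, (σ ^ m) (a j) ≠ a l := by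
    intro j m hm hmK l h
    obtain ⟨m, rfl⟩ := Nat.exists_eq_succ_of_ne_zero hm.ne'
    rw [Nat.succ_eq_add_one, pow_succ', Equiv.Perm.mul_apply, ← hσ l] at h
    exact hnb j m (by omega) l (σ.injective h)
  have hd0 : ∀ j j' m m', m ≤ m' → m' ≤ K j' → (σ ^ m) (a j) = (σ ^ m') (a j') →
      j = j' ∧ m = m' := by
    intro j j' m m' hmm hm' h
    obtain ⟨d, rfl⟩ := Nat.exists_eq_add_of_le hmm
    rw [pow_add, Equiv.Perm.mul_apply] at h
    have h1 := (σ ^ m).injective h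
    rcases Nat.eq_zero_or_pos d with rfl | hd
    · exact ⟨ha (by simpa using h1), rfl⟩
    · exact absurd h1.symm (hna j' d hd (by omega) j)
  have hd : ∀ j j' m m', m ≤ K j → m' ≤ K j' → (σ ^ m) (a j) = (σ ^ m') (a j') →
      j = j' ∧ m = m' := by
    intro j j' m m' hm hm' h
    rcases le_total m m' with h1 | h1
    · exact hd0 j j' m m' h1 hm' h
    · have := hd0 j' j m' m h1 hm h.symm
      exact ⟨this.1.symm, this.2.symm⟩
  have hfix : ∀ j m, σ ((σ ^ m) (a j)) ≠ (σ ^ m) (a j) := by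
    intro j m h
    rw [← Equiv.Perm.mul_apply, ← pow_succ', pow_succ, Equiv.Perm.mul_apply] at h
    have h1 := (σ ^ m).injective h
    have h2 : σ (a j) = σ (b j) := by rw [h1, hσ]
    exact hab _ _ (σ.injective h2)
  have hwalk : ∀ j m, m ≤ K j → ∃ w : G.Walk (a j) ((σ ^ m) (a j)), w.IsPath ∧
      ∀ u, u ∈ w.support ↔ ∃ i ≤ m, u = (σ ^ i) (a j) := by
    intro j m
    induction m with
    | zero =>
      intro _
      refine ⟨SimpleGraph.Walk.nil, SimpleGraph.Walk.IsPath.nil, fun u => ?_⟩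
      show u ∈ [a j] ↔ _
      simp
    | succ m ih =>
      intro hm
      obtain ⟨w, hw, hws⟩ := ih (by omega)
      have hA : G.Adj ((σ ^ m) (a j)) ((σ ^ (m + 1)) (a j)) := by
        rw [pow_succ' σ m, Equiv.Perm.mul_apply]
        exact (hadj _ (hnb j m (by omega))).resolve_left (hfix j m)
      refine ⟨w.concat hA, hw.concat ?_ hA, fun u => ?_⟩
      · rw [hws]
        rintro ⟨i, hi, h⟩
        have := (hd j j (m + 1) i hm (by omega) h).2
        omega
      · rw [SimpleGraph.Walk.support_concat, List.mem_append, hws,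
          List.mem_singleton]
        constructor
        · rintro (⟨i, hi, h⟩ | h)
          · exact ⟨i, by omega, h⟩
          · exact ⟨m + 1, le_rfl, h⟩
        · rintro ⟨i, hi, h⟩
          rcases Nat.lt_or_ge i (m + 1) with h1 | h1
          · exact Or.inl ⟨i, by omega, h⟩
          · have : i = m + 1 := by omega
            subst this
            exact Or.inr h
  have hwalk2 : ∀ j, ∃ w : G.Walk (a j) (b (π j)), w.IsPath ∧
      ∀ u, u ∈ w.support ↔ ∃ i ≤ K j, u = (σ ^ i) (a j) := by
    intro j
    rw [← hπ j]
    exact hwalk j _ le_rfl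
  have havoid : ∀ j i, i ≤ K j → (σ ^ i) (a j) ≠ a j → (σ ^ i) (a j) ≠ b (π j) →
      (σ ^ i) (a j) ∉ S := by
    intro j i hi h1 h2 h3
    have h4 : i ≠ 0 := by rintro rfl; exact h1 rfl
    have h5 : i ≠ K j := by rintro rfl; exact h2 (hπ j)
    rcases hS _ h3 with ⟨l, h⟩ | ⟨l, h⟩
    · exact hna j i (by omega) hi l h
    · exact hnb j i (by omega) l h
  have hmono : StrictMono π := by
    intro j j' hjj
    by_contra hc
    rcases lt_or_eq_of_le (not_lt.1 hc) with h | h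
    · refine hnc j j' _ _ hjj h ?_
      obtain ⟨w, hw, hws⟩ := hwalk2 j
      obtain ⟨w', hw', hws'⟩ := hwalk2 j'
      refine ⟨w, w', hw, hw', ?_, ?_, ?_⟩
      · intro u hu hu'
        obtain ⟨i, hi, rfl⟩ := (hws u).1 hu
        obtain ⟨i', hi', h'⟩ := (hws' _).1 hu'
        exact hjj.ne (hd _ _ _ _ hi hi' h').1
      · intro u hu
        obtain ⟨i, hi, rfl⟩ := (hws u).1 hu
        exact havoid j i hi
      · intro u hu
        obtain ⟨i, hi, rfl⟩ := (hws' u).1 hu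
        exact havoid j' i hi
    · have h1 : (σ ^ K j) (a j) = (σ ^ K j') (a j') := by rw [hπ, hπ, h]
      exact hjj.ne (hd _ _ _ _ le_rfl le_rfl h1).1
  have hid := strictMono_fin_id π hmono
  have hsc : σ.SameCycle (a i) (a j) := by
    rw [← hσ, ← hσ, Equiv.Perm.sameCycle_apply_left, Equiv.Perm.sameCycle_apply_right]
    exact hij
  obtain ⟨N, hN⟩ := hsc.exists_nat_pow_eq
  have hcl : ∀ N, ∃ m ≤ K i, (σ ^ N) (a i) = (σ ^ m) (a i) := by
    intro N
    induction N with
    | zero => exact ⟨0, Nat.zero_le _, rfl⟩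
    | succ N ih =>
      obtain ⟨m, hm, h⟩ := ih
      rw [pow_succ', Equiv.Perm.mul_apply, h]
      rcases Nat.lt_or_ge m (K i) with h1 | h1
      · exact ⟨m + 1, h1, by rw [pow_succ', Equiv.Perm.mul_apply]⟩
      · have : m = K i := le_antisymm hm h1
        subst this
        refine ⟨0, Nat.zero_le _, ?_⟩
        rw [hπ, hid, hσ]
        rfl
  obtain ⟨m, hm, h⟩ := hcl N
  rw [hN] at h
  rcases Nat.eq_zero_or_pos m with rfl | h1
  · exact (ha (by simpa using h)).symm
  · exact absurd h.symm (hna i m h1 hm j)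

end DC
namespace DC

lemma count {α : Type*} [Fintype α] [DecidableEq α] {G : SimpleGraph α} {PA PB : α → Prop}
    {β β' : α → α} {Q : α → Prop} {s t : Finset α} {p0 : α → α}
    (C : Core G PA PB β β' Q s t p0)
    (hsep : ∀ σ, Valid (E G Q p0) PB β σ → ∀ x y, PB x → PB y → σ.SameCycle x y → x = y)
    (hac : ∀ σ, Valid (E G Q p0) (fun _ => False) (fun x => x) σ → σ = 1) :
    (MR (E G Q p0) PB β).det = pmCount G t := by
  rw [det_MR _ _ _ ?_ hsep hac, pmCount_eq, C.card_valid]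
  intro x hx h
  have := (C.hβ x hx).1
  rw [h] at this
  exact C.hab _ this hx

lemma acyclic {α : Type*} [Fintype α] [DecidableEq α] {G : SimpleGraph α}
    {Q : α → Prop} {s : Finset α} {p0 : α → α} (hU : ∀ x y, G.Adj x y → (Q x ↔ ¬ Q y))
    (h0 : Inv G s p0) (hone : pmCount G s = 1) (σ : Equiv.Perm α)
    (hσ : Valid (E G Q p0) (fun _ => False) (fun x => x) σ) : σ = 1 := by
  have C : Core G (fun _ => False) (fun _ => False) (fun x => x) (fun x => x) Q s s p0 :=
    { hU := hU, h0 := h0, hβ := fun _ h => h.elim, hβ' := fun _ h => h.elim,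
      hab := fun _ h => h.elim, haU := fun _ h => h.elim, hbU := fun _ h => h.elim,
      ht := fun x => by simp }
  have h1 := C.card_valid
  rw [← pmCount_eq, hone] at h1
  have h2 := (Nat.card_eq_one_iff_unique.1 h1.symm).1
  have h3 : Valid (E G Q p0) (fun _ => False) (fun x => x) (1 : Equiv.Perm α) :=
    ⟨fun _ h => h.elim, fun _ _ => Or.inl rfl⟩
  exact congrArg Subtype.val (h2.elim ⟨σ, hσ⟩ ⟨1, h3⟩)

open Classical in
noncomputable def bet {α : Type*} {n : ℕ} (a b : Fin n → α) (x : α) : α :=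
  if h : ∃ j, x = b j then a h.choose else x

lemma bet_apply {α : Type*} {n : ℕ} (a b : Fin n → α) (hb : Function.Injective b) (j : Fin n) :
    bet a b (b j) = a j := by
  have h : ∃ i, b j = b i := ⟨j, rfl⟩
  unfold bet
  rw [dif_pos h]
  have := hb h.choose_spec
  rw [← this]

lemma nc_apply {α : Type*} {n : ℕ} (G : SimpleGraph α) (a b : Fin n → α)
    (hnc : NoncrossingList G (List.ofFn a ++ (List.ofFn b).reverse))
    (i k l m : Fin n) (hik : i < k) (hlm : l < m) :
    ¬ DisjointPaths G {x | x ∈ List.ofFn a ++ (List.ofFn b).reverse}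
      (a i) (b m) (a k) (b l) := by
  have hlen : (List.ofFn a ++ (List.ofFn b).reverse).length = n + n := by simp
  have hA : ∀ i : Fin n, ∀ h, (List.ofFn a ++ (List.ofFn b).reverse).get ⟨i, h⟩ = a i := by
    intro i h
    simp [List.getElem_append]
  have hB : ∀ i : Fin n, ∀ h, (List.ofFn a ++ (List.ofFn b).reverse).get
      ⟨n + (n - 1 - i), h⟩ = b i := by
    intro i h
    simp [List.getElem_append]
    congr 1
    ext
    simp
    omega
  have := hnc ⟨i, by omega⟩ ⟨k, by omega⟩ ⟨n + (n - 1 - m), by omega⟩ ⟨n + (n - 1 - l), by omega⟩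
    (by simpa using hik) (by rw [Fin.mk_lt_mk]; omega)
    (by rw [Fin.mk_lt_mk]; have : (l : ℕ) < m := hlm; omega)
  rwa [hA, hA, hB, hB] at this

end DC

theorem determinant_condensation {α : Type*} [Fintype α] [DecidableEq α]
    (G : SimpleGraph α) (U V : Finset α) (hbip : IsBipartition G U V) (n : ℕ)
    (a b : Fin n → α)
    (hdist : (List.ofFn a ++ (List.ofFn b).reverse).Nodup)
    (hnc : NoncrossingList G (List.ofFn a ++ (List.ofFn b).reverse))
    (A B : Finset α) (hA : A = Finset.univ.image a) (hB : B = Finset.univ.image b)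
    (huniq : ∃! m : Finset (Sym2 α), IsPMOn G (Finset.univ \ ((A ∩ U) ∪ (B ∩ V))) m) :
    (pmCount G (Finset.univ \ ((A ∩ V) ∪ (B ∩ U))) : ℤ) =
      Matrix.det (Matrix.of fun i j : Fin n =>
        (pmCount G (symmDiff (Finset.univ \ ((A ∩ U) ∪ (B ∩ V))) {a i, b j}) : ℤ)) := by
  classical
  obtain ⟨hd1, hd2, hadj⟩ := hbip
  have hV : ∀ x, x ∈ V ↔ x ∉ U := by
    intro x
    have h1 : x ∈ U ∪ V := by rw [hd2]; exact Finset.mem_univ x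
    rw [Finset.mem_union] at h1
    have h2 : x ∈ U → x ∉ V := fun h => Finset.disjoint_left.1 hd1 h
    tauto
  have hU : ∀ x y, G.Adj x y → (x ∈ U ↔ ¬ y ∈ U) := by
    intro x y h
    have := hadj h
    rw [hV, hV] at this
    tauto
  rw [List.nodup_append] at hdist
  obtain ⟨hda, hdb, hdab⟩ := hdist
  have ha : Function.Injective a := List.nodup_ofFn.1 hda
  have hb : Function.Injective b := List.nodup_ofFn.1 (List.nodup_reverse.1 hdb)
  have hab : ∀ i j, a i ≠ b j := by
    intro i j
    exact hdab (a i) (by simp) (b j) (by simp)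
  have hmA : ∀ x, x ∈ A ↔ ∃ j, x = a j := by
    intro x; rw [hA]; simp [eq_comm]
  have hmB : ∀ x, x ∈ B ↔ ∃ j, x = b j := by
    intro x; rw [hB]; simp [eq_comm]
  have hAB : ∀ x, x ∈ A → x ∉ B := by
    intro x h1 h2
    obtain ⟨i, rfl⟩ := (hmA x).1 h1
    obtain ⟨j, h⟩ := (hmB _).1 h2
    exact hab i j h
  have hone : pmCount G (Finset.univ \ ((A ∩ U) ∪ (B ∩ V))) = 1 := by
    unfold pmCount
    rw [Nat.card_eq_one_iff_unique]
    obtain ⟨m, hm, hm'⟩ := huniq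
    exact ⟨⟨fun x y => Subtype.ext ((hm' _ x.2).trans (hm' _ y.2).symm)⟩, ⟨⟨m, hm⟩⟩⟩
  obtain ⟨m0, hm0, -⟩ := huniq
  obtain ⟨p0, h0, -⟩ := DC.exists_inv_of_isPM hm0
  have hs : ∀ x, x ∈ (Finset.univ \ ((A ∩ U) ∪ (B ∩ V))) ↔
      ¬ ((x ∈ A ∧ x ∈ U) ∨ (x ∈ B ∧ x ∉ U)) := by
    intro x; simp [hV]
  have ht : ∀ x, x ∈ (Finset.univ \ ((A ∩ V) ∪ (B ∩ U))) ↔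
      ¬ ((x ∈ A ∧ x ∉ U) ∨ (x ∈ B ∧ x ∈ U)) := by
    intro x; simp [hV]
  generalize (Finset.univ \ ((A ∩ U) ∪ (B ∩ V))) = s at *
  generalize (Finset.univ \ ((A ∩ V) ∪ (B ∩ U))) = t at *
  have haU : ∀ x, x ∈ A → (x ∈ U ↔ x ∉ s) := by
    intro x hx; have := hs x; have := hAB x; tauto
  have hbU : ∀ x, x ∈ B → (x ∈ U ↔ x ∈ s) := by
    intro x hx; have := hs x; have := hAB x; tauto
  have hac := DC.acyclic (Q := fun x => x ∈ U) hU h0 hone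
  -- the full family
  have C : DC.Core G (fun x => x ∈ A) (fun x => x ∈ B) (DC.bet a b) (DC.bet b a)
      (fun x => x ∈ U) s t p0 :=
    { hU := hU
      h0 := h0
      hβ := by
        intro x hx
        obtain ⟨j, rfl⟩ := (hmB x).1 hx
        rw [DC.bet_apply a b hb, DC.bet_apply b a ha]
        exact ⟨(hmA _).2 ⟨j, rfl⟩, rfl⟩
      hβ' := by
        intro x hx
        obtain ⟨j, rfl⟩ := (hmA x).1 hx
        rw [DC.bet_apply b a ha, DC.bet_apply a b hb]
        exact ⟨(hmB _).2 ⟨j, rfl⟩, rfl⟩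
      hab := hAB
      haU := haU
      hbU := hbU
      ht := by
        intro x
        have := hs x
        have := ht x
        have := hAB x
        tauto }
  have hC := DC.count C ?_ hac
  · rw [← hC]
    have hM : (DC.MM (DC.E G (fun x => x ∈ U) p0)).det = 1 := by
      have h1 : DC.MM (DC.E G (fun x => x ∈ U) p0) =
          DC.MR (DC.E G (fun x => x ∈ U) p0) (fun _ => False) (fun x => x) := by
        ext x y; simp [DC.MR]
      have C0 : DC.Core G (fun _ => False) (fun _ => False) (fun x => x) (fun x => x)
          (fun x => x ∈ U) s s p0 :=
        { hU := hU, h0 := h0, hβ := fun _ h => h.elim, hβ' := fun _ h => h.elim,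
          hab := fun _ h => h.elim, haU := fun _ h => h.elim, hbU := fun _ h => h.elim,
          ht := fun x => by simp }
      rw [h1, DC.count C0 (fun _ _ _ _ h => h.elim) hac, hone]
      rfl
    rw [DC.det_paths (DC.MM (DC.E G (fun x => x ∈ U) p0)) hM a b hb]
    · congr 1
      ext i j
      have C1 : DC.Core G (fun x => x = a i) (fun x => x = b j) (fun _ => a i) (fun _ => b j)
          (fun x => x ∈ U) s (symmDiff s {a i, b j}) p0 :=
        { hU := hU
          h0 := h0
          hβ := fun x hx => ⟨rfl, hx.symm⟩
          hβ' := fun x hx => ⟨rfl, hx.symm⟩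
          hab := by
            rintro x rfl h
            exact hab i j h
          haU := by
            rintro x rfl
            exact haU _ ((hmA _).2 ⟨i, rfl⟩)
          hbU := by
            rintro x rfl
            exact hbU _ ((hmB _).2 ⟨j, rfl⟩)
          ht := by
            intro x
            rw [Finset.mem_symmDiff, Finset.mem_insert, Finset.mem_singleton]
            tauto }
      simp only [Matrix.of_apply]
      rw [← DC.count C1 (fun _ _ x y hx hy _ => hx.trans hy.symm) hac, Matrix.adjugate_apply]
      congr 1
      ext x y
      by_cases hx : x = b j
      · subst hx; simp [DC.MR]
      · simp [DC.MR, hx]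
    · intro j
      have : b j ∈ B := (hmB _).2 ⟨j, rfl⟩
      simp [DC.MR, this, DC.bet_apply a b hb]
    · intro x hx
      have : x ∉ B := by
        rw [hmB]; rintro ⟨j, h⟩; exact hx j h
      simp [DC.MR, this]
  · intro σ hσ x y hx hy hxy
    obtain ⟨i, rfl⟩ := (hmB x).1 hx
    obtain ⟨j, rfl⟩ := (hmB y).1 hy
    rw [DC.orbit_sep G σ a b ha hb hab ?_ ?_ _ ?_ (DC.nc_apply G a b hnc) i j hxy]
    · intro j
      rw [hσ.1 _ ((hmB _).2 ⟨j, rfl⟩), DC.bet_apply a b hb]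
    · intro x hx
      have hxB : x ∉ B := by
        rw [hmB]; rintro ⟨j, h⟩; exact hx j h
      rcases hσ.2 x hxB with h | ⟨-, -, h, -⟩ | ⟨h1, h2, h3⟩
      · exact Or.inl h
      · exact Or.inr h
      · by_cases hxs : x ∈ s
        · rw [← h3]; exact Or.inr ((h0 x).2.1 hxs)
        · rw [← h3]; exact Or.inl ((h0 x).2.2 hxs)
    · intro x hx
      simp only [Set.mem_setOf_eq, List.mem_append, List.mem_reverse, List.mem_ofFn] at hx
      rcases hx with ⟨j, h⟩ | ⟨j, h⟩
      · exact Or.inl ⟨j, h.symm⟩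
      · exact Or.inr ⟨j, h.symm⟩
end

section
/- Let G be a finite simple bipartite graph with bipartition classes U and V, and let a_1,…,a_n, b_n,…,b_1 be distinct vertices with A = {a_1,…,a_n} ⊆ U and B = {b_1,…,b_n} ⊆ V, such that G is noncrossing with respect to the cyclic sequence (a_1,…,a_n, b_n,…,b_1). Let L = G−A−B, and for 1 ≤ i,j ≤ n let L_{ij} be the induced subgraph of G on V(L) ∪ {a_i, b_j}. If L has exactly one perfect matching, then M(G) = det[M(L_{ij})]_{1≤i,j≤n}. -/
section Helpers

open Equiv

lemma bip_ne {α : Type*} [Fintype α] [DecidableEq α] {G : SimpleGraph α} {U V : Finset α}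
    (hbip : IsBipartition G U V) {x y : α} (hx : x ∈ U) (hy : y ∈ V) : x ≠ y := by
  rintro rfl
  exact Finset.disjoint_left.1 hbip.1 hx hy

/-- matchings as permutations -/
lemma pm_perm {α : Type*} [Fintype α] [DecidableEq α]
    {G : SimpleGraph α} {U V : Finset α} (hbip : IsBipartition G U V)
    {J : Type*} [Fintype J] [DecidableEq J] (row col : J → α)
    (hrow : Function.Injective row) (hcol : Function.Injective col)
    (hU : ∀ j, row j ∈ U) (hV : ∀ j, col j ∈ V) (s : Finset α)
    (hs : ∀ v, v ∈ s ↔ (∃ j, v = row j) ∨ ∃ j, v = col j) :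
    pmCount G s = Nat.card {σ : Perm J // ∀ j, G.Adj (row j) (col (σ j))} := by
  have hrc : ∀ j k, row j ≠ col k := fun j k => bip_ne hbip (hU j) (hV k)
  have hkey : ∀ j k j' k', s(row j, col k) = s(row j', col k') → j = j' ∧ k = k' := by
    intro j k j' k' h
    rw [Sym2.eq_iff] at h
    rcases h with ⟨h1, h2⟩ | ⟨h1, h2⟩
    · exact ⟨hrow h1, hcol h2⟩
    · exact absurd h1 (hrc _ _)
  symm
  unfold pmCount
  refine Nat.card_eq_of_bijective
    (fun σ => ⟨Finset.univ.image (fun j => s(row j, col (σ.1 j))), ?_, ?_⟩) ⟨?_, ?_⟩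
  · intro e he
    obtain ⟨j, -, rfl⟩ := Finset.mem_image.1 he
    refine ⟨σ.2 j, ?_⟩
    intro v hv
    rw [Sym2.mem_iff] at hv
    rw [hs]
    rcases hv with rfl | rfl
    · exact Or.inl ⟨_, rfl⟩
    · exact Or.inr ⟨_, rfl⟩
  · intro v hv
    rw [hs] at hv
    rcases hv with ⟨j, rfl⟩ | ⟨j, rfl⟩
    · refine ⟨s(row j, col (σ.1 j)), ⟨Finset.mem_image_of_mem _ (Finset.mem_univ _), by simp⟩, ?_⟩
      rintro e ⟨he, hv⟩
      obtain ⟨k, -, rfl⟩ := Finset.mem_image.1 he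
      rcases Sym2.mem_iff.1 hv with h | h
      · rw [hrow h]
      · exact absurd h (hrc _ _)
    · refine ⟨s(row (σ.1.symm j), col (σ.1 (σ.1.symm j))),
        ⟨Finset.mem_image_of_mem _ (Finset.mem_univ _), by simp⟩, ?_⟩
      rintro e ⟨he, hv⟩
      obtain ⟨k, -, rfl⟩ := Finset.mem_image.1 he
      rcases Sym2.mem_iff.1 hv with h | h
      · exact absurd h.symm (hrc _ _)
      · rw [hcol h]; simp
  · intro σ τ h
    replace h := congrArg Subtype.val h
    simp only at h
    apply Subtype.ext
    ext j : 1
    have : s(row j, col (σ.1 j)) ∈ Finset.univ.image (fun j => s(row j, col (τ.1 j))) := by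
      rw [← h]; exact Finset.mem_image_of_mem (fun j => s(row j, col (σ.1 j))) (Finset.mem_univ j)
    obtain ⟨k, -, hk⟩ := Finset.mem_image.1 this
    obtain ⟨h1, h2⟩ := hkey _ _ _ _ hk
    rw [← h2, h1]
  · rintro ⟨m, hm1, hm2⟩
    have hf : ∀ j, ∃ k, s(row j, col k) ∈ m := by
      intro j
      obtain ⟨e, ⟨he, hje⟩, -⟩ := hm2 (row j) ((hs _).2 (Or.inl ⟨_, rfl⟩))
      obtain ⟨y, rfl⟩ := Sym2.mem_iff_exists.1 hje
      obtain ⟨hadj, hmem⟩ := hm1 _ he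
      have hy := (hs y).1 (hmem y (by simp))
      have hadj' : G.Adj (row j) y := hadj
      rcases hy with ⟨k, rfl⟩ | ⟨k, rfl⟩
      · rcases hbip.2.2 hadj' with h | h
        · exact absurd rfl (bip_ne hbip (hU k) h.2)
        · exact absurd rfl (bip_ne hbip (hU j) h.1)
      · exact ⟨k, he⟩
    choose f hf using hf
    have hinj : Function.Injective f := by
      intro j k hjk
      obtain ⟨e, -, hu⟩ := hm2 (col (f j)) ((hs _).2 (Or.inr ⟨_, rfl⟩))
      have h1 := hu _ ⟨hf j, by simp⟩
      have h2 := hu _ ⟨hf k, by simp [hjk]⟩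
      exact (hkey _ _ _ _ (h1.trans h2.symm)).1
    have hbij := Finite.injective_iff_bijective.1 hinj
    refine ⟨⟨Equiv.ofBijective f hbij, fun j => (hm1 _ (hf j)).1⟩, ?_⟩
    apply Subtype.ext
    ext e
    simp only [Finset.mem_image, Finset.mem_univ, true_and, Equiv.ofBijective_apply]
    constructor
    · rintro ⟨j, rfl⟩; exact hf j
    · intro he
      have hex : ∃ j, row j ∈ e := by
        obtain ⟨hadj, hmem⟩ := hm1 _ he
        induction e using Sym2.ind with
        | _ x y =>
          rcases (hs x).1 (hmem x (by simp)) with ⟨j, rfl⟩ | ⟨j, rfl⟩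
          · exact ⟨j, by simp⟩
          · rcases (hs y).1 (hmem y (by simp)) with ⟨k, rfl⟩ | ⟨k, rfl⟩
            · exact ⟨k, by simp⟩
            · have hadj' : G.Adj (col j) (col k) := hadj
              rcases hbip.2.2 hadj' with h | h
              · exact absurd rfl (bip_ne hbip h.1 (hV j))
              · exact absurd rfl (bip_ne hbip h.2 (hV k))
      obtain ⟨j, hj⟩ := hex
      obtain ⟨e', -, hu⟩ := hm2 (row j) ((hs _).2 (Or.inl ⟨_, rfl⟩))
      exact ⟨j, (hu _ ⟨hf j, by simp⟩).trans (hu _ ⟨he, hj⟩).symm⟩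

lemma exists_walk_aux {α : Type*} {G : SimpleGraph α} {I K : Type*}
    (p q : I → α) (a b : K → α) (hpq : ∀ i, G.Adj (p i) (q i)) (σ : Perm (I ⊕ K))
    (hσ : ∀ j, G.Adj (Sum.elim p a j) (Sum.elim q b (σ j))) (r : I ⊕ K) (k : ℕ)
    (hk : ∀ t, 0 < t → t < k + 1 → ∃ c, (σ ^ t) r = Sum.inl c) :
    ∃ w : G.Walk (Sum.elim p a r) (Sum.elim q b ((σ ^ (k + 1)) r)), ∀ v ∈ w.support,
      (∃ t, t < k + 1 ∧ v = Sum.elim p a ((σ ^ t) r)) ∨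
      (∃ t, 0 < t ∧ t ≤ k + 1 ∧ v = Sum.elim q b ((σ ^ t) r)) := by
  induction k with
  | zero =>
    have h := hσ r
    refine ⟨SimpleGraph.Walk.cons (by simpa using h) SimpleGraph.Walk.nil, ?_⟩
    intro v hv
    simp only [SimpleGraph.Walk.support_cons, SimpleGraph.Walk.support_nil, List.mem_cons,
      List.not_mem_nil, or_false] at hv
    rcases hv with rfl | rfl
    · exact Or.inl ⟨0, by simp, by simp⟩
    · exact Or.inr ⟨1, by simp, by simp, by simp⟩
  | succ k ih =>
    obtain ⟨w, hw⟩ := ih (fun t h0 h1 => hk t h0 (by omega))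
    obtain ⟨c, hc⟩ := hk (k + 1) (by omega) (by omega)
    have h1 : G.Adj (Sum.elim q b ((σ ^ (k + 1)) r)) (Sum.elim p a ((σ ^ (k + 1)) r)) := by
      rw [hc]; exact (hpq c).symm
    have h2 : G.Adj (Sum.elim p a ((σ ^ (k + 1)) r)) (Sum.elim q b ((σ ^ (k + 1 + 1)) r)) := by
      rw [pow_succ' σ (k + 1)]; exact hσ _
    refine ⟨(w.concat h1).concat h2, ?_⟩
    intro v hv
    simp only [SimpleGraph.Walk.support_concat, List.concat_eq_append, List.mem_append,
      List.mem_singleton] at hv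
    rcases hv with (hv | rfl) | rfl
    · rcases hw v hv with ⟨t, h, h'⟩ | ⟨t, h, h', h''⟩
      · exact Or.inl ⟨t, by omega, h'⟩
      · exact Or.inr ⟨t, h, by omega, h''⟩
    · exact Or.inl ⟨k + 1, by omega, rfl⟩
    · exact Or.inr ⟨k + 1 + 1, by omega, le_rfl, rfl⟩

/-- first return -/
lemma first_return {I K : Type*} [Finite I] [Finite K] (σ : Perm (I ⊕ K)) (i : K) :
    ∃ k : ℕ, ∃ j : K, (σ ^ (k + 1)) (Sum.inr i) = Sum.inr j ∧
      ∀ t, 0 < t → t < k + 1 → ∃ c, (σ ^ t) (Sum.inr i) = Sum.inl c := by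
  classical
  have hex : ∃ k : ℕ, ∃ j : K, (σ ^ (k + 1)) (Sum.inr i) = Sum.inr j := by
    refine ⟨orderOf σ - 1, i, ?_⟩
    have : orderOf σ - 1 + 1 = orderOf σ := Nat.sub_add_cancel (orderOf_pos σ)
    rw [this, pow_orderOf_eq_one]; rfl
  refine ⟨Nat.find hex, (Nat.find_spec hex).choose, (Nat.find_spec hex).choose_spec, ?_⟩
  intro t h0 h1
  have := Nat.find_min hex (m := t - 1) (by omega)
  rw [Nat.sub_add_cancel h0] at this
  cases h : (σ ^ t) (Sum.inr i) with
  | inl c => exact ⟨c, rfl⟩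
  | inr j => exact absurd ⟨j, h⟩ this

lemma no_meet {I K : Type*} (σ : Perm (I ⊕ K)) (i j : K) (t t' kj : ℕ) (htt : t ≤ t')
    (hj : ∀ t, 0 < t → t < kj → ∃ c, (σ ^ t) (Sum.inr j) = Sum.inl c)
    (hlt : t' - t < kj) (h : (σ ^ t) (Sum.inr i) = (σ ^ t') (Sum.inr j)) : i = j := by
  have h1 : (σ ^ (t' - t)) (Sum.inr j) = Sum.inr i := by
    apply (σ ^ t).injective
    rw [h, ← Perm.mul_apply, ← pow_add, Nat.add_sub_cancel' htt]
  rcases Nat.eq_zero_or_pos (t' - t) with h0 | h0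
  · rw [h0] at h1
    simpa using h1.symm
  · obtain ⟨c, hc⟩ := hj _ h0 hlt
    rw [hc] at h1
    exact absurd h1 (by simp)

lemma no_meet' {I K : Type*} (σ : Perm (I ⊕ K)) (i j : K) (t t' ki kj : ℕ)
    (hi : ∀ t, 0 < t → t < ki → ∃ c, (σ ^ t) (Sum.inr i) = Sum.inl c)
    (hj : ∀ t, 0 < t → t < kj → ∃ c, (σ ^ t) (Sum.inr j) = Sum.inl c)
    (hlt : t' - t < kj) (hlt' : t - t' < ki)
    (h : (σ ^ t) (Sum.inr i) = (σ ^ t') (Sum.inr j)) : i = j := by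
  rcases le_total t t' with h0 | h0
  · exact no_meet σ i j t t' kj h0 hj hlt h
  · exact (no_meet σ j i t' t ki h0 hi hlt' h.symm).symm

lemma sameCycle_inr {α : Type*} [Fintype α] [DecidableEq α]
    {G : SimpleGraph α} {U V : Finset α} (hbip : IsBipartition G U V)
    {I : Type*} [Fintype I] [DecidableEq I] {n : ℕ} (p q : I → α) (a b : Fin n → α)
    (hrow : Function.Injective (Sum.elim p a)) (hcol : Function.Injective (Sum.elim q b))
    (hU : ∀ j, Sum.elim p a j ∈ U) (hV : ∀ j, Sum.elim q b j ∈ V)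
    (hpq : ∀ i, G.Adj (p i) (q i))
    (hnc : NoncrossingList G (List.ofFn a ++ (List.ofFn b).reverse))
    (σ : Perm (I ⊕ Fin n)) (hσ : ∀ j, G.Adj (Sum.elim p a j) (Sum.elim q b (σ j)))
    (i j : Fin n) (hij : σ.SameCycle (Sum.inr i) (Sum.inr j)) : i = j := by
  have hrc : ∀ j k, Sum.elim p a j ≠ Sum.elim q b k := fun j k => bip_ne hbip (hU j) (hV k)
  choose k π hπ hk using fun i => first_return σ i
  -- paths
  have hpath : ∀ i, ∃ w : G.Walk (a i) (b (π i)), w.IsPath ∧ ∀ v ∈ w.support,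
      (∃ t, t < k i + 1 ∧ v = Sum.elim p a ((σ ^ t) (Sum.inr i))) ∨
      (∃ t, 0 < t ∧ t ≤ k i + 1 ∧ v = Sum.elim q b ((σ ^ t) (Sum.inr i))) := by
    intro i
    obtain ⟨w, hw⟩ := exists_walk_aux p q a b hpq σ hσ (Sum.inr i) (k i) (hk i)
    have e : Sum.elim q b ((σ ^ (k i + 1)) (Sum.inr i)) = b (π i) := by rw [hπ]; rfl
    have e0 : Sum.elim p a (Sum.inr i) = a i := rfl
    refine ⟨((w.copy e0 e).bypass : G.Walk (a i) (b (π i))),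
      SimpleGraph.Walk.bypass_isPath _, fun v hv => hw v ?_⟩
    have := SimpleGraph.Walk.support_bypass_subset_support _ hv
    have h2 := SimpleGraph.Walk.support_copy w e0 e
    exact h2 ▸ this
  have hinternal : ∀ i v, ((∃ t, t < k i + 1 ∧ v = Sum.elim p a ((σ ^ t) (Sum.inr i))) ∨
      (∃ t, 0 < t ∧ t ≤ k i + 1 ∧ v = Sum.elim q b ((σ ^ t) (Sum.inr i)))) →
      v ≠ a i → v ≠ b (π i) → v ∉ {x | x ∈ List.ofFn a ++ (List.ofFn b).reverse} := by
    intro i v hv h1 h2 hmem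
    simp only [Set.mem_setOf_eq, List.mem_append, List.mem_ofFn, List.mem_reverse,
      Set.mem_range] at hmem
    rcases hv with ⟨t, ht, rfl⟩ | ⟨t, ht0, ht, rfl⟩
    · have ht0 : 0 < t := by
        rcases Nat.eq_zero_or_pos t with rfl | h
        · exact absurd (by simp) h1
        · exact h
      obtain ⟨c, hc⟩ := hk i t ht0 ht
      rcases hmem with ⟨l, hl⟩ | ⟨l, hl⟩
      · have := hrow (a₁ := Sum.inr l) hl
        rw [hc] at this; exact absurd this (by simp)
      · exact hrc _ (Sum.inr l) hl.symm
    · have ht1 : t < k i + 1 := by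
        rcases Nat.lt_or_eq_of_le ht with h | rfl
        · exact h
        · rw [hπ] at h2; exact absurd rfl h2
      obtain ⟨c, hc⟩ := hk i t ht0 ht1
      rcases hmem with ⟨l, hl⟩ | ⟨l, hl⟩
      · exact hrc (Sum.inr l) _ hl
      · have := hcol (a₁ := Sum.inr l) hl
        rw [hc] at this; exact absurd this (by simp)
  have hπinj : Function.Injective π := by
    intro x y hxy
    refine no_meet' σ x y (k x + 1) (k y + 1) (k x + 1) (k y + 1) (hk x) (hk y)
      (by omega) (by omega) ?_
    rw [hπ, hπ, hxy]
  have hmono : StrictMono π := by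
    intro x y hxy
    by_contra hle
    have hlt : π y < π x := lt_of_le_of_ne (not_lt.1 hle) (fun h => hxy.ne' (hπinj h))
    obtain ⟨w, hwp, hw⟩ := hpath x
    obtain ⟨w', hwp', hw'⟩ := hpath y
    have hlen : (List.ofFn a ++ (List.ofFn b).reverse).length = n + n := by simp
    have hx := x.2
    have hy := y.2
    have hpx := (π x).2
    have hpy := (π y).2
    have hxy' : x.1 < y.1 := hxy
    have hlt' : (π y).1 < (π x).1 := hlt
    have ga : ∀ (z : Fin n) (h), (List.ofFn a ++ (List.ofFn b).reverse).get ⟨z.1, h⟩ = a z := by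
      intro z h
      rw [List.get_eq_getElem, List.getElem_append_left (by simp)]
      simp
    have gb : ∀ (z : Fin n) (h), (List.ofFn a ++ (List.ofFn b).reverse).get
        ⟨n + (n - 1 - z.1), h⟩ = b z := by
      intro z h
      rw [List.get_eq_getElem, List.getElem_append_right (by simp)]
      simp only [List.getElem_reverse, List.getElem_ofFn]
      congr 1
      apply Fin.ext
      have := z.2
      simp
      omega
    have := hnc ⟨x.1, by omega⟩ ⟨y.1, by omega⟩ ⟨n + (n - 1 - (π x).1), by omega⟩
      ⟨n + (n - 1 - (π y).1), by omega⟩ hxy (by simp only [Fin.mk_lt_mk]; omega)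
      (by simp only [Fin.mk_lt_mk]; omega)
    rw [ga, ga, gb, gb] at this
    refine this ⟨w, w', hwp, hwp', ?_, ?_, ?_⟩
    · intro u hu hu'
      apply hxy.ne
      rcases hw u hu with ⟨t, ht, rfl⟩ | ⟨t, ht0, ht, rfl⟩
      · rcases hw' _ hu' with ⟨s, hs, he⟩ | ⟨s, hs0, hs, he⟩
        · exact no_meet' σ x y t s _ _ (hk x) (hk y) (by omega) (by omega) (hrow he)
        · exact absurd he (hrc _ _)
      · rcases hw' _ hu' with ⟨s, hs, he⟩ | ⟨s, hs0, hs, he⟩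
        · exact absurd he.symm (hrc _ _)
        · exact no_meet' σ x y t s _ _ (hk x) (hk y) (by omega) (by omega) (hcol he)
    · intro u hu; exact hinternal x u (hw u hu)
    · intro u hu; exact hinternal y u (hw' u hu)
  have hid : ∀ x, π x = x := by
    have hs := Finite.injective_iff_surjective.1 hπinj
    have : (StrictMono.orderIsoOfSurjective π hmono hs) = OrderIso.refl _ := Subsingleton.elim _ _
    intro x
    exact congrArg (fun e : Fin n ≃o Fin n => e x) this
  obtain ⟨m, hm⟩ := hij.exists_nat_pow_eq
  clear hij
  induction m using Nat.strong_induction_on with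
  | _ m ih =>
    rcases Nat.eq_zero_or_pos m with rfl | h0
    · simpa using hm
    · rcases Nat.lt_or_ge m (k i + 1) with h1 | h1
      · obtain ⟨c, hc⟩ := hk i m h0 h1
        rw [hc] at hm; exact absurd hm (by simp)
      · apply ih (m - (k i + 1)) (by omega)
        rw [← hm]
        conv_rhs => rw [← Nat.sub_add_cancel h1, pow_add, Perm.mul_apply, hπ, hid]

lemma sign_lemma {I K : Type*} [Fintype I] [DecidableEq I] [Fintype K] [DecidableEq K]
    (σ : Perm (I ⊕ K))
    (h1 : ∀ i j : K, σ.SameCycle (Sum.inr i) (Sum.inr j) → i = j)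
    (h2 : ∀ c ∈ σ.cycleFactorsFinset, ∃ i : K, (Sum.inr i : I ⊕ K) ∈ c.support) :
    ((Perm.sign σ : ℤˣ) : ℤ) *
      ∏ r, (if (σ r).isLeft = true ∧ σ r ≠ r then (-1 : ℤ) else 1) = 1 := by
  have hR : (σ.support.filter (fun x => ¬ x.isLeft = true)).card = σ.cycleFactorsFinset.card := by
    refine Finset.card_bij (fun x _ => σ.cycleOf x) ?_ ?_ ?_
    · intro x hx
      exact Perm.cycleOf_mem_cycleFactorsFinset_iff.2 (Finset.mem_filter.1 hx).1
    · intro x hx y hy hxy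
      obtain ⟨hx1, hx2⟩ := Finset.mem_filter.1 hx
      obtain ⟨hy1, hy2⟩ := Finset.mem_filter.1 hy
      rcases x with x | x
      · simp at hx2
      rcases y with y | y
      · simp at hy2
      congr 1
      apply h1
      have : Sum.inr y ∈ (σ.cycleOf (Sum.inr x)).support := by
        rw [hxy, Perm.mem_support_cycleOf_iff]
        exact ⟨Perm.SameCycle.refl _ _, hy1⟩
      exact (Perm.mem_support_cycleOf_iff.1 this).1
    · intro c hc
      obtain ⟨i, hi⟩ := h2 c hc
      refine ⟨Sum.inr i, Finset.mem_filter.2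
        ⟨Perm.mem_cycleFactorsFinset_support_le hc hi, by simp⟩, ?_⟩
      exact (Perm.cycle_is_cycleOf hi hc).symm
  have hP : ∏ r, (if (σ r).isLeft = true ∧ σ r ≠ r then (-1 : ℤ) else 1)
      = (-1) ^ (σ.support.filter (fun x => x.isLeft = true)).card := by
    have : ∀ r, (if (σ r).isLeft = true ∧ σ r ≠ r then (-1 : ℤ) else 1)
      = (fun x : I ⊕ K => if x.isLeft = true ∧ σ x ≠ x then (-1 : ℤ) else 1) (σ r) := by
      intro r
      simp [σ.injective.eq_iff]
    rw [Finset.prod_congr rfl (fun r _ => this r), Equiv.prod_comp σ (fun x : I ⊕ K => if x.isLeft = true ∧ σ x ≠ x then (-1 : ℤ) else 1),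
      Finset.prod_ite]
    simp only [Finset.prod_const, one_pow, mul_one]
    congr 2
    ext x
    simp [and_comm]
  rw [hP, Perm.sign_of_cycleType, Perm.sum_cycleType]
  have hc : Multiset.card σ.cycleType = σ.cycleFactorsFinset.card := by
    simp [Perm.cycleType_def]
  have hsplit := Finset.card_filter_add_card_filter_not (s := σ.support)
    (fun x : I ⊕ K => x.isLeft = true)
  rw [hc, ← hR, ← hsplit]
  push_cast
  rw [← pow_add]
  apply Even.neg_one_pow
  rw [Nat.even_iff]
  omega

lemma cycle_has_inr {α : Type*} {G : SimpleGraph α} {I K : Type*} [Fintype I] [DecidableEq I]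
    [Fintype K] [DecidableEq K] (p q : I → α) (a b : K → α)
    (hpq : ∀ i, G.Adj (p i) (q i))
    (huniq : ∀ τ : Perm I, (∀ i, G.Adj (p i) (q (τ i))) → τ = 1)
    (σ : Perm (I ⊕ K)) (hσ : ∀ j, G.Adj (Sum.elim p a j) (Sum.elim q b (σ j)))
    (c : Perm (I ⊕ K)) (hc : c ∈ σ.cycleFactorsFinset) :
    ∃ i : K, (Sum.inr i : I ⊕ K) ∈ c.support := by
  by_contra hno
  push Not at hno
  have hfix : ∀ i : K, c (Sum.inr i) = Sum.inr i := fun i => by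
    simpa using hno i
  have hmaps : Set.MapsTo c (Set.range Sum.inl) (Set.range (Sum.inl : I → I ⊕ K)) := by
    rintro _ ⟨x, rfl⟩
    cases h : c (Sum.inl x) with
    | inl y => exact ⟨y, rfl⟩
    | inr y =>
      have := c.injective (h.trans (hfix y).symm)
      exact absurd this (by simp)
  obtain ⟨⟨τ, τ'⟩, hτ⟩ := Perm.mem_sumCongrHom_range_of_perm_mapsTo_inl hmaps
  have hτ1 : ∀ i, c (Sum.inl i) = Sum.inl (τ i) := by
    intro i; rw [← hτ]; simp
  obtain ⟨hcyc, hcs⟩ := Perm.mem_cycleFactorsFinset_iff.1 hc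
  have : τ = 1 := by
    apply huniq
    intro i
    by_cases hi : Sum.inl i ∈ c.support
    · have h := hσ (Sum.inl i)
      rw [← hcs _ hi, hτ1] at h
      exact h
    · have : c (Sum.inl i) = Sum.inl i := by simpa using hi
      rw [hτ1] at this
      rw [Sum.inl_injective this]; exact hpq i
  apply hcyc.ne_one
  ext x : 1
  rcases x with x | x
  · rw [hτ1, this]; rfl
  · rw [hfix]; rfl

open Classical in
/-- signed block matrix -/
noncomputable def kMat {α : Type*} (G : SimpleGraph α) {I K : Type*}
    (p q : I → α) (a b : K → α) : Matrix (I ⊕ K) (I ⊕ K) ℤ :=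
  Matrix.fromBlocks
    (Matrix.of fun c r => if G.Adj (p r) (q c) then (if c ≠ r then -1 else 1) else 0)
    (Matrix.of fun c i => if G.Adj (a i) (q c) then -1 else 0)
    (Matrix.of fun j r => if G.Adj (p r) (b j) then 1 else 0)
    (Matrix.of fun j i => if G.Adj (a i) (b j) then 1 else 0)

lemma kMat_det {α : Type*} [Fintype α] [DecidableEq α]
    {G : SimpleGraph α} {U V : Finset α} (hbip : IsBipartition G U V)
    {I : Type*} [Fintype I] [DecidableEq I] {n : ℕ} (p q : I → α) (a b : Fin n → α)
    (hrow : Function.Injective (Sum.elim p a)) (hcol : Function.Injective (Sum.elim q b))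
    (hU : ∀ j, Sum.elim p a j ∈ U) (hV : ∀ j, Sum.elim q b j ∈ V)
    (hpq : ∀ i, G.Adj (p i) (q i))
    (huniq : ∀ τ : Perm I, (∀ i, G.Adj (p i) (q (τ i))) → τ = 1)
    (hnc : NoncrossingList G (List.ofFn a ++ (List.ofFn b).reverse))
    (s : Finset α)
    (hs : ∀ v, v ∈ s ↔ (∃ j, v = Sum.elim p a j) ∨ ∃ j, v = Sum.elim q b j) :
    (pmCount G s : ℤ) = (kMat G p q a b).det := by
  classical
  rw [pm_perm hbip (Sum.elim p a) (Sum.elim q b) hrow hcol hU hV s hs, Matrix.det_apply',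
    Nat.card_eq_fintype_card, Fintype.card_subtype, Finset.card_filter]
  push_cast
  refine Finset.sum_congr rfl fun σ _ => ?_
  have hent : ∀ c r, kMat G p q a b c r = if G.Adj (Sum.elim p a r) (Sum.elim q b c) then
      (if c.isLeft = true ∧ c ≠ r then -1 else 1) else 0 := by
    rintro (c | c) (r | r) <;> simp [kMat]
    congr
  split_ifs with hσ
  · rw [← sign_lemma σ
      (fun i j hij => sameCycle_inr hbip p q a b hrow hcol hU hV hpq hnc σ hσ i j hij)
      (fun c hc => cycle_has_inr p q a b hpq huniq σ hσ c hc)]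
    congr 1
    refine Finset.prod_congr rfl fun r _ => ?_
    rw [hent, if_pos (hσ r)]
  · push Not at hσ
    obtain ⟨j, hj⟩ := hσ
    rw [Finset.prod_eq_zero (Finset.mem_univ j), mul_zero]
    rw [hent, if_neg hj]

lemma noncrossing_short {α : Type*} (G : SimpleGraph α) (L : List α) (h : L.length < 4) :
    NoncrossingList G L := by
  intro i j k l hij hjk hkl
  have := l.2
  have h1 : i.1 < j.1 := hij
  have h2 : j.1 < k.1 := hjk
  have h3 : k.1 < l.1 := hkl
  omega

end Helpers

/-- (Corollary 4.2.) Determinant condensation with `A ⊆ U`, `B ⊆ V`. -/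
theorem determinant_condensation_M_G {α : Type*} [Fintype α] [DecidableEq α]
    (G : SimpleGraph α) (U V : Finset α) (hbip : IsBipartition G U V) (n : ℕ)
    (a b : Fin n → α)
    (hdist : (List.ofFn a ++ (List.ofFn b).reverse).Nodup)
    (hnc : NoncrossingList G (List.ofFn a ++ (List.ofFn b).reverse))
    (A B : Finset α) (hA : A = Finset.univ.image a) (hB : B = Finset.univ.image b)
    (hAU : A ⊆ U) (hBV : B ⊆ V)
    (huniq : ∃! m : Finset (Sym2 α), IsPMOn G (Finset.univ \ (A ∪ B)) m) :
    (pmCount G Finset.univ : ℤ) =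
      Matrix.det (Matrix.of fun i j : Fin n =>
        (pmCount G ((Finset.univ \ (A ∪ B)) ∪ {a i, b j}) : ℤ)) := by
  classical
  have hcard : pmCount G (Finset.univ \ (A ∪ B)) = 1 := by
    obtain ⟨m, hm, hu⟩ := huniq
    exact Nat.card_eq_one_iff_unique.2
      ⟨⟨fun x y => Subtype.ext ((hu _ x.2).trans (hu _ y.2).symm)⟩, ⟨⟨m, hm⟩⟩⟩
  obtain ⟨m, ⟨hm1, hm2⟩, -⟩ := huniq
  rw [List.nodup_append] at hdist
  have ha : Function.Injective a := List.nodup_ofFn.1 hdist.1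
  have hb : Function.Injective b := List.nodup_ofFn.1 (List.nodup_reverse.1 hdist.2.1)
  set sL := Finset.univ \ (A ∪ B) with hsL
  have haA : ∀ i, a i ∈ A := fun i => by rw [hA]; simp
  have hbB : ∀ i, b i ∈ B := fun i => by rw [hB]; simp
  have hmemL : ∀ v, v ∈ sL ↔ v ∉ A ∧ v ∉ B := fun v => by simp [hsL]
  -- rows of L
  let I := {u : α // u ∈ sL ∧ u ∈ U}
  have hmate : ∀ u : I, ∃ v, s(u.1, v) ∈ m := by
    intro u
    obtain ⟨e, ⟨he, hu⟩, -⟩ := hm2 u.1 u.2.1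
    obtain ⟨y, rfl⟩ := Sym2.mem_iff_exists.1 hu
    exact ⟨y, he⟩
  choose q hq using hmate
  let p : I → α := Subtype.val
  have hpq : ∀ i, G.Adj (p i) (q i) := fun i => (hm1 _ (hq i)).1
  have hqV : ∀ i, q i ∈ V := by
    intro i
    rcases hbip.2.2 (hpq i) with h | h
    · exact h.2
    · exact absurd rfl (bip_ne hbip i.2.2 h.1)
  have hqL : ∀ i, q i ∈ sL := fun i => (hm1 _ (hq i)).2 _ (by simp)
  have hpinj : Function.Injective p := Subtype.val_injective
  have hqinj : Function.Injective q := by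
    intro x y hxy
    obtain ⟨e, -, hu⟩ := hm2 (q x) (hqL x)
    have h := (hu _ ⟨hq x, by simp⟩).trans (hu _ ⟨hq y, by simp [hxy]⟩).symm
    rw [Sym2.eq_iff] at h
    rcases h with h | h
    · exact Subtype.ext h.1
    · exact absurd h.1 (bip_ne hbip x.2.2 (hqV y))
  have hsL' : ∀ v, v ∈ sL ↔ (∃ i, v = p i) ∨ ∃ i, v = q i := by
    intro v
    constructor
    · intro hv
      by_cases hvU : v ∈ U
      · exact Or.inl ⟨⟨v, hv, hvU⟩, rfl⟩
      · right
        obtain ⟨e, ⟨he, hve⟩, -⟩ := hm2 v hv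
        obtain ⟨y, rfl⟩ := Sym2.mem_iff_exists.1 hve
        obtain ⟨hadj, hmem⟩ := hm1 _ he
        have hadj' : G.Adj v y := hadj
        have hyU : y ∈ U := by
          rcases hbip.2.2 hadj' with h | h
          · exact absurd h.1 hvU
          · exact h.2
        have hyL := hmem y (by simp)
        refine ⟨⟨y, hyL, hyU⟩, ?_⟩
        obtain ⟨e, -, hu⟩ := hm2 y hyL
        have h := (hu _ ⟨he, by simp⟩).trans (hu _ ⟨hq ⟨y, hyL, hyU⟩, by simp⟩).symm
        rw [Sym2.eq_iff] at h
        rcases h with h | h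
        · exact absurd (h.1 ▸ hyU) hvU
        · exact h.1
    · rintro (⟨i, rfl⟩ | ⟨i, rfl⟩)
      · exact i.2.1
      · exact hqL i
  have huniq' : ∀ τ : Equiv.Perm I, (∀ i, G.Adj (p i) (q (τ i))) → τ = 1 := by
    intro τ hτ
    rw [pm_perm hbip p q hpinj hqinj (fun i => i.2.2) hqV sL hsL'] at hcard
    have := (Nat.card_eq_one_iff_unique.1 hcard).1
    have h := this.elim ⟨τ, hτ⟩ ⟨1, hpq⟩
    exact congrArg Subtype.val h
  -- general application
  have key : ∀ (k : ℕ) (a' b' : Fin k → α), Function.Injective a' → Function.Injective b' →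
      (∀ i, a' i ∈ A) → (∀ i, b' i ∈ B) →
      NoncrossingList G (List.ofFn a' ++ (List.ofFn b').reverse) →
      ∀ s : Finset α, (∀ v, v ∈ s ↔ v ∈ sL ∨ (∃ i, v = a' i) ∨ ∃ i, v = b' i) →
      (pmCount G s : ℤ) = (kMat G p q a' b').det := by
    intro k a' b' ha' hb' hA' hB' hnc' s hs
    refine kMat_det hbip p q a' b' ?_ ?_ ?_ ?_ hpq huniq' hnc' s ?_
    · refine hpinj.sumElim ha' fun i j h => ?_
      exact ((hmemL _).1 i.2.1).1 ((show i.1 = a' j from h) ▸ hA' j)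
    · refine hqinj.sumElim hb' fun i j h => ?_
      exact ((hmemL _).1 (hqL i)).2 (h ▸ hB' j)
    · rintro (i | i)
      · exact i.2.2
      · exact hAU (hA' i)
    · rintro (i | i)
      · exact hqV i
      · exact hBV (hB' i)
    · intro v
      rw [hs, hsL']
      simp only [Sum.exists, Sum.elim_inl, Sum.elim_inr]
      tauto
  have hX : (kMat G p q a b).toBlocks₁₁.det = 1 := by
    have h := key 0 Fin.elim0 Fin.elim0 (fun x => x.elim0) (fun x => x.elim0) (fun x => x.elim0)
      (fun x => x.elim0) (noncrossing_short _ _ (by simp)) sL (by simp)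
    rw [hcard] at h
    rw [kMat, Matrix.toBlocks_fromBlocks₁₁]
    rw [kMat, Subsingleton.elim (Matrix.of fun (j : Fin 0) (r : I) =>
      if G.Adj (p r) (Fin.elim0 j) then (1 : ℤ) else 0) 0, Matrix.det_fromBlocks_zero₂₁] at h
    simpa using h.symm
  rw [key n a b ha hb haA hbB hnc Finset.univ ?_]
  · rw [← Matrix.det_transpose (Matrix.of _)]
    haveI : Invertible (kMat G p q a b).toBlocks₁₁ :=
      Matrix.invertibleOfIsUnitDet _ (by rw [hX]; exact isUnit_one)
    have hfb := Matrix.fromBlocks_toBlocks (kMat G p q a b)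
    rw [← hfb, Matrix.det_fromBlocks₁₁, hX, one_mul]
    congr 1
    ext j i
    rw [Matrix.transpose_apply, Matrix.of_apply]
    rw [key 1 (fun _ => a i) (fun _ => b j) (fun x y _ => Subsingleton.elim x y)
      (fun x y _ => Subsingleton.elim x y) (fun _ => haA i) (fun _ => hbB j)
      (noncrossing_short _ _ (by simp)) (sL ∪ {a i, b j}) (by
        intro v
        simp only [Finset.mem_union, Finset.mem_insert, Finset.mem_singleton, exists_const])]
    have hfb' := Matrix.fromBlocks_toBlocks (kMat G p q (fun _ : Fin 1 => a i) (fun _ => b j))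
    have hX' : (kMat G p q (fun _ : Fin 1 => a i) (fun _ => b j)).toBlocks₁₁ =
      (kMat G p q a b).toBlocks₁₁ := rfl
    rw [← hfb', hX', Matrix.det_fromBlocks₁₁, hX, one_mul, Matrix.det_fin_one]
    rfl
  · intro v
    have : v ∈ A ∪ B ↔ (∃ i, v = a i) ∨ ∃ i, v = b i := by
      rw [hA, hB]; simp [eq_comm]
    simp only [Finset.mem_univ, true_iff, ← this, hsL, Finset.mem_sdiff, true_and]
    tauto
end

section
/- Let G be a finite simple bipartite graph with bipartition classes U and V, and let a_1,…,a_n, b_n,…,b_1 be distinct vertices with A = {a_1,…,a_n} ⊆ V and B = {b_1,…,b_n} ⊆ U, such that G is noncrossing with respect to the cyclic sequence (a_1,…,a_n, b_n,…,b_1). For 1 ≤ i,j ≤ n let L_{ij} = G−{a_i, b_j}. If G has exactly one perfect matching, then M(G−A−B) = det[M(L_{ij})]_{1≤i,j≤n}. -/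
/-- admissible steps -/
def CDAdm {α : Type*} (G : SimpleGraph α) (V : Finset α) (p : α → α) {n : ℕ}
    (a b : Fin n → α) : ({v // v ∈ V} ⊕ Fin n) → ({v // v ∈ V} ⊕ Fin n) → Prop
  | Sum.inl x, Sum.inl y => G.Adj (p x) y
  | Sum.inl x, Sum.inr j => p x = b j
  | Sum.inr i, Sum.inl y => (y : α) = a i
  | Sum.inr _, Sum.inr _ => False

/-- admissible permutations -/
def CDValid {α : Type*} (G : SimpleGraph α) (V : Finset α) (p : α → α) {n : ℕ}
    (a b : Fin n → α) (τ : Equiv.Perm ({v // v ∈ V} ⊕ Fin n)) : Prop :=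
  ∀ z, CDAdm G V p a b z (τ z)

/-- partner data -/
structure CDPart {α : Type*} [Fintype α] [DecidableEq α] (G : SimpleGraph α)
    (U V : Finset α) (p : α → α) : Prop where
  bip : IsBipartition G U V
  pp : ∀ v, p (p v) = v
  adj : ∀ v, G.Adj v (p v)
  uv : ∀ v ∈ U, p v ∈ V
  vu : ∀ v ∈ V, p v ∈ U
  nuv : ∀ v ∈ U, v ∉ V
  cov : ∀ v, v ∈ U ∨ v ∈ V

theorem cd_partner {α : Type*} (G : SimpleGraph α) (s : Finset α) (m : Finset (Sym2 α))
    (h : IsPMOn G s m) : ∃ q : α → α, ∀ v ∈ s, q v ∈ s ∧ G.Adj v (q v) ∧ s(v, q v) ∈ m ∧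
      q (q v) = v ∧ ∀ w, s(v, w) ∈ m → w = q v := by
  obtain ⟨h1, h2⟩ := h
  have key : ∀ v, ∃ w, v ∈ s → s(v, w) ∈ m := by
    intro v
    by_cases hv : v ∈ s
    · obtain ⟨e, ⟨he, hve⟩, -⟩ := h2 v hv
      obtain ⟨w, rfl⟩ := Sym2.mem_iff_exists.1 hve
      exact ⟨w, fun _ => he⟩
    · exact ⟨v, fun h => absurd h hv⟩
  choose q hq using key
  have hu : ∀ v ∈ s, ∀ w, s(v, w) ∈ m → w = q v := by
    intro v hv w hw
    have := (h2 v hv).unique ⟨hw, Sym2.mem_mk_left _ _⟩ ⟨hq v hv, Sym2.mem_mk_left _ _⟩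
    exact Sym2.congr_right.1 this
  refine ⟨q, fun v hv => ?_⟩
  have hs : q v ∈ s := (h1 _ (hq v hv)).2 _ (Sym2.mem_mk_right _ _)
  refine ⟨hs, (h1 _ (hq v hv)).1, hq v hv, ?_, hu v hv⟩
  exact (hu (q v) hs v (by rw [Sym2.eq_swap]; exact hq v hv)).symm

theorem cd_part {α : Type*} [Fintype α] [DecidableEq α]
    (G : SimpleGraph α) (U V : Finset α) (hbip : IsBipartition G U V)
    (h : ∃ m : Finset (Sym2 α), IsPMOn G Finset.univ m) : ∃ p, CDPart G U V p := by
  obtain ⟨m, hm⟩ := h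
  obtain ⟨q, hq⟩ := cd_partner G _ m hm
  have hn : ∀ v ∈ U, v ∉ V := fun v hu hv => (Finset.disjoint_left.1 hbip.1) hu hv
  have hadj : ∀ v, G.Adj v (q v) := fun v => (hq v (Finset.mem_univ _)).2.1
  refine ⟨q, hbip, fun v => (hq v (Finset.mem_univ _)).2.2.2.1, hadj, ?_, ?_, hn, ?_⟩
  · intro v hv
    rcases hbip.2.2 (hadj v) with h | h
    · exact h.2
    · exact absurd h.1 (hn v hv)
  · intro v hv
    rcases hbip.2.2 (hadj v) with h | h
    · exact absurd hv (hn v h.1)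
    · exact h.2
  · intro v
    have : v ∈ U ∪ V := by rw [hbip.2.1]; exact Finset.mem_univ _
    simpa using this

theorem cd_count {α : Type*} [Fintype α] [DecidableEq α]
    {G : SimpleGraph α} {U V : Finset α} {p : α → α} (P : CDPart G U V p) {n : ℕ}
    (a b : Fin n → α) (ha : ∀ i, a i ∈ V) (hb : ∀ i, b i ∈ U)
    (hai : Function.Injective a) :
    Nat.card {τ // CDValid G V p a b τ} =
      pmCount G (Finset.univ \ (Finset.univ.image a ∪ Finset.univ.image b)) := by
  classical
  set s := Finset.univ \ (Finset.univ.image a ∪ Finset.univ.image b) with hs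
  have mems : ∀ v, v ∈ s ↔ (∀ i, a i ≠ v) ∧ (∀ i, b i ≠ v) := by
    intro v; simp [hs]
  have pinj : Function.Injective p := fun x y h => by rw [← P.pp x, h, P.pp]
  have ea : ∀ τ, CDValid G V p a b τ → ∀ i, τ (Sum.inr i) = Sum.inl ⟨a i, ha i⟩ := by
    intro τ hτ i
    have := hτ (Sum.inr i)
    rcases h : τ (Sum.inr i) with y | j
    · rw [h] at this
      exact congrArg Sum.inl (Subtype.ext this)
    · rw [h] at this; exact this.elim
  have eb : ∀ τ, CDValid G V p a b τ → ∀ i,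
      τ (Sum.inl ⟨p (b i), P.uv _ (hb i)⟩) = Sum.inr i := by
    intro τ hτ i
    obtain ⟨z, hz⟩ := τ.surjective (Sum.inr i)
    have := hτ z
    rw [hz] at this
    rcases z with x | j
    · have hx : x = ⟨p (b i), P.uv _ (hb i)⟩ := Subtype.ext (by
        have h2 : p x = b i := this
        show (x : α) = p (b i)
        rw [← h2, P.pp])
      rw [← hx, hz]
    · exact this.elim
  let Φ : Equiv.Perm ({v // v ∈ V} ⊕ Fin n) → Finset (Sym2 α) := fun τ =>
    Finset.univ.filter fun e => ∃ x y : {v // v ∈ V}, τ (Sum.inl x) = Sum.inl y ∧ e = s(p x, (y : α))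
  have memΦ : ∀ τ e, e ∈ Φ τ ↔ ∃ x y : {v // v ∈ V}, τ (Sum.inl x) = Sum.inl y ∧ e = s(p x, (y : α)) := by
    intro τ e; simp [Φ]
  have pUV : ∀ x y : {v // v ∈ V}, p x ≠ y := fun x y h =>
    P.nuv _ (P.vu _ x.2) (h ▸ y.2)
  have edge : ∀ x y x' y' : {v // v ∈ V}, s(p x, (y : α)) = s(p x', (y' : α)) → x = x' ∧ y = y' := by
    intro x y x' y' h
    rw [Sym2.eq_iff] at h
    rcases h with ⟨h1, h2⟩ | ⟨h1, h2⟩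
    · exact ⟨Subtype.ext (pinj h1), Subtype.ext h2⟩
    · exact absurd h1 (pUV _ _)
  have hΦ : ∀ τ, CDValid G V p a b τ → IsPMOn G s (Φ τ) := by
    intro τ hτ
    refine ⟨?_, ?_⟩
    · intro e he
      obtain ⟨x, y, hxy, rfl⟩ := (memΦ _ _).1 he
      have h0 := hτ (Sum.inl x)
      rw [hxy] at h0
      refine ⟨h0, ?_⟩
      intro v hv
      rw [mems]
      rcases Sym2.mem_iff.1 hv with rfl | rfl
      · refine ⟨fun i hi => pUV x ⟨a i, ha i⟩ hi.symm, fun i hi => ?_⟩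
        have h1 := eb τ hτ i
        have : (⟨p (b i), P.uv _ (hb i)⟩ : {v // v ∈ V}) = x := Subtype.ext (by
          show p (b i) = x
          rw [hi, P.pp])
        rw [this, hxy] at h1
        cases h1
      · refine ⟨fun i hi => ?_, fun i hi => P.nuv _ (hb i) (hi ▸ y.2)⟩
        have h1 := ea τ hτ i
        have : (⟨a i, ha i⟩ : {v // v ∈ V}) = y := Subtype.ext hi
        rw [this, ← hxy] at h1
        cases τ.injective h1
    · intro v hv
      rw [mems] at hv
      rcases P.cov v with hu | hV
      · let x : {v // v ∈ V} := ⟨p v, P.uv v hu⟩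
        have hx : p x = v := P.pp v
        have h0 := hτ (Sum.inl x)
        rcases h : τ (Sum.inl x) with y | j
        · refine ⟨s(p x, (y : α)), ⟨(memΦ _ _).2 ⟨x, y, h, rfl⟩, by rw [hx]; exact Sym2.mem_mk_left _ _⟩, ?_⟩
          rintro e ⟨he, hve⟩
          obtain ⟨x', y', hxy, rfl⟩ := (memΦ _ _).1 he
          rcases Sym2.mem_iff.1 hve with h2 | h2
          · have : x = x' := Subtype.ext (pinj (hx.trans h2))
            subst this
            rw [h] at hxy
            cases hxy; rfl
          · exact absurd (hx.trans h2) (pUV _ _)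
        · rw [h] at h0
          have h1 : p x = b j := h0
          exact absurd (h1.symm.trans hx) (hv.2 j)
      · obtain ⟨z, hz⟩ := τ.surjective (Sum.inl ⟨v, hV⟩)
        rcases z with x | i
        · refine ⟨s(p x, v), ⟨(memΦ _ _).2 ⟨x, ⟨v, hV⟩, hz, rfl⟩, Sym2.mem_mk_right _ _⟩, ?_⟩
          rintro e ⟨he, hve⟩
          obtain ⟨x', y', hxy, rfl⟩ := (memΦ _ _).1 he
          rcases Sym2.mem_iff.1 hve with h2 | h2
          · exact absurd h2.symm (pUV x' ⟨v, hV⟩)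
          · have : y' = ⟨v, hV⟩ := Subtype.ext h2.symm
            subst this
            have := τ.injective (hxy.trans hz.symm)
            cases this; rfl
        · rw [ea τ hτ i] at hz
          have : a i = v := congrArg Subtype.val (Sum.inl.inj hz)
          exact absurd this (hv.1 i)
  refine Nat.card_eq_of_bijective (fun τ : {τ // CDValid G V p a b τ} =>
    (⟨Φ τ.1, hΦ τ.1 τ.2⟩ : {m // IsPMOn G s m})) ⟨?_, ?_⟩
  · rintro ⟨τ, hτ⟩ ⟨τ', hτ'⟩ h
    have h : Φ τ = Φ τ' := congrArg Subtype.val h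
    apply Subtype.ext
    show τ = τ'
    ext1 z
    rcases z with x | i
    · rcases h1 : τ (Sum.inl x) with y | j
      · have : s(p x, (y : α)) ∈ Φ τ' := h ▸ (memΦ _ _).2 ⟨x, y, h1, rfl⟩
        obtain ⟨x', y', h2, h3⟩ := (memΦ _ _).1 this
        obtain ⟨rfl, rfl⟩ := edge _ _ _ _ h3
        exact h2.symm
      · have h0 := hτ (Sum.inl x)
        rw [h1] at h0
        have h0 : p x = b j := h0
        have : (⟨p (b j), P.uv _ (hb j)⟩ : {v // v ∈ V}) = x := Subtype.ext (by
          show p (b j) = x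
          rw [← h0, P.pp])
        rw [← this, eb τ' hτ' j]
    · rw [ea τ hτ, ea τ' hτ']
  · rintro ⟨m, hm⟩
    obtain ⟨q, hq⟩ := cd_partner G s m hm
    have hqV : ∀ x : {v // v ∈ V}, p x ∈ s → q (p x) ∈ V := by
      intro x hx
      rcases P.bip.2.2 (hq _ hx).2.1 with h | h
      · exact h.2
      · exact absurd h.1 (P.nuv _ (P.vu _ x.2))
    have hps : ∀ x : {v // v ∈ V}, (∃ j, p x = b j) ∨ p x ∈ s := by
      intro x
      by_cases h : ∃ j, p x = b j
      · exact Or.inl h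
      · refine Or.inr ((mems _).2 ⟨fun i hi => pUV x ⟨a i, ha i⟩ hi.symm, fun i hi => h ⟨i, hi.symm⟩⟩)
    have hstep : ∀ z : {v // v ∈ V} ⊕ Fin n, ∃ w : {v // v ∈ V} ⊕ Fin n,
        CDAdm G V p a b z w ∧ ∀ x, z = Sum.inl x → ∀ y, w = Sum.inl y → s(p x, (y : α)) ∈ m := by
      rintro (x | i)
      · rcases hps x with ⟨j, hj⟩ | h
        · exact ⟨Sum.inr j, hj, by rintro _ _ _ h; cases h⟩
        · refine ⟨Sum.inl ⟨q (p x), hqV x h⟩, (hq _ h).2.1, ?_⟩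
          rintro _ h1 _ h2
          cases h1; cases h2
          exact (hq _ h).2.2.1
      · exact ⟨Sum.inl ⟨a i, ha i⟩, rfl, by rintro _ h; cases h⟩
    choose f hf hfm using hstep
    have hmV : ∀ x y : {v // v ∈ V}, f (Sum.inl x) = Sum.inl y → p x ∈ s ∧ (y : α) ∈ s := by
      intro x y h
      have := hfm _ x rfl y h
      exact ⟨(hm.1 _ this).2 _ (Sym2.mem_mk_left _ _), (hm.1 _ this).2 _ (Sym2.mem_mk_right _ _)⟩
    have finj : Function.Injective f := by
      intro z z' h
      have h1 := hf z
      have h2 := hf z'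
      rcases z with x | i <;> rcases z' with x' | i' <;> rcases hw : f _ with y | j
      any_goals rw [hw] at h1; rw [← h, hw] at h2
      · have e1 := hfm _ x rfl y hw
        have e2 := hfm _ x' rfl y (h ▸ hw)
        have := (hm.2 _ (hmV x y hw).2).unique ⟨e1, Sym2.mem_mk_right _ _⟩ ⟨e2, Sym2.mem_mk_right _ _⟩
        rw [(edge _ _ _ _ this).1]
      · have h1 : p x = b j := h1
        have h2 : p x' = b j := h2
        rw [Subtype.ext (pinj (h1.trans h2.symm))]
      · have h2 : (y : α) = a i' := h2
        exact absurd h2.symm (((mems _).1 (hmV x y hw).2).1 i')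
      · exact h2.elim
      · have h1 : (y : α) = a i := h1
        have := hmV x' y (h ▸ hw)
        exact absurd h1.symm (((mems _).1 this.2).1 i)
      · exact h1.elim
      · have h1 : (y : α) = a i := h1
        have h2 : (y : α) = a i' := h2
        rw [hai (h1.symm.trans h2)]
      · exact h1.elim
    let τ := Equiv.ofBijective f (Finite.injective_iff_bijective.1 finj)
    have hτ : CDValid G V p a b τ := hf
    refine ⟨⟨τ, hτ⟩, Subtype.ext ?_⟩
    show Φ τ = m
    have hsub : Φ τ ⊆ m := by
      intro e he
      obtain ⟨x, y, h, rfl⟩ := (memΦ _ _).1 he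
      exact hfm _ x rfl y h
    refine Finset.Subset.antisymm hsub ?_
    intro e he
    induction e using Sym2.ind with
    | _ v w =>
      have hv : v ∈ s := (hm.1 _ he).2 _ (Sym2.mem_mk_left _ _)
      obtain ⟨e', ⟨he', hve'⟩, -⟩ := (hΦ τ hτ).2 v hv
      have := (hm.2 v hv).unique ⟨he, Sym2.mem_mk_left _ _⟩ ⟨hsub he', hve'⟩
      rw [this]; exact he'

theorem cd_uniq {α : Type*} [Fintype α] [DecidableEq α]
    {G : SimpleGraph α} {U V : Finset α} {p : α → α} (P : CDPart G U V p)
    (hcard : pmCount G Finset.univ = 1) (c : Equiv.Perm {v // v ∈ V})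
    (hc : ∀ x : {v // v ∈ V}, G.Adj (p x) (c x)) : c = 1 := by
  have h := cd_count P (n := 0) Fin.elim0 Fin.elim0 (fun i => i.elim0) (fun i => i.elim0)
    (fun i => i.elim0)
  have hs : (Finset.univ \ (Finset.univ.image (Fin.elim0 : Fin 0 → α) ∪
      Finset.univ.image (Fin.elim0 : Fin 0 → α))) = Finset.univ := by simp
  rw [hs, hcard] at h
  have hsub := (Nat.card_eq_one_iff_unique.1 h).1
  have h1 : CDValid G V p Fin.elim0 Fin.elim0 (Equiv.sumCongr c (1 : Equiv.Perm (Fin 0))) := by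
    rintro (x | i)
    · exact hc x
    · exact i.elim0
  have h2 : CDValid G V p Fin.elim0 Fin.elim0 (1 : Equiv.Perm ({v // v ∈ V} ⊕ Fin 0)) := by
    rintro (x | i)
    · exact (P.adj x).symm
    · exact i.elim0
  have h3 : Equiv.sumCongr c (1 : Equiv.Perm (Fin 0)) = 1 :=
    congrArg Subtype.val (hsub.elim ⟨_, h1⟩ ⟨_, h2⟩)
  ext1 x
  have := congrArg (fun f => f (Sum.inl x)) h3
  exact Sum.inl.inj this

theorem cd_cycle {α : Type*} [Fintype α] [DecidableEq α]
    {G : SimpleGraph α} {U V : Finset α} {p : α → α} (P : CDPart G U V p)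
    (hcard : pmCount G Finset.univ = 1) {n : ℕ} (a b : Fin n → α)
    (τ : Equiv.Perm ({v // v ∈ V} ⊕ Fin n)) (hτ : CDValid G V p a b τ)
    (z : {v // v ∈ V} ⊕ Fin n) (hz : τ z ≠ z) : ∃ i, τ.SameCycle z (Sum.inr i) := by
  classical
  by_contra hno
  push Not at hno
  rcases z with x0 | i
  swap
  · exact hno i (Equiv.Perm.SameCycle.refl _ _)
  have hm : Set.MapsTo (τ.cycleOf (Sum.inl x0)) (Set.range Sum.inl) (Set.range Sum.inl) := by
    rintro _ ⟨x, rfl⟩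
    rw [Equiv.Perm.cycleOf_apply]
    split_ifs with h
    · rcases hx : τ (Sum.inl x) with y | j
      · exact ⟨y, rfl⟩
      · refine absurd ?_ (hno j)
        rw [← hx]
        exact Equiv.Perm.sameCycle_apply_right.2 h
    · exact ⟨x, rfl⟩
  obtain ⟨⟨c, d⟩, hcd⟩ := Equiv.Perm.mem_sumCongrHom_range_of_perm_mapsTo_inl hm
  have hcx : ∀ x, τ.cycleOf (Sum.inl x0) (Sum.inl x) = Sum.inl (c x) := by
    intro x; rw [← hcd]; rfl
  have hc : c = 1 := by
    apply cd_uniq P hcard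
    intro x
    have h1 := hcx x
    rw [Equiv.Perm.cycleOf_apply] at h1
    split_ifs at h1 with h
    · have := hτ (Sum.inl x)
      rw [h1] at this
      exact this
    · rw [← Sum.inl.inj h1]
      exact (P.adj x).symm
  have := hcx x0
  rw [Equiv.Perm.cycleOf_apply_self, hc] at this
  exact hz this

open Classical in
/-- the diagonal block -/
noncomputable def CDK {α : Type*} (G : SimpleGraph α) (V : Finset α) (p : α → α) :
    Matrix {v // v ∈ V} {v // v ∈ V} ℤ :=
  Matrix.of fun x y => if y = x then 1 else if G.Adj (p x) y then -1 else 0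

open Classical in
/-- the full block matrix -/
noncomputable def CDM {α : Type*} (G : SimpleGraph α) (V : Finset α) (p : α → α) {n : ℕ}
    (a b : Fin n → α) : Matrix ({v // v ∈ V} ⊕ Fin n) ({v // v ∈ V} ⊕ Fin n) ℤ :=
  Matrix.fromBlocks (CDK G V p) (Matrix.of fun x j => if p x = b j then 1 else 0)
    (-(Matrix.of fun i (y : {v // v ∈ V}) => if (y : α) = a i then 1 else 0)) 0

theorem cd_det {α : Type*} [Fintype α] [DecidableEq α]
    {G : SimpleGraph α} {U V : Finset α} {p : α → α} (P : CDPart G U V p)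
    (hcard : pmCount G Finset.univ = 1) {n : ℕ} (a b : Fin n → α)
    (ha : ∀ i, a i ∈ V) (hb : ∀ i, b i ∈ U) (hai : Function.Injective a)
    (hsc : ∀ τ : Equiv.Perm ({v // v ∈ V} ⊕ Fin n), CDValid G V p a b τ → ∀ i j : Fin n,
      τ.SameCycle (Sum.inr i) (Sum.inr j) → i = j) :
    (CDM G V p a b).det =
      (pmCount G (Finset.univ \ (Finset.univ.image a ∪ Finset.univ.image b)) : ℤ) := by
  classical
  rw [← cd_count P a b ha hb hai, ← Matrix.det_transpose, Matrix.det_apply',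
    Nat.card_eq_fintype_card, Fintype.card_subtype, Finset.card_filter, Nat.cast_sum]
  refine Finset.sum_congr rfl fun τ _ => ?_
  by_cases hτ : CDValid G V p a b τ
  swap
  · rw [if_neg hτ]
    unfold CDValid at hτ
    push Not at hτ
    obtain ⟨z, hz⟩ := hτ
    have : (CDM G V p a b).transpose (τ z) z = 0 := by
      rw [Matrix.transpose_apply]
      rcases z with x | i <;> rcases hw : τ _ with y | j <;> rw [hw] at hz <;>
        simp only [CDAdm] at hz
      · have hne : y ≠ x := by
          rintro rfl
          exact hz (P.adj y).symm
        simp [CDM, CDK, hz, hne]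
      · simp [CDM, hz]
      · simp [CDM, hz]
      · simp [CDM]
    have h0 : ∏ i, (CDM G V p a b).transpose (τ i) i = 0 :=
      Finset.prod_eq_zero (Finset.mem_univ z) this
    rw [h0]
    simp
  rw [if_pos hτ]
  have hent : ∀ z, (CDM G V p a b).transpose (τ z) z =
      (if τ z ≠ z then -1 else 1) * (if (τ z).isRight then -1 else 1) := by
    intro z
    have h := hτ z
    rw [Matrix.transpose_apply]
    rcases z with x | i <;> rcases hw : τ _ with y | j <;> rw [hw] at h <;>
        simp only [CDAdm] at h
    · by_cases hyx : y = x
      · simp [CDM, CDK, hyx]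
      · simp [CDM, CDK, hyx, h]
    · simp [CDM, h]
    · simp [CDM, h]
  have hcyc : τ.cycleFactorsFinset.card = n := by
    have hsup : ∀ i : Fin n, (Sum.inr i) ∈ τ.support := by
      intro i
      rw [Equiv.Perm.mem_support]
      intro h
      have := hτ (Sum.inr i)
      rw [h] at this
      exact this
    have : (Finset.univ : Finset (Fin n)).card = τ.cycleFactorsFinset.card := by
      refine Finset.card_bij (fun i _ => τ.cycleOf (Sum.inr i)) ?_ ?_ ?_
      · intro i _
        exact Equiv.Perm.cycleOf_mem_cycleFactorsFinset_iff.2 (hsup i)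
      · intro i _ j _ h
        exact hsc τ hτ i j
          ((Equiv.Perm.sameCycle_iff_cycleOf_eq_of_mem_support (hsup i) (hsup j)).2 h)
      · intro c hc
        obtain ⟨z, hz⟩ := (Equiv.Perm.mem_cycleFactorsFinset_iff.1 hc).1.nonempty_support
        have hcz := Equiv.Perm.cycle_is_cycleOf hz hc
        have hz' : z ∈ τ.support := by
          rw [hcz] at hc
          exact Equiv.Perm.cycleOf_mem_cycleFactorsFinset_iff.1 hc
        obtain ⟨i, hi⟩ := cd_cycle P hcard a b τ hτ z (Equiv.Perm.mem_support.1 hz')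
        exact ⟨i, Finset.mem_univ _, by rw [hcz]; exact hi.cycleOf_eq.symm⟩
    rw [← this]; simp
  have hsign : ((Equiv.Perm.sign τ : ℤˣ) : ℤ) = (-1) ^ (τ.support.card + n) := by
    rw [Equiv.Perm.sign_of_cycleType, Equiv.Perm.sum_cycleType, Equiv.Perm.cycleType_def]
    simp [hcyc]
  have hp1 : ∏ z, (if τ z ≠ z then (-1 : ℤ) else 1) = (-1) ^ τ.support.card := by
    rw [Finset.prod_ite]
    simp [Equiv.Perm.support]
  have hp2 : ∏ z, (if (τ z).isRight then (-1 : ℤ) else 1) = (-1) ^ n := by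
    rw [Equiv.prod_comp τ (fun w => if w.isRight then (-1 : ℤ) else 1), Fintype.prod_sum_type]
    simp
  rw [Finset.prod_congr rfl fun z _ => hent z, Finset.prod_mul_distrib, hp1, hp2, hsign, ← pow_add]
  have : ((-1 : ℤ) ^ (τ.support.card + n)) * (-1) ^ (τ.support.card + n) = 1 := by
    rw [← mul_pow]; simp
  simpa using this

/-- segment of the orbit -/
inductive CDSeg {X : Type*} {n : ℕ} (τ : Equiv.Perm (X ⊕ Fin n)) (i : Fin n) : X → Prop
  | base (x : X) : τ (Sum.inr i) = Sum.inl x → CDSeg τ i x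
  | step (x y : X) : CDSeg τ i x → τ (Sum.inl x) = Sum.inl y → CDSeg τ i y

theorem CDSeg.eq {X : Type*} {n : ℕ} {τ : Equiv.Perm (X ⊕ Fin n)} {i k : Fin n} {x : X}
    (h : CDSeg τ i x) (h' : CDSeg τ k x) : i = k := by
  induction h with
  | base x hx =>
    cases h' with
    | base _ h => exact Sum.inr.inj (τ.injective (hx.trans h.symm))
    | step z _ _ h => cases τ.injective (hx.trans h.symm)
  | step x y _ hx ih =>
    cases h' with
    | base _ h => cases τ.injective (hx.trans h.symm)
    | step z _ hz h =>
      cases τ.injective (hx.trans h.symm)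
      exact ih hz

theorem CDSeg.exists_end {X : Type*} [Finite X] {n : ℕ} (τ : Equiv.Perm (X ⊕ Fin n)) 
    (h0 : ∀ i, ∃ x, τ (Sum.inr i) = Sum.inl x) (i : Fin n) :
    ∃ x j, CDSeg τ i x ∧ τ (Sum.inl x) = Sum.inr j := by
  by_contra hno
  push Not at hno
  have key : ∀ m : ℕ, ∃ x, CDSeg τ i x ∧ (τ ^ (m + 1)) (Sum.inr i) = Sum.inl x := by
    intro m
    induction m with
    | zero =>
      obtain ⟨x, hx⟩ := h0 i
      exact ⟨x, .base x hx, by simpa using hx⟩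
    | succ m ih =>
      obtain ⟨x, hx, hm⟩ := ih
      rcases hw : τ (Sum.inl x) with y | j
      · exact ⟨y, .step x y hx hw, by rw [pow_succ', Equiv.Perm.mul_apply, hm, hw]⟩
      · exact absurd hw (hno x j hx)
  obtain ⟨x, -, hx⟩ := key (orderOf τ - 1)
  rw [Nat.sub_add_cancel (orderOf_pos τ), pow_orderOf_eq_one] at hx
  cases hx

theorem cd_walk {α : Type*} [Fintype α] [DecidableEq α]
    {G : SimpleGraph α} {U V : Finset α} {p : α → α} (P : CDPart G U V p)
    {n : ℕ} (a b : Fin n → α)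
    (τ : Equiv.Perm ({v // v ∈ V} ⊕ Fin n)) (hτ : CDValid G V p a b τ) (i : Fin n)
    (x : {v // v ∈ V}) (h : CDSeg τ i x) :
    ∃ w : G.Walk (a i) (p x), ∀ u ∈ w.support, ∃ z, CDSeg τ i z ∧ (u = z ∨ u = p z) := by
  induction h with
  | base x hx =>
    have h1 := hτ (Sum.inr i)
    rw [hx] at h1
    have h1 : (x : α) = a i := h1
    rw [← h1]
    refine ⟨(P.adj x).toWalk, ?_⟩
    intro u hu
    refine ⟨x, .base x hx, ?_⟩
    simpa using hu
  | step x y hx hxy ih =>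
    obtain ⟨w, hw⟩ := ih
    have h1 := hτ (Sum.inl x)
    rw [hxy] at h1
    have h1 : G.Adj (p x) y := h1
    refine ⟨(w.concat h1).concat (P.adj y), ?_⟩
    intro u hu
    simp only [SimpleGraph.Walk.support_concat, List.mem_append,
      List.mem_singleton] at hu
    rcases hu with (hu | hu) | hu
    · exact hw u hu
    · exact ⟨y, .step x y hx hxy, Or.inl hu⟩
    · exact ⟨y, .step x y hx hxy, Or.inr hu⟩

theorem cd_noncross {α : Type*} [Fintype α] [DecidableEq α]
    {G : SimpleGraph α} {U V : Finset α} {p : α → α} (P : CDPart G U V p)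
    {n : ℕ} (a b : Fin n → α) (ha : ∀ i, a i ∈ V) (hb : ∀ i, b i ∈ U)
    (hnc : NoncrossingList G (List.ofFn a ++ (List.ofFn b).reverse))
    (τ : Equiv.Perm ({v // v ∈ V} ⊕ Fin n)) (hτ : CDValid G V p a b τ) (i j : Fin n)
    (hij : τ.SameCycle (Sum.inr i) (Sum.inr j)) : i = j := by
  classical
  have pinj : Function.Injective p := fun x y h => by rw [← P.pp x, h, P.pp]
  have pUV : ∀ x y : {v // v ∈ V}, p x ≠ y := fun x y h =>
    P.nuv _ (P.vu _ x.2) (h ▸ y.2)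
  have h0 : ∀ i, τ (Sum.inr i) = Sum.inl ⟨a i, ha i⟩ := by
    intro i
    have := hτ (Sum.inr i)
    rcases h : τ (Sum.inr i) with y | j
    · rw [h] at this
      exact congrArg Sum.inl (Subtype.ext this)
    · rw [h] at this; exact this.elim
  have eb : ∀ i, τ (Sum.inl ⟨p (b i), P.uv _ (hb i)⟩) = Sum.inr i := by
    intro i
    obtain ⟨z, hz⟩ := τ.surjective (Sum.inr i)
    have := hτ z
    rw [hz] at this
    rcases z with x | j
    · have hx : x = ⟨p (b i), P.uv _ (hb i)⟩ := Subtype.ext (by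
        have h2 : p x = b i := this
        show (x : α) = p (b i)
        rw [← h2, P.pp])
      rw [← hx, hz]
    · exact this.elim
  choose e σ hse hes using CDSeg.exists_end τ (fun i => ⟨_, h0 i⟩)
  have hpe : ∀ i, p (e i) = b (σ i) := by
    intro i
    have := hτ (Sum.inl (e i))
    rw [hes] at this
    exact this
  have σinj : Function.Injective σ := by
    intro i k h
    have : e i = e k := Sum.inl.inj (τ.injective (by rw [hes, hes, h]))
    exact (hse i).eq (this ▸ hse k)
  have σsurj : Function.Surjective σ := Finite.injective_iff_surjective.1 σinj
  have hend : ∀ i x l, CDSeg τ i x → τ (Sum.inl x) = Sum.inr l → l = σ i := by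
    intro i x l hx hl
    obtain ⟨k, rfl⟩ := σsurj l
    have : x = e k := Sum.inl.inj (τ.injective (by rw [hes, hl]))
    rw [hx.eq (this ▸ hse k)]
  -- paths
  have hpath : ∀ i, ∃ w : G.Walk (a i) (b (σ i)), w.IsPath ∧
      (∀ u ∈ w.support, ∃ z, CDSeg τ i z ∧ (u = z ∨ u = p z)) := by
    intro i
    obtain ⟨w, hw⟩ := cd_walk P a b τ hτ i (e i) (hse i)
    rw [← hpe]
    exact ⟨w.bypass, w.bypass_isPath, fun u hu => hw u (w.support_bypass_subset_support hu)⟩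
  have havoid : ∀ (i : Fin n) (u : α), (∃ z, CDSeg τ i z ∧ (u = z ∨ u = p z)) → u ≠ a i → u ≠ b (σ i) →
      u ∉ {x | x ∈ List.ofFn a ++ (List.ofFn b).reverse} := by
    rintro i u ⟨z, hz, hu⟩ h1 h2 hmem
    simp only [Set.mem_ofPred_eq, List.mem_append, List.mem_reverse, List.mem_ofFn] at hmem
    rcases hmem with ⟨l, hl⟩ | ⟨l, hl⟩
    · rcases hu with hu | hu
      · have hzl : z = ⟨a l, ha l⟩ := Subtype.ext (hu.symm.trans hl.symm)
        have : CDSeg τ l z := .base _ (by rw [h0, hzl])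
        have := hz.eq this
        subst this
        exact h1 hl.symm
      · exact pUV z ⟨a l, ha l⟩ (hu.symm.trans hl.symm)
    · rcases hu with hu | hu
      · exact P.nuv _ (hb l) (by rw [hl, hu]; exact z.2)
      · have hzl : z = ⟨p (b l), P.uv _ (hb l)⟩ := Subtype.ext (by
          show (z : α) = p (b l)
          rw [hl, hu, P.pp])
        have := hend i z l hz (by rw [hzl, eb])
        subst this
        exact h2 hl.symm
  have hmono : StrictMono σ := by
    intro i k hik
    by_contra hlt
    have hlt : σ k < σ i := lt_of_le_of_ne (not_lt.1 hlt) (fun h => hik.ne' (σinj h))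
    have hlen : (List.ofFn a ++ (List.ofFn b).reverse).length = n + n := by simp
    have hk := k.2
    have hsi := (σ i).2
    have hik' : (i : ℕ) < k := hik
    have hlt' : (σ k : ℕ) < σ i := hlt
    have ga : ∀ (l : Fin n) (h : (l : ℕ) < (List.ofFn a ++ (List.ofFn b).reverse).length),
        (List.ofFn a ++ (List.ofFn b).reverse).get ⟨l, h⟩ = a l := by
      intro l h
      simp [List.getElem_append]
    have gb : ∀ (l : Fin n) (h : (n + (n - 1 - l) : ℕ) <
        (List.ofFn a ++ (List.ofFn b).reverse).length),
        (List.ofFn a ++ (List.ofFn b).reverse).get ⟨n + (n - 1 - l), h⟩ = b l := by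
      intro l h
      have := l.2
      simp [List.getElem_append]
      congr 1
      apply Fin.ext
      simp
      omega
    have := hnc ⟨i, by omega⟩ ⟨k, by omega⟩ ⟨n + (n - 1 - σ i), by omega⟩
      ⟨n + (n - 1 - σ k), by omega⟩ hik
      (by rw [Fin.lt_def]; show (k : ℕ) < n + (n - 1 - σ i); omega)
      (by rw [Fin.lt_def]; show (n + (n - 1 - σ i) : ℕ) < n + (n - 1 - σ k); omega)
    rw [ga, ga, gb, gb] at this
    apply this
    obtain ⟨w, hw, hw'⟩ := hpath i
    obtain ⟨v, hv, hv'⟩ := hpath k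
    refine ⟨w, v, hw, hv, ?_, fun u hu h1 h2 => havoid i u (hw' u hu) h1 h2,
      fun u hu h1 h2 => havoid k u (hv' u hu) h1 h2⟩
    intro u hu hu'
    obtain ⟨z, hz, hz'⟩ := hw' u hu
    obtain ⟨y, hy, hy'⟩ := hv' u hu'
    have hzy : z = y := by
      rcases hz' with h1 | h1 <;> rcases hy' with h2 | h2
      · exact Subtype.ext (h1.symm.trans h2)
      · exact absurd (h2.symm.trans h1) (pUV _ _)
      · exact absurd (h1.symm.trans h2) (pUV _ _)
      · exact Subtype.ext (pinj (h1.symm.trans h2))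
    exact hik.ne (hz.eq (hzy ▸ hy))
  have hid : σ = id := by
    exact hmono.range_inj strictMono_id |>.1 (by rw [σsurj.range_eq]; simp)
  have key : ∀ m : ℕ, (τ ^ m) (Sum.inr i) = Sum.inr i ∨
      ∃ x, CDSeg τ i x ∧ (τ ^ m) (Sum.inr i) = Sum.inl x := by
    intro m
    induction m with
    | zero => left; rfl
    | succ m ih =>
      rw [pow_succ', Equiv.Perm.mul_apply]
      rcases ih with h | ⟨x, hx, h⟩
      · rw [h]
        exact Or.inr ⟨_, .base _ (h0 i), h0 i⟩
      · rw [h]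
        rcases hw : τ (Sum.inl x) with y | l
        · exact Or.inr ⟨y, .step x y hx hw, rfl⟩
        · left
          rw [hend i x l hx hw, hid]; rfl
  obtain ⟨m, hm⟩ := hij.exists_nat_pow_eq
  rcases key m with h | ⟨x, -, h⟩
  · exact Sum.inr.inj (h.symm.trans hm)
  · cases h.symm.trans hm

theorem cd_schur {α : Type*} [Fintype α] [DecidableEq α]
    {G : SimpleGraph α} {U V : Finset α} {p : α → α} (P : CDPart G U V p)
    (hK : (CDK G V p).det = 1) {n : ℕ} (a b : Fin n → α)
    (ha : ∀ i, a i ∈ V) (hb : ∀ i, b i ∈ U) :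
    (CDM G V p a b).det = Matrix.det (Matrix.of fun i j : Fin n =>
      (CDK G V p)⁻¹ ⟨a i, ha i⟩ ⟨p (b j), P.uv _ (hb j)⟩) := by
  classical
  haveI : Invertible (CDK G V p) := Matrix.invertibleOfIsUnitDet _ (by rw [hK]; exact isUnit_one)
  unfold CDM
  rw [Matrix.det_fromBlocks₁₁, hK, one_mul, Matrix.invOf_eq_nonsing_inv]
  congr 1
  ext i j
  have e1 : ∀ y : {v // v ∈ V}, ((y : α) = a i) ↔ y = ⟨a i, ha i⟩ := fun y => by
    rw [Subtype.ext_iff]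
  have e2 : ∀ y : {v // v ∈ V}, (p y = b j) ↔ y = ⟨p (b j), P.uv _ (hb j)⟩ := fun y => by
    rw [Subtype.ext_iff]
    constructor
    · intro h
      show (y : α) = p (b j)
      rw [← h, P.pp]
    · intro h
      rw [h]
      exact P.pp _
  simp [Matrix.mul_apply, e1, e2]

/-- (Corollary 4.3.) Determinant condensation with `A ⊆ V`, `B ⊆ U`. -/
theorem determinant_condensation_M_K {α : Type*} [Fintype α] [DecidableEq α]
    (G : SimpleGraph α) (U V : Finset α) (hbip : IsBipartition G U V) (n : ℕ)
    (a b : Fin n → α)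
    (hdist : (List.ofFn a ++ (List.ofFn b).reverse).Nodup)
    (hnc : NoncrossingList G (List.ofFn a ++ (List.ofFn b).reverse))
    (A B : Finset α) (hA : A = Finset.univ.image a) (hB : B = Finset.univ.image b)
    (hAV : A ⊆ V) (hBU : B ⊆ U)
    (huniq : ∃! m : Finset (Sym2 α), IsPMOn G Finset.univ m) :
    (pmCount G (Finset.univ \ (A ∪ B)) : ℤ) =
      Matrix.det (Matrix.of fun i j : Fin n =>
        (pmCount G (Finset.univ \ {a i, b j}) : ℤ)) := by
  have hcard : pmCount G Finset.univ = 1 := by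
    obtain ⟨m, hm, hu⟩ := huniq
    unfold pmCount
    rw [Nat.card_eq_one_iff_unique]
    exact ⟨⟨fun x y => Subtype.ext ((hu _ x.2).trans (hu _ y.2).symm)⟩, ⟨⟨m, hm⟩⟩⟩
  obtain ⟨p, P⟩ := cd_part G U V hbip huniq.exists
  have ha : ∀ i, a i ∈ V := fun i => hAV (by rw [hA]; simp)
  have hb : ∀ i, b i ∈ U := fun i => hBU (by rw [hB]; simp)
  have hai : Function.Injective a := List.nodup_ofFn.1 (List.nodup_append.1 hdist).1
  have hK : (CDK G V p).det = 1 := by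
    have h := cd_det P hcard (n := 0) Fin.elim0 Fin.elim0 (fun i => i.elim0) (fun i => i.elim0)
      (fun i => i.elim0) (fun _ _ i => i.elim0)
    have hs : (Finset.univ \ (Finset.univ.image (Fin.elim0 : Fin 0 → α) ∪
        Finset.univ.image (Fin.elim0 : Fin 0 → α))) = Finset.univ := by simp
    rw [hs, hcard] at h
    have h2 : CDM G V p Fin.elim0 Fin.elim0 = Matrix.fromBlocks (CDK G V p)
        (0 : Matrix {v // v ∈ V} (Fin 0) ℤ) 0 0 := by
      ext x y
      rcases x with x | i
      · rcases y with y | i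
        · rfl
        · exact i.elim0
      · exact i.elim0
    rw [h2, Matrix.det_fromBlocks_zero₂₁] at h
    simpa using h
  have hmain := cd_det P hcard a b ha hb hai (fun τ hτ i j => cd_noncross P a b ha hb hnc τ hτ i j)
  rw [hA, hB, ← hmain, cd_schur P hK a b ha hb]
  congr 1
  ext i j
  have h1 := cd_det P hcard (n := 1) (fun _ => a i) (fun _ => b j) (fun _ => ha i) (fun _ => hb j)
    (fun _ _ _ => Subsingleton.elim _ _) (fun _ _ _ _ _ => Subsingleton.elim _ _)
  rw [cd_schur P hK (fun _ : Fin 1 => a i) (fun _ => b j) (fun _ => ha i) (fun _ => hb j),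
    Matrix.det_fin_one] at h1
  have hs : (Finset.univ \ (Finset.univ.image (fun _ : Fin 1 => a i) ∪
        Finset.univ.image (fun _ : Fin 1 => b j))) = Finset.univ \ {a i, b j} := by
    ext; simp [eq_comm]
  rw [hs] at h1
  exact h1
end

section
/- Let G be a finite simple bipartite graph with bipartition classes U and V, and let a_1,…,a_n, b_n,…,b_1 be distinct vertices with A = {a_1,…,a_n} ⊆ U and B = {b_1,…,b_n} ⊆ V, such that G is noncrossing with respect to the cyclic sequence (a_1,…,a_n, b_n,…,b_1). Suppose L = G−A−B has exactly one perfect matching M_L. Then every family of pairwise vertex-disjoint M_L-alternating paths in G whose set of path-endpoints is exactly A ∪ B (each vertex of A ∪ B being an endpoint of exactly one path) consists of n paths in which, for each i = 1,…,n, one path joins a_i to b_i. -/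
theorem alt_parity_aux {α : Type*} (G : SimpleGraph α) (U : Set α) (M : Finset (Sym2 α))
    (hb : ∀ x y, G.Adj x y → (x ∈ U ↔ y ∉ U)) {x y : α} (P : G.Walk x y) :
    P.edges.IsChain (fun e f => e ∈ M ↔ f ∉ M) →
    (∀ e ∈ P.edges.getLast?, e ∉ M) →
    ∀ e ∈ P.edges.head?, (e ∈ M ↔ (x ∈ U ↔ y ∈ U)) := by
  induction P with
  | nil => simp
  | cons h p ih =>
    intro hc hl e he
    have h1 := hb _ _ h
    cases p with
    | nil =>
      simp at he hl
      subst he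
      simp [hl]
      tauto
    | cons h' q =>
      simp only [SimpleGraph.Walk.edges_cons, List.head?_cons, Option.mem_def,
        Option.some.injEq] at he
      subst he
      simp only [SimpleGraph.Walk.edges_cons, List.isChain_cons_cons] at hc
      have h2 := ih (by simpa using hc.2) (by simpa using hl) _ (by simp; rfl)
      tauto

/-- In the bipartite determinant setting, every family of pairwise
vertex-disjoint `ML`-alternating paths with endpoint set exactly `A ∪ B` consists of `n`
paths, one joining `a i` to `b i` for each `i`. -/
theorem nest_paths_join_ai_bi {α : Type*} [Fintype α] [DecidableEq α]
    (G : SimpleGraph α) (U V : Finset α) (hbip : IsBipartition G U V) (n : ℕ)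
    (a b : Fin n → α)
    (hdist : (List.ofFn a ++ (List.ofFn b).reverse).Nodup)
    (hnc : NoncrossingList G (List.ofFn a ++ (List.ofFn b).reverse))
    (A B : Finset α) (hA : A = Finset.univ.image a) (hB : B = Finset.univ.image b)
    (hAU : A ⊆ U) (hBV : B ⊆ V)
    (ML : Finset (Sym2 α))
    (hML : IsPMOn G (Finset.univ \ (A ∪ B)) ML)
    (huniq : ∀ m, IsPMOn G (Finset.univ \ (A ∪ B)) m → m = ML) :
    ∀ F : Finset (Σ x : α, Σ y : α, G.Walk x y),
      IsAltPathNest G (Finset.univ \ (A ∪ B)) ML (A ∪ B) F →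
      F.card = n ∧ ∀ i : Fin n, ∃ p ∈ F,
        (p.1 = a i ∧ p.2.1 = b i) ∨ (p.1 = b i ∧ p.2.1 = a i) := by
  intro F ⟨hF1, hF2, hF3, hF4⟩
  have hbU : ∀ x y, G.Adj x y → (x ∈ (U : Set α) ↔ y ∉ (U : Set α)) := by
    intro x y h
    have h1 := hbip.2.2 h
    have h2 := Finset.disjoint_left.1 hbip.1
    have hx := @h2 x
    have hy := @h2 y
    simp only [Finset.mem_coe]
    tauto
  have hBU : ∀ x ∈ B, x ∉ U := fun x hx hu => Finset.disjoint_left.1 hbip.1 hu (hBV hx)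
  have hpar : ∀ p ∈ F, ¬ (p.1 ∈ U ↔ p.2.1 ∈ U) := by
    intro p hp
    obtain ⟨h1, h2, h3, h4, h5⟩ := hF1 p hp
    obtain ⟨hx, hy⟩ := hF3 p hp
    obtain ⟨e, l, hel⟩ := List.exists_cons_of_ne_nil h2
    have he : e ∈ p.2.2.edges.head? := by rw [hel]; simp
    have := alt_parity_aux G (U : Set α) ML hbU p.2.2 h3 (fun e he hm => by
      have := (h5 e he).1 hm
      simp only [Finset.mem_sdiff] at this
      exact this.2 hy) e he
    intro hc
    have h6 := (h4 e he).1 (this.2 (by simpa using hc))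
    simp only [Finset.mem_sdiff] at h6
    exact h6.2 hx
  have haA : ∀ i, a i ∈ A := fun i => by simp [hA]
  have hbB : ∀ i, b i ∈ B := fun i => by simp [hB]
  have hainj : Function.Injective a := List.nodup_ofFn.1 (List.nodup_append.1 hdist).1
  have key : ∀ i, ∃ p ∈ F, ∃ j, (p.1 = a i ∧ p.2.1 = b j) ∨ (p.1 = b j ∧ p.2.1 = a i) := by
    intro i
    obtain ⟨p, ⟨hp, hi⟩, -⟩ := hF4 (a i) (Finset.mem_union_left _ (haA i))
    refine ⟨p, hp, ?_⟩
    have h1 := hpar p hp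
    obtain ⟨hx, hy⟩ := hF3 p hp
    have hu := hAU (haA i)
    have hb' : ∀ x, x ∈ A ∪ B → x ∉ U → ∃ j, x = b j := by
      intro x hx hxu
      rcases Finset.mem_union.1 hx with h | h
      · exact absurd (hAU h) hxu
      · rw [hB] at h
        obtain ⟨j, -, hj⟩ := Finset.mem_image.1 h
        exact ⟨j, hj.symm⟩
    rcases hi with hi | hi
    · obtain ⟨j, hj⟩ := hb' _ hy (by rw [hi] at hu; tauto)
      exact ⟨j, Or.inl ⟨hi.symm, hj⟩⟩
    · obtain ⟨j, hj⟩ := hb' _ hx (by rw [hi] at hu; tauto)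
      exact ⟨j, Or.inr ⟨hj, hi.symm⟩⟩
  choose p hpF σ hσ using key
  have hpa : ∀ i, a i = (p i).1 ∨ a i = (p i).2.1 := fun i => by
    rcases hσ i with h | h
    · exact Or.inl h.1.symm
    · exact Or.inr h.2.symm
  have hpb : ∀ i, b (σ i) = (p i).1 ∨ b (σ i) = (p i).2.1 := fun i => by
    rcases hσ i with h | h
    · exact Or.inr h.2.symm
    · exact Or.inl h.1.symm
  have hab : ∀ i j, a i ≠ b j := fun i j h => hBU _ (hbB j) (h ▸ hAU (haA i))
  have hpinj : Function.Injective p := by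
    intro i j h
    apply hainj
    have h1 := hσ i
    have h2 := hσ j
    rw [h] at h1
    rcases h1 with h1 | h1 <;> rcases h2 with h2 | h2
    · exact h1.1.symm.trans h2.1
    · exact absurd (h1.1.symm.trans h2.1) (hab _ _)
    · exact absurd (h2.1.symm.trans h1.1) (hab _ _)
    · exact h1.2.symm.trans h2.2
  have hσinj : Function.Injective σ := by
    intro i j h
    apply hpinj
    have h2 := hpb j
    rw [← h] at h2
    exact (hF4 (b (σ i)) (Finset.mem_union_right _ (hbB _))).unique ⟨hpF i, hpb i⟩ ⟨hpF j, h2⟩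
  have hwalk : ∀ i, ∃ w : G.Walk (a i) (b (σ i)), w.IsPath ∧
      ∀ u, u ∈ w.support ↔ u ∈ (p i).2.2.support := by
    intro i
    have h1 := (hF1 _ (hpF i)).1
    have h2 := hσ i
    generalize p i = q at h1 h2
    obtain ⟨x, y, w⟩ := q
    rcases h2 with ⟨hx, hy⟩ | ⟨hx, hy⟩
    · dsimp only at hx hy h1 w
      subst hx; subst hy
      exact ⟨w, h1, fun u => Iff.rfl⟩
    · dsimp only at hx hy h1 w
      subst hx; subst hy
      exact ⟨w.reverse, h1.reverse, fun u => by simp⟩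
  choose w hw hws using hwalk
  have hint : ∀ i, ∀ u ∈ (w i).support, u ≠ a i → u ≠ b (σ i) → u ∉ A ∪ B := by
    intro i u hu h1 h2 hmem
    obtain ⟨q, ⟨hq, hqu⟩, -⟩ := hF4 u hmem
    have hus : u ∈ q.2.2.support := by
      rcases hqu with h | h <;> rw [h]
      · exact q.2.2.start_mem_support
      · exact q.2.2.end_mem_support
    rw [hws] at hu
    by_cases hqp : q = p i
    · rw [hqp] at hqu
      rcases hσ i with h | h <;> rcases hqu with h3 | h3
      · exact h1 (h3.trans h.1)
      · exact h2 (h3.trans h.2)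
      · exact h2 (h3.trans h.1)
      · exact h1 (h3.trans h.2)
    · exact hF2 q hq _ (hpF i) hqp u hus hu
  have hL : ∀ x, x ∈ (List.ofFn a ++ (List.ofFn b).reverse) → x ∈ A ∪ B := by
    intro x hx
    simp only [List.mem_append, List.mem_reverse, List.mem_ofFn, Set.mem_range] at hx
    rcases hx with ⟨i, rfl⟩ | ⟨i, rfl⟩
    · exact Finset.mem_union_left _ (haA i)
    · exact Finset.mem_union_right _ (hbB i)
  have hmono : StrictMono σ := by
    intro i j hij
    rcases lt_trichotomy (σ i) (σ j) with h | h | h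
    · exact h
    · exact absurd (hσinj h) hij.ne
    · exfalso
      have hlen : (List.ofFn a ++ (List.ofFn b).reverse).length = n + n := by simp
      have hga : ∀ (i : Fin n) (hi : i.1 < (List.ofFn a ++ (List.ofFn b).reverse).length),
          (List.ofFn a ++ (List.ofFn b).reverse).get ⟨i.1, hi⟩ = a i := by
        intro i hi
        rw [List.get_eq_getElem, List.getElem_append_left (by simp)]
        simp
      have hgb : ∀ (i : Fin n)
          (hi : n + (n - 1 - i.1) < (List.ofFn a ++ (List.ofFn b).reverse).length),
          (List.ofFn a ++ (List.ofFn b).reverse).get ⟨n + (n - 1 - i.1), hi⟩ = b i := by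
        intro i hi
        rw [List.get_eq_getElem, List.getElem_append_right (by simp)]
        simp only [List.getElem_reverse, List.getElem_ofFn, List.length_ofFn]
        congr 1
        apply Fin.ext
        simp only
        omega
      have hi := i.2
      have hj := j.2
      have hsi := (σ i).2
      have hsj := (σ j).2
      have hij' : i.1 < j.1 := hij
      have h' : (σ j).1 < (σ i).1 := h
      refine hnc ⟨i.1, by omega⟩ ⟨j.1, by omega⟩ ⟨n + (n - 1 - (σ i).1), by omega⟩
        ⟨n + (n - 1 - (σ j).1), by omega⟩ hij ?_ ?_ ?_
      · simp only [Fin.mk_lt_mk]; omega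
      · simp only [Fin.mk_lt_mk]; omega
      rw [hga, hga, hgb, hgb]
      refine ⟨w i, w j, hw i, hw j, ?_, ?_, ?_⟩
      · intro u hu hu'
        rw [hws] at hu hu'
        exact hF2 _ (hpF i) _ (hpF j) (fun h => hij.ne (hpinj h)) u hu hu'
      · exact fun u hu h1 h2 h3 => hint i u hu h1 h2 (hL u h3)
      · exact fun u hu h1 h2 h3 => hint j u hu h1 h2 (hL u h3)
  have hid : σ = id := by
    apply (StrictMono.range_inj hmono strictMono_id).1
    rw [(Finite.surjective_of_injective hσinj).range_eq]
    simp
  refine ⟨?_, fun i => ⟨p i, hpF i, by simpa [hid] using hσ i⟩⟩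
  have himg : F = Finset.univ.map ⟨p, hpinj⟩ := by
    ext q
    simp only [Finset.mem_map, Finset.mem_univ, true_and, Function.Embedding.coeFn_mk]
    constructor
    · intro hq
      have hmem := (hF3 q hq).1
      obtain ⟨i, hi⟩ : ∃ i, q.1 = (p i).1 ∨ q.1 = (p i).2.1 := by
        rcases Finset.mem_union.1 hmem with h | h
        · rw [hA] at h
          obtain ⟨i, -, hi⟩ := Finset.mem_image.1 h
          exact ⟨i, hi ▸ hpa i⟩
        · rw [hB] at h
          obtain ⟨i, -, hi⟩ := Finset.mem_image.1 h
          have := hpb i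
          rw [hid] at this
          exact ⟨i, hi ▸ this⟩
      exact ⟨i, (hF4 _ hmem).unique ⟨hpF i, hi⟩ ⟨hq, Or.inl rfl⟩⟩
    · rintro ⟨i, rfl⟩
      exact hpF i
  rw [himg]
  simp
end
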